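/- arXiv:1604.01256 — 2 statements merged into one kernel-verified Lean document; each statement's English description precedes it below -/
import Mathlib

section
/- Let E be an elliptic curve over a finite field F_q and let α be a root in C of the characteristic polynomial T² − t·T + q of the Frobenius endomorphism, where t = q + 1 − #E(F_q). Then α/√q is a root of unity if and only if E is supersingular (i.e., p | t, where p = char(F_q)). -/
/-!
An endomorphism `φ` of `E` is determined by the image of the generic point, a point of `E` over the
function field; its degree is the degree of the rational function `x ∘ φ`. The formulas for the
symmetric functions of `x(P ± Q)` show that the degree satisfies the parallelogram law, so it is a
positive definite quadratic form on the group of endomorphisms. With `F` the Frobenius, the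
denominator of `x ∘ (F - 1)` has as many zeros as `E` has affine rational points, whence
`deg (F - 1) = #E`; so `t` is the pairing of `F` with `1`, and `F² = tF - q` because the degree of
the difference vanishes.

If `p ∣ t`, then `F² = p ∘ Q` for some `Q`. As `x ∘ F²` is a power of `x`, the function `x ∘ [p]`
must be of the form `c x ^ p² + d`, hence so is `x ∘ [q]`, and a suitable iterate of it is
`x ↦ x ^ qᵐ`. Thus `F²ⁿ = [qⁿ]` for some `n ≠ 0`, and taking degrees `(α²ⁿ - qⁿ)(ᾱ²ⁿ - qⁿ) = 0`.
Conversely, if `α²ⁿ = qⁿ`, then `2qⁿ = α²ⁿ + ᾱ²ⁿ ≡ t²ⁿ` modulo `p`.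
-/

namespace SupersingularFrobenius

open WeierstrassCurve WeierstrassCurve.Affine Polynomial

/-! ### Symmetric functions of the `x`-coordinates of `P + Q` and `P - Q` -/

section Unimodular

variable {R : Type*} [CommRing R]

theorem span_range_eq_top_iff {ι : Type*} {v : ι → R} :
    Ideal.span (Set.range v) = ⊤ ↔
      ∀ M : Ideal R, M.IsMaximal → Ideal.Quotient.mk M ∘ v ≠ 0 := by
  have vanishes_iff (M : Ideal R) :
      Ideal.Quotient.mk M ∘ v = 0 ↔ Ideal.span (Set.range v) ≤ M := by
    simp [funext_iff, Ideal.Quotient.eq_zero_iff_mem, Ideal.span_le, Set.range_subset_iff]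
  simp only [ne_eq, vanishes_iff]
  refine ⟨fun h M hM hle ↦ hM.ne_top (top_le_iff.1 (h ▸ hle)), fun h ↦ ?_⟩
  by_contra hv
  obtain ⟨M, hM, hle⟩ := Ideal.exists_le_maximal _ hv
  exact h M hM hle

theorem span_range_pair_eq_top_iff {a b : R} :
    Ideal.span (Set.range ![a, b]) = ⊤ ↔ IsCoprime a b := by
  rw [Matrix.range_cons, Matrix.range_cons, Matrix.range_empty, Set.union_empty,
    Set.singleton_union, Ideal.span_insert, ← Ideal.isCoprime_iff_sup_eq,
    Ideal.isCoprime_span_singleton_iff]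

theorem exists_eq_smul_of_mul_eq_mul {ι : Type*} {v w : ι → R}
    (hw : Ideal.span (Set.range w) = ⊤) (h : ∀ i j, v i * w j = v j * w i) :
    ∃ e : R, v = e • w := by
  have h1 : (1 : R) ∈ Ideal.span (Set.range w) := hw ▸ Submodule.mem_top
  obtain ⟨c, hc⟩ := Finsupp.mem_ideal_span_range_iff_exists_finsupp.1 h1
  refine ⟨c.sum fun j r ↦ r * v j, funext fun i ↦ ?_⟩
  calc v i = v i * c.sum (fun j r ↦ r * w j) := by rw [hc, mul_one]
    _ = (c.sum fun j r ↦ r * v j) * w i := by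
      simp only [Finsupp.sum, Finset.mul_sum, Finset.sum_mul]
      exact Finset.sum_congr rfl fun j _ ↦ by linear_combination c j * h i j

theorem exists_isUnit_eq_smul_of_map_eq_smul {ι K : Type*} [IsDomain R] [CommRing K] {f : R →+* K}
    (hf : Function.Injective f) {v w : ι → R} {z : ι → K} {k l : K}
    (hv : Ideal.span (Set.range v) = ⊤) (hw : Ideal.span (Set.range w) = ⊤)
    (hvz : f ∘ v = k • z) (hwz : f ∘ w = l • z) :
    ∃ e : R, IsUnit e ∧ v = e • w := by
  have proportional (i j : ι) : v i * w j = v j * w i := by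
    have hv' (i) : f (v i) = k * z i := congr_fun hvz i
    have hw' (i) : f (w i) = l * z i := congr_fun hwz i
    apply hf
    simp only [map_mul, hv', hw']
    ring
  obtain ⟨e, he⟩ := exists_eq_smul_of_mul_eq_mul hw proportional
  obtain ⟨d, hd⟩ : ∃ d : R, w = d • v :=
    exists_eq_smul_of_mul_eq_mul hv fun i j ↦ by linear_combination -proportional i j
  obtain ⟨i, hi⟩ : ∃ i, v i ≠ 0 := by
    by_contra! h0
    rw [show v = 0 from funext h0, Ideal.span_eq_bot.2 (by simp)] at hv
    exact bot_ne_top hv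
  refine ⟨e, .of_mul_eq_one d (mul_right_cancel₀ hi ?_), he⟩
  calc e * d * v i = e * (d • v) i := by simp [mul_assoc]
    _ = (e • w) i := by rw [← hd]; rfl
    _ = 1 * v i := by rw [← he, one_mul]

end Unimodular

section SymProd

variable {R S : Type*} [CommRing R] [CommRing S]

/-- The coefficients of the product of the linear forms with coefficients `u` and `v`; Mathlib's
`Point.sym2x` is the special case of the vectors `Point.xRep`. -/
def symProd (u v : Fin 2 → R) : Fin 3 → R :=
  ![u 0 * v 0, u 0 * v 1 + u 1 * v 0, u 1 * v 1]

theorem symProd_smul_smul (k l : R) (u v : Fin 2 → R) :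
    symProd (k • u) (l • v) = (k * l) • symProd u v := by
  simp only [symProd, Pi.smul_apply, smul_eq_mul, Matrix.smul_vec3]
  exact Matrix.vec3_eq (by ring) (by ring) (by ring)

theorem map_comp_symProd (f : R →+* S) (u v : Fin 2 → R) :
    f ∘ symProd u v = symProd (f ∘ u) (f ∘ v) := by
  ext i
  fin_cases i <;> simp [symProd]

theorem symProd_ne_zero [IsDomain R] {u v : Fin 2 → R} (hu : u ≠ 0) (hv : v ≠ 0) :
    symProd u v ≠ 0 := by
  intro h
  have h₀ : u 0 * v 0 = 0 := congr_fun h 0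
  have h₁ : u 0 * v 1 + u 1 * v 0 = 0 := congr_fun h 1
  have h₂ : u 1 * v 1 = 0 := congr_fun h 2
  simp only [ne_eq, funext_iff, Fin.forall_fin_two, Pi.zero_apply] at hu hv
  rcases mul_eq_zero.1 h₀ with h₀ | h₀ <;> rcases mul_eq_zero.1 h₂ with h₂ | h₂ <;> simp_all

theorem span_range_symProd_eq_top {u v : Fin 2 → R} (hu : Ideal.span (Set.range u) = ⊤)
    (hv : Ideal.span (Set.range v) = ⊤) : Ideal.span (Set.range (symProd u v)) = ⊤ := by
  rw [span_range_eq_top_iff] at hu hv ⊢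
  intro M hM
  rw [map_comp_symProd]
  exact symProd_ne_zero (hu M hM) (hv M hM)

end SymProd

section AddSub

variable {R S : Type*} [CommRing R] [CommRing S] (W : WeierstrassCurve R)

/-- The map on coordinate vectors given by Mathlib's polynomials `addSubMap`, which sends the
symmetric functions of `x(P)`, `x(Q)` to those of `x(P + Q)`, `x(P - Q)`. -/
noncomputable def addSub (v : Fin 3 → R) : Fin 3 → R :=
  fun i ↦ (addSubMap W i).eval v

theorem addSub_eq (v : Fin 3 → R) :
    addSub W v =
      ![v 0 ^ 2 - W.b₄ * v 0 * v 2 - W.b₆ * v 1 * v 2 - W.b₈ * v 2 ^ 2,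
        2 * v 1 * v 0 + W.b₂ * v 0 * v 2 + W.b₄ * v 1 * v 2 + W.b₆ * v 2 ^ 2,
        v 1 ^ 2 - 4 * v 0 * v 2] := by
  ext i
  fin_cases i <;> simp [addSub, addSubMap]

theorem addSub_smul (k : R) (v : Fin 3 → R) : addSub W (k • v) = k ^ 2 • addSub W v := by
  simp only [addSub_eq, Pi.smul_apply, smul_eq_mul, Matrix.smul_vec3]
  exact Matrix.vec3_eq (by ring) (by ring) (by ring)

theorem map_comp_addSub (f : R →+* S) (v : Fin 3 → R) :
    f ∘ addSub W v = addSub (W.map f) (f ∘ v) := by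
  ext i
  fin_cases i <;> simp [addSub_eq, map_ofNat]

theorem span_range_addSub_eq_top [W.IsElliptic] {v : Fin 3 → R}
    (hv : Ideal.span (Set.range v) = ⊤) : Ideal.span (Set.range (addSub W v)) = ⊤ := by
  rw [span_range_eq_top_iff] at hv ⊢
  intro M hM
  rw [map_comp_addSub]
  exact addSubMap_ne_zero _ (hv M hM)

end AddSub

section AddSubPoint

variable {K : Type*} [Field K] [DecidableEq K] {W : WeierstrassCurve.Affine K}

theorem exists_addSub_sym2x_self (P : W.Point) :
    ∃ c : K, addSub W (P.sym2x P) = c • (P + P).sym2x 0 := by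
  rcases P with _ | ⟨x, y, h⟩
  · refine ⟨1, ?_⟩
    rw [← Point.zero_def, add_zero, Point.sym2x_zero_zero, addSub_eq]
    simp
  have eqn := (W.equation_iff _ _).1 h.1
  have sub_negY : y - W.negY x y = 2 * y + W.a₁ * x + W.a₃ := by rw [negY]; ring
  have sq_sub_negY : (y - W.negY x y) ^ 2 =
      4 * x ^ 3 + W.b₂ * x ^ 2 + 2 * W.b₄ * x + W.b₆ := by
    rw [sub_negY, b₂, b₄, b₆]
    linear_combination 4 * eqn
  simp only [Point.sym2x_some_some, addSub_eq, Matrix.cons_val]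
  by_cases hy : y = W.negY x y
  · rw [Point.add_self_of_Y_eq hy, Point.sym2x_zero_zero]
    rw [sub_eq_zero.2 hy] at sq_sub_negY
    refine ⟨x ^ 4 - W.b₄ * x ^ 2 - 2 * W.b₆ * x - W.b₈,
      (Matrix.vec3_eq ?_ ?_ ?_).trans (Matrix.smul_vec3 ..).symm⟩ <;> rw [smul_eq_mul]
    · ring
    · linear_combination -sq_sub_negY
    · ring
  · rw [Point.add_self_of_Y_ne hy, Point.sym2x_some_zero]
    refine ⟨(y - W.negY x y) ^ 2,
      (Matrix.vec3_eq ?_ ?_ ?_).trans (Matrix.smul_vec3 ..).symm⟩ <;> rw [smul_eq_mul]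
    · have hy' : y - W.negY x y ≠ 0 := sub_ne_zero.2 hy
      rw [addX, slope_of_Y_ne rfl hy, b₄, b₆, b₈]
      field_simp
      rw [sub_negY]
      linear_combination (W.a₁ ^ 2 + 4 * (W.a₂ + 2 * x)) * eqn
    · linear_combination -sq_sub_negY
    · ring

theorem exists_addSub_sym2x_some_some {x₁ x₂ y₁ y₂ : K} (h₁ : W.Nonsingular x₁ y₁)
    (h₂ : W.Nonsingular x₂ y₂) (hx : x₁ ≠ x₂) :
    ∃ c : K, addSub W ((Point.some x₁ y₁ h₁).sym2x (.some x₂ y₂ h₂)) =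
      c • (Point.some x₁ y₁ h₁ + .some x₂ y₂ h₂).sym2x (.some x₁ y₁ h₁ - .some x₂ y₂ h₂) := by
  have eqn₁ := (W.equation_iff _ _).1 h₁.1
  have eqn₂ := (W.equation_iff _ _).1 h₂.1
  have hx' : x₁ - x₂ ≠ 0 := sub_ne_zero.2 hx
  simp only [sub_eq_add_neg, Point.neg_some, Point.add_of_X_ne hx, Point.sym2x_some_some,
    addSub_eq, Matrix.cons_val]
  refine ⟨(x₁ - x₂) ^ 2, (Matrix.vec3_eq ?_ ?_ ?_).trans (Matrix.smul_vec3 ..).symm⟩ <;>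
    simp only [smul_eq_mul, addX, slope_of_X_ne hx, negY, b₂, b₄, b₆, b₈]
  · field_simp
    linear_combination (-(((y₁ - y₂) * (y₁ + y₂ + W.a₁ * x₂ + W.a₃) + (x₁ - x₂) *
      (x₁ ^ 2 + x₁ * x₂ + x₂ ^ 2 + W.a₂ * (x₁ + x₂) + W.a₄ - W.a₁ * y₁)) + W.a₁ * (x₁ - x₂) *
      (2 * y₁ + W.a₁ * x₂ + W.a₃) + W.a₁ ^ 2 * (x₁ - x₂) ^ 2)) * (eqn₁ - eqn₂) -
      (x₁ - x₂) ^ 2 * ((-W.a₁ ^ 2 - 2 * (W.a₂ + x₁ + x₂)) * eqn₁ - 2 * (W.a₂ + x₁ + x₂) * eqn₂)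
  · field_simp
    linear_combination -2 * eqn₁ - 2 * eqn₂
  · ring

theorem exists_addSub_sym2x_eq_smul (P Q : W.Point) :
    ∃ c : K, addSub W (P.sym2x Q) = c • (P + Q).sym2x (P - Q) := by
  by_cases hPQ : P = Q
  · rw [← hPQ, sub_self]
    exact exists_addSub_sym2x_self P
  by_cases hPQ' : P = -Q
  · rw [hPQ', neg_add_cancel, Point.sym2x_neg_left, Point.sym2x_comm, sub_eq_add_neg, ← neg_add,
      Point.sym2x_neg_right, Point.sym2x_comm 0]
    exact exists_addSub_sym2x_self Q
  rcases P with _ | ⟨x₁, y₁, h₁⟩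
  · rcases Q with _ | ⟨x₂, y₂, h₂⟩
    · exact absurd rfl hPQ
    · refine ⟨1, ?_⟩
      rw [← Point.zero_def, zero_add, zero_sub, Point.sym2x_neg_right, Point.sym2x_zero_some,
        Point.sym2x_some_some, addSub_eq, one_smul]
      refine Matrix.vec3_eq ?_ ?_ ?_ <;> simp only [Matrix.cons_val] <;> ring
  rcases Q with _ | ⟨x₂, y₂, h₂⟩
  · refine ⟨1, ?_⟩
    rw [← Point.zero_def, add_zero, sub_zero, Point.sym2x_some_zero, Point.sym2x_some_some,
      addSub_eq, one_smul]
    refine Matrix.vec3_eq ?_ ?_ ?_ <;> simp only [Matrix.cons_val] <;> ring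
  · exact exists_addSub_sym2x_some_some h₁ h₂ fun hx ↦
      (Point.X_eq_iff.1 hx).elim hPQ hPQ'

end AddSubPoint

/-! ### Heights of points over a function field -/

section XCoord

variable {F K : Type*} [Field F] [Field K] [Algebra F K] [Algebra F[X] K]
  {W : WeierstrassCurve.Affine F} {P Q : (W⁄K).Point} {a b c d a₁ b₁ a₂ b₂ : F[X]}

/-- The rational function `a / b`, in lowest terms, is the `x`-coordinate of `P`; the point at
infinity has `b = 0`. -/
structure HasXCoord (P : (W⁄K).Point) (a b : F[X]) : Prop where
  isCoprime : IsCoprime a b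
  mul_xRep_eq : algebraMap F[X] K a * P.xRep 1 = algebraMap F[X] K b * P.xRep 0

theorem HasXCoord.exists_map_eq_smul_xRep (h : HasXCoord P a b) :
    ∃ k : K, algebraMap F[X] K ∘ ![a, b] = k • P.xRep := by
  have hab := h.mul_xRep_eq
  rcases P with _ | ⟨x, y, hP⟩
  · refine ⟨algebraMap F[X] K a, ?_⟩
    rw [← Point.zero_def, Point.xRep_zero] at hab ⊢
    ext i
    fin_cases i
    · simp
    · simpa using hab.symm
  · refine ⟨algebraMap F[X] K b, ?_⟩
    rw [Point.xRep_some] at hab ⊢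
    ext i
    fin_cases i
    · simpa using hab
    · simp

theorem HasXCoord.span_eq_top (h : HasXCoord P a b) : Ideal.span (Set.range ![a, b]) = ⊤ :=
  span_range_pair_eq_top_iff.2 h.isCoprime

theorem hasXCoord_some_iff {x y : K} {hxy : (W⁄K).Nonsingular x y} :
    HasXCoord (Point.some x y hxy) a b ↔
      IsCoprime a b ∧ algebraMap F[X] K a = algebraMap F[X] K b * x :=
  ⟨fun h ↦ ⟨h.1, by simpa using h.2⟩, fun h ↦ ⟨h.1, by simpa using h.2⟩⟩

theorem HasXCoord.neg (h : HasXCoord P a b) : HasXCoord (-P) a b :=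
  ⟨h.1, by rw [Point.xRep_neg, h.2]⟩

theorem hasXCoord_zero : HasXCoord (0 : (W⁄K).Point) 1 0 :=
  ⟨isCoprime_one_left, by simp⟩

variable [FaithfulSMul F[X] K]

theorem HasXCoord.exists_eq_C_mul (h : HasXCoord P a b) (h' : HasXCoord P a₁ b₁) :
    ∃ e : F, e ≠ 0 ∧ a = C e * a₁ ∧ b = C e * b₁ := by
  obtain ⟨k, hk⟩ := h.exists_map_eq_smul_xRep
  obtain ⟨l, hl⟩ := h'.exists_map_eq_smul_xRep
  obtain ⟨e, he, hab⟩ := exists_isUnit_eq_smul_of_map_eq_smul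
    (FaithfulSMul.algebraMap_injective F[X] K) h.span_eq_top h'.span_eq_top hk hl
  obtain ⟨e, he', rfl⟩ := Polynomial.isUnit_iff.1 he
  exact ⟨e, he'.ne_zero, congr_fun hab 0, congr_fun hab 1⟩

theorem HasXCoord.eq_zero_iff (h : HasXCoord P a b) : P = 0 ↔ b = 0 := by
  refine ⟨?_, ?_⟩
  · rintro rfl
    obtain ⟨e, -, -, hb⟩ := h.exists_eq_C_mul hasXCoord_zero
    rw [hb, mul_zero]
  · rintro rfl
    rcases P with _ | ⟨x, y, hxy⟩
    · rfl
    have ha : algebraMap F[X] K a = 0 := by simpa using (hasXCoord_some_iff.1 h).2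
    rw [map_eq_zero_iff _ (FaithfulSMul.algebraMap_injective F[X] K)] at ha
    exact absurd h.isCoprime (by rw [ha]; exact not_isCoprime_zero_zero)

theorem HasXCoord.eq_or_eq_neg (hP : HasXCoord P a b) (hQ : HasXCoord Q a b) :
    P = Q ∨ P = -Q := by
  classical
  rcases P with _ | ⟨x₁, y₁, h₁⟩
  · exact .inl (hQ.eq_zero_iff.2 (hP.eq_zero_iff.1 rfl)).symm
  rcases Q with _ | ⟨x₂, y₂, h₂⟩
  · exact .inl (hP.eq_zero_iff.2 (hQ.eq_zero_iff.1 rfl))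
  have hb : algebraMap F[X] K b ≠ 0 := by
    rw [ne_eq, map_eq_zero_iff _ (FaithfulSMul.algebraMap_injective F[X] K), ← hP.eq_zero_iff]
    exact Point.some_ne_zero h₁
  exact Point.X_eq_iff.1 <| mul_left_cancel₀ hb <|
    (hasXCoord_some_iff.1 hP).2.symm.trans (hasXCoord_some_iff.1 hQ).2

theorem HasXCoord.exists_addSub_eq_smul [DecidableEq K] [IsScalarTower F F[X] K] [W.IsElliptic]
    (hP : HasXCoord P a b) (hQ : HasXCoord Q c d) (h₁ : HasXCoord (P + Q) a₁ b₁)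
    (h₂ : HasXCoord (P - Q) a₂ b₂) :
    ∃ e : F, e ≠ 0 ∧ addSub (W.map C) (symProd ![a, b] ![c, d]) =
      C e • symProd ![a₁, b₁] ![a₂, b₂] := by
  have map_symProd {P Q : (W⁄K).Point} {a b c d : F[X]} (hP : HasXCoord P a b)
      (hQ : HasXCoord Q c d) :
      ∃ k : K, algebraMap F[X] K ∘ symProd ![a, b] ![c, d] = k • P.sym2x Q := by
    obtain ⟨k, hk⟩ := hP.exists_map_eq_smul_xRep
    obtain ⟨l, hl⟩ := hQ.exists_map_eq_smul_xRep
    exact ⟨k * l, by rw [map_comp_symProd, hk, hl, symProd_smul_smul]; rfl⟩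
  obtain ⟨k, hk⟩ := map_symProd hP hQ
  obtain ⟨l, hl⟩ := map_symProd h₁ h₂
  obtain ⟨m, hm⟩ := exists_addSub_sym2x_eq_smul P Q
  have map_curve : WeierstrassCurve.map (W.map C) (algebraMap F[X] K) = W⁄K :=
    (WeierstrassCurve.map_map W _ _).trans <|
      congrArg (WeierstrassCurve.map W) (IsScalarTower.algebraMap_eq F F[X] K).symm
  have map_addSub : algebraMap F[X] K ∘ addSub (W.map C) (symProd ![a, b] ![c, d]) =
      (k ^ 2 * m) • (P + Q).sym2x (P - Q) := by
    rw [map_comp_addSub, map_curve, hk, addSub_smul, hm, mul_smul]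
  obtain ⟨e, he, h⟩ := exists_isUnit_eq_smul_of_map_eq_smul
    (FaithfulSMul.algebraMap_injective F[X] K)
    (span_range_addSub_eq_top _ (span_range_symProd_eq_top hP.span_eq_top hQ.span_eq_top))
    (span_range_symProd_eq_top h₁.span_eq_top h₂.span_eq_top) map_addSub hl
  obtain ⟨e, he', rfl⟩ := Polynomial.isUnit_iff.1 he
  exact ⟨e, he'.ne_zero, h⟩

end XCoord

section Degree

variable {F : Type*} [Field F]

theorem degree_mul_lt_of_lt_of_le {f g a b : F[X]} (hf : f.degree < a.degree)
    (hg : g.degree ≤ b.degree) (hb : b ≠ 0) : (f * g).degree < (a * b).degree := by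
  rw [degree_mul, degree_mul]
  exact (add_le_add_right hg _).trans_lt (WithBot.add_lt_add_right (degree_ne_bot.2 hb) hf)

theorem degree_mul_lt_of_le_of_lt {f g a b : F[X]} (hf : f.degree ≤ a.degree)
    (hg : g.degree < b.degree) (ha : a ≠ 0) : (f * g).degree < (a * b).degree := by
  rw [mul_comm f, mul_comm a]
  exact degree_mul_lt_of_lt_of_le hg hf ha

theorem degree_add_lt {f g a : F[X]} (hf : f.degree < a.degree) (hg : g.degree < a.degree) :
    (f + g).degree < a.degree :=
  (degree_add_le f g).trans_lt (max_lt hf hg)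

theorem degree_C_mul_lt {f a : F[X]} (r : F) (hf : f.degree < a.degree) :
    (C r * f).degree < a.degree := by
  rw [← smul_eq_C_mul]
  exact (degree_smul_le r f).trans_lt hf

theorem degree_symProd_lt {u v : Fin 2 → F[X]} (hu : (u 1).degree < (u 0).degree)
    (hv : (v 1).degree < (v 0).degree) :
    (symProd u v 1).degree < (symProd u v 0).degree ∧
      (symProd u v 2).degree < (symProd u v 0).degree := by
  have hu₀ : u 0 ≠ 0 := ne_zero_of_degree_gt hu
  have hv₀ : v 0 ≠ 0 := ne_zero_of_degree_gt hv
  exact ⟨degree_add_lt (degree_mul_lt_of_le_of_lt le_rfl hv hu₀)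
    (degree_mul_lt_of_lt_of_le hu le_rfl hv₀), degree_mul_lt_of_lt_of_le hu hv.le hv₀⟩

theorem degree_lt_of_degree_symProd_lt {u v : Fin 2 → F[X]}
    (h₁ : (symProd u v 1).degree < (symProd u v 0).degree)
    (h₂ : (symProd u v 2).degree < (symProd u v 0).degree) : (u 1).degree < (u 0).degree := by
  have h₀ : u 0 * v 0 ≠ 0 := ne_zero_of_degree_gt h₁
  change (u 0 * v 1 + u 1 * v 0).degree < (u 0 * v 0).degree at h₁
  change (u 1 * v 1).degree < (u 0 * v 0).degree at h₂
  by_contra! hu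
  have hv : (v 1).degree < (v 0).degree := by
    by_contra! hv
    rw [degree_mul, degree_mul] at h₂
    exact h₂.not_ge (add_le_add hu hv)
  have left_lt : (u 0 * v 1).degree < (u 0 * v 0).degree :=
    degree_mul_lt_of_le_of_lt le_rfl hv (left_ne_zero_of_mul h₀)
  have le_right : (u 0 * v 0).degree ≤ (u 1 * v 0).degree := by
    rw [degree_mul, degree_mul]
    exact add_le_add_left hu _
  rw [degree_add_eq_right_of_degree_lt (left_lt.trans_le le_right)] at h₁
  exact h₁.not_ge le_right

theorem degree_addSub (W : WeierstrassCurve F) {v : Fin 3 → F[X]}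
    (h₁ : (v 1).degree < (v 0).degree) (h₂ : (v 2).degree < (v 0).degree) :
    (addSub (W.map C) v 0).degree = (v 0 * v 0).degree ∧
      (addSub (W.map C) v 1).degree < (v 0 * v 0).degree ∧
      (addSub (W.map C) v 2).degree < (v 0 * v 0).degree := by
  set s := v 0
  set t := v 1
  set u := v 2
  have hs : s ≠ 0 := ne_zero_of_degree_gt h₁
  have hsu : (s * u).degree < (s * s).degree := degree_mul_lt_of_le_of_lt le_rfl h₂ hs
  have hst : (s * t).degree < (s * s).degree := degree_mul_lt_of_le_of_lt le_rfl h₁ hs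
  have htu : (t * u).degree < (s * s).degree := degree_mul_lt_of_le_of_lt h₁.le h₂ hs
  have htt : (t * t).degree < (s * s).degree := degree_mul_lt_of_le_of_lt h₁.le h₁ hs
  have huu : (u * u).degree < (s * s).degree := degree_mul_lt_of_le_of_lt h₂.le h₂ hs
  have addSub_zero : addSub (W.map C) v 0 =
      s * s + (C (-W.b₄) * (s * u) + (C (-W.b₆) * (t * u) + C (-W.b₈) * (u * u))) := by
    simp only [addSub_eq, map_b₂, map_b₄, map_b₆, map_b₈, Matrix.cons_val, map_neg, s, t, u]
    ring
  have addSub_one : addSub (W.map C) v 1 =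
      C 2 * (s * t) + (C W.b₂ * (s * u) + (C W.b₄ * (t * u) + C W.b₆ * (u * u))) := by
    simp only [addSub_eq, map_b₂, map_b₄, map_b₆, map_b₈, Matrix.cons_val, C_ofNat, s, t, u]
    ring
  have addSub_two : addSub (W.map C) v 2 = t * t + C (-4) * (s * u) := by
    simp only [addSub_eq, Matrix.cons_val, map_neg, C_ofNat, s, t, u]
    ring
  rw [addSub_zero, addSub_one, addSub_two]
  refine ⟨degree_add_eq_left_of_degree_lt ?_, ?_, degree_add_lt htt (degree_C_mul_lt _ hsu)⟩
  · exact degree_add_lt (degree_C_mul_lt _ hsu)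
      (degree_add_lt (degree_C_mul_lt _ htu) (degree_C_mul_lt _ huu))
  · exact degree_add_lt (degree_C_mul_lt _ hst) <| degree_add_lt (degree_C_mul_lt _ hsu)
      (degree_add_lt (degree_C_mul_lt _ htu) (degree_C_mul_lt _ huu))

end Degree

section Height

variable {F K : Type*} [Field F] [Field K] [Algebra F K] [Algebra F[X] K]
  {W : WeierstrassCurve.Affine F} {P Q : (W⁄K).Point} {a b c d a₁ b₁ a₂ b₂ : F[X]}

/-- The degree of the numerator of the `x`-coordinate of `P`, in lowest terms. On the points that
are endomorphisms of the curve, this is the degree of the endomorphism. -/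
noncomputable def height (P : (W⁄K).Point) : ℕ :=
  sInf {n | ∃ a b : F[X], HasXCoord P a b ∧ a.natDegree = n}

variable [FaithfulSMul F[X] K]

theorem HasXCoord.height_eq (h : HasXCoord P a b) : height P = a.natDegree := by
  have : {n | ∃ a b : F[X], HasXCoord P a b ∧ a.natDegree = n} = {a.natDegree} := by
    refine Set.eq_singleton_iff_unique_mem.2 ⟨⟨a, b, h, rfl⟩, ?_⟩
    rintro _ ⟨a', b', h', rfl⟩
    obtain ⟨e, he, rfl, -⟩ := h'.exists_eq_C_mul h
    exact natDegree_C_mul he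
  rw [height, this, csInf_singleton]

theorem HasXCoord.degree_lt_of_degree_lt (h : HasXCoord P a b) (h' : HasXCoord P a₁ b₁)
    (hab : b.degree < a.degree) : b₁.degree < a₁.degree := by
  obtain ⟨e, he, rfl, rfl⟩ := h'.exists_eq_C_mul h
  rwa [degree_C_mul he, degree_C_mul he]

theorem HasXCoord.degree_lt_and_height_add_height_sub [DecidableEq K] [IsScalarTower F F[X] K]
    [W.IsElliptic] (hP : HasXCoord P a b) (hQ : HasXCoord Q c d) (h₁ : HasXCoord (P + Q) a₁ b₁)
    (h₂ : HasXCoord (P - Q) a₂ b₂) (hab : b.degree < a.degree) (hcd : d.degree < c.degree) :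
    b₁.degree < a₁.degree ∧ height (P + Q) + height (P - Q) = 2 * height P + 2 * height Q := by
  obtain ⟨e, he, h⟩ := hP.exists_addSub_eq_smul hQ h₁ h₂
  have h_apply (i) : (addSub (W.map C) (symProd ![a, b] ![c, d]) i).degree =
      (symProd ![a₁, b₁] ![a₂, b₂] i).degree := by
    rw [h, Pi.smul_apply, smul_eq_mul, degree_C_mul he]
  obtain ⟨d₁, d₂⟩ := degree_symProd_lt (u := ![a, b]) (v := ![c, d]) hab hcd
  obtain ⟨e₀, e₁, e₂⟩ := degree_addSub W d₁ d₂
  rw [h_apply] at e₀ e₁ e₂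
  rw [← e₀] at e₁ e₂
  refine ⟨degree_lt_of_degree_symProd_lt e₁ e₂, ?_⟩
  have ha : a ≠ 0 := ne_zero_of_degree_gt hab
  have hc : c ≠ 0 := ne_zero_of_degree_gt hcd
  have h₀ : a₁ * a₂ ≠ 0 := ne_zero_of_degree_gt e₁
  have natDegree_eq : (a₁ * a₂).natDegree = (a * c * (a * c)).natDegree :=
    natDegree_eq_of_degree_eq e₀
  rw [natDegree_mul (left_ne_zero_of_mul h₀) (right_ne_zero_of_mul h₀),
    natDegree_mul (mul_ne_zero ha hc) (mul_ne_zero ha hc), natDegree_mul ha hc] at natDegree_eq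
  rw [hP.height_eq, hQ.height_eq, h₁.height_eq, h₂.height_eq, natDegree_eq]
  ring

end Height

/-! ### The generic point -/

section FunctionField

variable {F : Type*} [Field F]

theorem algHom_algebraMap_polynomial {A B : Type*} [CommRing A] [CommRing B] [Algebra F A]
    [Algebra F[X] A] [IsScalarTower F F[X] A] [Algebra F B] (f : A →ₐ[F] B) (a : F[X]) :
    f (algebraMap F[X] A a) = aeval (f (algebraMap F[X] A X)) a := by
  rw [aeval_algHom_apply, aeval_algebraMap_apply, aeval_X_left_apply]

theorem transcendental_algebraMap_X {A : Type*} [CommRing A] [Algebra F A] [Algebra F[X] A]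
    [IsScalarTower F F[X] A] [FaithfulSMul F[X] A] :
    Transcendental F (algebraMap F[X] A X) := by
  rw [transcendental_iff]
  intro p hp
  rwa [aeval_algebraMap_apply, aeval_X_left_apply, FaithfulSMul.algebraMap_eq_zero_iff] at hp

variable {L : Type*} [Field L] [Algebra F L] (W : WeierstrassCurve.Affine F)

variable {W} in
theorem exists_coordinateRing_algHom {x y : L} (h : (W⁄L).Equation x y) :
    ∃ f : W.CoordinateRing →ₐ[F] L, f (algebraMap F[X] W.CoordinateRing X) = x ∧
      f (CoordinateRing.mk W X) = y := by
  refine ⟨AdjoinRoot.liftAlgHom W.polynomial (aeval x) y ?_, ?_, ?_⟩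
  · have := ((W⁄L).equation_iff _ _).1 h
    simp only [baseChange_a₁, baseChange_a₂, baseChange_a₃, baseChange_a₄, baseChange_a₆] at this
    simp only [polynomial, eval₂_add, eval₂_sub, eval₂_mul, eval₂_pow, eval₂_X, eval₂_C,
      RingHom.coe_coe, map_add, map_mul, map_pow, aeval_C, aeval_X]
    linear_combination this
  · exact (AdjoinRoot.liftAlgHom_of W.polynomial (aeval x) y _ X).trans (aeval_X x)
  · exact AdjoinRoot.liftAlgHom_root ..

instance : Module.Finite F[X] W.CoordinateRing :=
  .of_basis (CoordinateRing.basis W)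

variable {W} in
theorem coordinateRing_algHom_injective (f : W.CoordinateRing →ₐ[F] L)
    (hf : Transcendental F (f (algebraMap F[X] W.CoordinateRing X))) : Function.Injective f := by
  change Function.Injective (f : W.CoordinateRing →+* L)
  rw [RingHom.injective_iff_ker_eq_bot]
  refine Ideal.eq_bot_of_comap_eq_bot (R := F[X]) (le_bot_iff.1 fun a ha ↦ ?_)
  rw [Ideal.mem_comap, RingHom.mem_ker] at ha
  exact transcendental_iff.1 hf a ((algHom_algebraMap_polynomial f a).symm.trans ha)

/-- The `y`-coordinate function; the `x`-coordinate function is `algebraMap F[X] _ X`. -/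
noncomputable def genericY : W.FunctionField :=
  algebraMap W.CoordinateRing W.FunctionField (CoordinateRing.mk W X)

theorem exists_mul_eq_add_mul_genericY (z : W.FunctionField) :
    ∃ a b c : F[X], c ≠ 0 ∧ z * algebraMap F[X] W.FunctionField c =
      algebraMap F[X] W.FunctionField a + algebraMap F[X] W.FunctionField b * genericY W := by
  obtain ⟨⟨n, d, hd⟩, h : z * algebraMap _ _ d = algebraMap _ _ n⟩ :=
    IsLocalization.surj (nonZeroDivisors W.CoordinateRing) z
  obtain ⟨c, hc, e, he⟩ := (Algebra.IsIntegral.isIntegral (R := F[X]) d).isAlgebraic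
    |>.exists_nonzero_dvd hd
  obtain ⟨a, b, hab⟩ := CoordinateRing.exists_smul_basis_eq (n * e)
  refine ⟨a, b, c, hc, ?_⟩
  simp only [IsScalarTower.algebraMap_apply F[X] W.CoordinateRing W.FunctionField, genericY]
  rw [he, map_mul, ← mul_assoc, h, ← map_mul, ← hab, ← map_mul, ← map_add, Algebra.smul_def,
    Algebra.smul_def, mul_one]

variable {W} in
theorem eq_zero_of_add_mul_genericY_eq_zero {a b : F[X]}
    (h : algebraMap F[X] W.FunctionField a + algebraMap F[X] W.FunctionField b * genericY W = 0) :
    a = 0 ∧ b = 0 := by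
  simp only [IsScalarTower.algebraMap_apply F[X] W.CoordinateRing W.FunctionField, genericY,
    ← map_mul, ← map_add] at h
  refine CoordinateRing.smul_basis_eq_zero (W' := W)
    (IsFractionRing.injective W.CoordinateRing W.FunctionField ?_)
  rw [map_zero, ← h, Algebra.smul_def, Algebra.smul_def, mul_one]

theorem equation_genericY :
    (W⁄W.FunctionField).Equation (algebraMap F[X] W.FunctionField X) (genericY W) := by
  obtain ⟨φ, hC, hX, hφ⟩ : ∃ φ : F[X][X] →+* W.FunctionField,
      (∀ a, φ (C a) = algebraMap F[X] W.FunctionField a) ∧ φ X = genericY W ∧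
        φ W.polynomial = 0 := by
    refine ⟨(algebraMap W.CoordinateRing W.FunctionField).comp (CoordinateRing.mk W),
      fun a ↦ (IsScalarTower.algebraMap_apply F[X] W.CoordinateRing W.FunctionField a).symm,
      rfl, ?_⟩
    rw [RingHom.comp_apply, show CoordinateRing.mk W W.polynomial = 0 from AdjoinRoot.mk_self,
      map_zero]
  have hCC (r : F) : algebraMap F[X] W.FunctionField (C r) = algebraMap F W.FunctionField r :=
    (IsScalarTower.algebraMap_apply F F[X] W.FunctionField r).symm
  rw [equation_iff]
  simp only [polynomial, map_sub, map_add, map_mul, map_pow, hC, hX, hCC] at hφ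
  change genericY W ^ 2 + algebraMap F W.FunctionField W.a₁ * algebraMap F[X] W.FunctionField X *
      genericY W + algebraMap F W.FunctionField W.a₃ * genericY W =
    algebraMap F[X] W.FunctionField X ^ 3 +
      algebraMap F W.FunctionField W.a₂ * algebraMap F[X] W.FunctionField X ^ 2 +
      algebraMap F W.FunctionField W.a₄ * algebraMap F[X] W.FunctionField X +
      algebraMap F W.FunctionField W.a₆
  linear_combination hφ

variable [W.IsElliptic]

theorem two_ne_zero_or_a₁_ne_zero_or_a₃_ne_zero : (2 : F) ≠ 0 ∨ W.a₁ ≠ 0 ∨ W.a₃ ≠ 0 := by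
  by_contra! ⟨h2, ha₁, ha₃⟩
  refine W.isUnit_Δ.ne_zero ?_
  simp only [Δ, b₂, b₄, b₆, b₈, ha₁, ha₃]
  linear_combination (exp := 1) (-8 * W.a₂ ^ 2 * (4 * W.a₂ * W.a₆ - W.a₄ ^ 2) - 32 * W.a₄ ^ 3
    - 216 * W.a₆ ^ 2 + 144 * W.a₂ * W.a₄ * W.a₆) * h2

theorem nonsingular_genericY :
    (W⁄W.FunctionField).Nonsingular (algebraMap F[X] W.FunctionField X) (genericY W) := by
  have : (W⁄W.FunctionField).IsElliptic :=
    inferInstanceAs (WeierstrassCurve.map W (algebraMap F W.FunctionField)).IsElliptic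
  exact equation_iff_nonsingular.1 (equation_genericY W)

/-- The generic point of `W`, over its function field. The endomorphisms of `W` correspond to
the points obtained by applying them to the generic point. -/
noncomputable def genericPoint : (W⁄W.FunctionField).Point :=
  .some _ _ (nonsingular_genericY W)

theorem hasXCoord_genericPoint : HasXCoord (genericPoint W) X 1 :=
  hasXCoord_some_iff.2 ⟨isCoprime_one_right, by simp⟩

variable {W} [DecidableEq W.FunctionField]

theorem exists_map_genericPoint_eq [DecidableEq L] {x y : L} (h : (W⁄L).Nonsingular x y)
    (hx : Transcendental F x) :
    ∃ σ : W.FunctionField →ₐ[F] L, Point.map (W' := W) σ (genericPoint W) = .some x y h := by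
  obtain ⟨f, rfl, rfl⟩ := exists_coordinateRing_algHom h.1
  refine ⟨IsFractionRing.liftAlgHom (coordinateRing_algHom_injective f hx), ?_⟩
  rw [genericPoint, Point.map_some]
  congr 1
  · rw [IsScalarTower.algebraMap_apply F[X] W.CoordinateRing, IsFractionRing.liftAlgHom_apply,
      IsFractionRing.lift_algebraMap]
    rfl
  · rw [genericY, IsFractionRing.liftAlgHom_apply, IsFractionRing.lift_algebraMap]
    rfl

variable (W) in
theorem exists_map_genericPoint_eq_neg : ∃ ι : W.FunctionField →ₐ[F] W.FunctionField,
    Point.map (W' := W) ι (genericPoint W) = -genericPoint W :=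
  exists_map_genericPoint_eq _ transcendental_algebraMap_X

variable (W) in
/-- The automorphism of the function field of `W` induced by negation on `W`. -/
noncomputable def negHom : W.FunctionField →ₐ[F] W.FunctionField :=
  (exists_map_genericPoint_eq_neg W).choose

theorem map_negHom_genericPoint :
    Point.map (W' := W) (negHom W) (genericPoint W) = -genericPoint W :=
  (exists_map_genericPoint_eq_neg W).choose_spec

theorem negHom_algebraMap_X_and_genericY :
    negHom W (algebraMap F[X] W.FunctionField X) = algebraMap F[X] W.FunctionField X ∧
      negHom W (genericY W) =
        (W⁄W.FunctionField).negY (algebraMap F[X] W.FunctionField X) (genericY W) := by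
  have h := map_negHom_genericPoint (W := W)
  rwa [genericPoint, Point.map_some, Point.neg_some, Point.some.injEq] at h

theorem negHom_algebraMap (a : F[X]) :
    negHom W (algebraMap F[X] W.FunctionField a) = algebraMap F[X] W.FunctionField a := by
  rw [algHom_algebraMap_polynomial, negHom_algebraMap_X_and_genericY.1, aeval_algebraMap_apply,
    aeval_X_left_apply]

theorem negHom_genericY : negHom W (genericY W) =
    -genericY W - algebraMap F[X] W.FunctionField (C W.a₁ * X + C W.a₃) := by
  have hC (r : F) : algebraMap F[X] W.FunctionField (C r) = algebraMap F W.FunctionField r :=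
    (IsScalarTower.algebraMap_apply F F[X] W.FunctionField r).symm
  rw [negHom_algebraMap_X_and_genericY.2, negY, map_add, map_mul, hC, hC, sub_sub]
  rfl

theorem exists_mul_eq_of_negHom_eq {z : W.FunctionField} (hz : negHom W z = z) :
    ∃ a b : F[X], b ≠ 0 ∧
      z * algebraMap F[X] W.FunctionField b = algebraMap F[X] W.FunctionField a := by
  obtain ⟨a, b, c, hc, h⟩ := exists_mul_eq_add_mul_genericY W z
  have h' := congr_arg (negHom W) h
  rw [map_mul, map_add, map_mul, hz, negHom_algebraMap, negHom_algebraMap, negHom_algebraMap,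
    negHom_genericY, h] at h'
  obtain ⟨hb₁, hb₂⟩ := eq_zero_of_add_mul_genericY_eq_zero (W := W)
      (a := b * (C W.a₁ * X + C W.a₃)) (b := b * C 2) (by
    rw [map_mul, map_mul, C_ofNat, map_ofNat]
    linear_combination h')
  refine ⟨a, c, hc, ?_⟩
  suffices b = 0 by simpa [this] using h
  by_contra hb
  have h2 : (2 : F) = 0 := C_eq_zero.1 ((mul_eq_zero.1 hb₂).resolve_left hb)
  have h13 : C W.a₁ * X + C W.a₃ = 0 := (mul_eq_zero.1 hb₁).resolve_left hb
  have ha₁ : W.a₁ = 0 := by simpa using congr_arg (coeff · 1) h13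
  have ha₃ : W.a₃ = 0 := by simpa using congr_arg (coeff · 0) h13
  rcases two_ne_zero_or_a₁_ne_zero_or_a₃_ne_zero W with h | h | h <;> contradiction

theorem exists_hasXCoord {P : (W⁄W.FunctionField).Point}
    (hP : Point.map (W' := W) (negHom W) P = -P) : ∃ a b : F[X], HasXCoord P a b := by
  rcases P with _ | ⟨x, y, h⟩
  · exact ⟨1, 0, hasXCoord_zero⟩
  rw [Point.map_some, Point.neg_some, Point.some.injEq] at hP
  obtain ⟨a, b, hb, hab⟩ := exists_mul_eq_of_negHom_eq hP.1
  classical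
  let _ : GCDMonoid F[X] := EuclideanDomain.gcdMonoid F[X]
  set d := gcd a b
  have hd : d ≠ 0 := gcd_ne_zero_of_right hb
  refine ⟨a / d, b / d, hasXCoord_some_iff.2 ⟨isCoprime_div_gcd_div_gcd hb, mul_left_cancel₀
    (mt (FaithfulSMul.algebraMap_eq_zero_iff F[X] W.FunctionField).1 hd) ?_⟩⟩
  rw [← mul_assoc, ← map_mul, ← map_mul, EuclideanDomain.mul_div_cancel' hd
    (gcd_dvd_left a b), EuclideanDomain.mul_div_cancel' hd
    (gcd_dvd_right a b), ← hab, mul_comm]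

end FunctionField

/-! ### The degree as a quadratic form -/

section Parallelogram

variable {G : Type*} [AddCommGroup G] {h : G → ℤ}

theorem polar_add_left_of_parallelogram
    (hp : ∀ x y, h (x + y) + h (x - y) = 2 * h x + 2 * h y) (x x' y : G) :
    QuadraticMap.polar h (x + x') y = QuadraticMap.polar h x y + QuadraticMap.polar h x' y := by
  have h₁ := hp (x + x') y
  have h₂ := hp x (x' - y)
  have h₃ := hp (x + y) x'
  have h₄ := hp x' y
  rw [← add_sub_assoc, show x - (x' - y) = x + y - x' by abel] at h₂
  rw [show x + y + x' = x + x' + y by abel] at h₃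
  simp only [QuadraticMap.polar]
  linarith

theorem polar_smul_left_of_parallelogram
    (hp : ∀ x y, h (x + y) + h (x - y) = 2 * h x + 2 * h y) (n : ℤ) (x y : G) :
    QuadraticMap.polar h (n • x) y = n • QuadraticMap.polar h x y :=
  map_zsmul (AddMonoidHom.mk' (QuadraticMap.polar h · y)
    fun x x' ↦ polar_add_left_of_parallelogram hp x x' y) n x

/-- The quadratic form given by a function satisfying the parallelogram law. -/
def quadraticFormOfParallelogram (h : G → ℤ)
    (hp : ∀ x y, h (x + y) + h (x - y) = 2 * h x + 2 * h y) : QuadraticForm ℤ G :=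
  .ofPolar h
    (fun n x ↦ by
      have polar_self (y : G) : QuadraticMap.polar h y y = 2 * h y := by
        have h₀ := hp 0 0
        have h₁ := hp y y
        rw [sub_self] at h₁
        rw [add_zero, sub_self] at h₀
        rw [QuadraticMap.polar]
        linarith
      have h₂ := polar_self (n • x)
      rw [polar_smul_left_of_parallelogram hp, QuadraticMap.polar_comm,
        polar_smul_left_of_parallelogram hp, polar_self, smul_eq_mul, smul_eq_mul] at h₂
      rw [smul_eq_mul]
      linarith)
    (polar_add_left_of_parallelogram hp) (polar_smul_left_of_parallelogram hp)

end Parallelogram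

section EndPoints

variable {F : Type*} [Field F] (W : WeierstrassCurve.Affine F) [W.IsElliptic]
  [DecidableEq W.FunctionField]

/-- The points corresponding to the endomorphisms of `W`: those on which the automorphism `negHom`
acts as negation, and whose `x`-coordinate has a pole at infinity. -/
noncomputable def endPoints : AddSubgroup (W⁄W.FunctionField).Point :=
  .ofSub {P | Point.map (W' := W) (negHom W) P = -P ∧
      ∃ a b : F[X], HasXCoord P a b ∧ b.degree < a.degree}
    ⟨0, by simp, 1, 0, hasXCoord_zero, by simp⟩ <| by
    rintro P ⟨hP, a, b, hab, h⟩ Q ⟨hQ, c, d, hcd, h'⟩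
    have map_add_neg : Point.map (W' := W) (negHom W) (P + -Q) = -(P + -Q) := by
      rw [map_add, map_neg, hP, hQ, neg_add]
    obtain ⟨a₁, b₁, h₁⟩ := exists_hasXCoord map_add_neg
    obtain ⟨a₂, b₂, h₂⟩ := exists_hasXCoord (P := P - -Q) (by
      rw [map_sub, map_neg, hP, hQ]; abel)
    exact ⟨map_add_neg, a₁, b₁, h₁,
      (hab.degree_lt_and_height_add_height_sub hcd.neg h₁ h₂ h h').1⟩

/-- The generic point as an element of `endPoints W`: the identity endomorphism. -/
noncomputable def genericEndPoint : endPoints W :=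
  ⟨genericPoint W, map_negHom_genericPoint, X, 1, hasXCoord_genericPoint W, by simp⟩

variable {W}

theorem HasXCoord.degree_lt {P : endPoints W} {a b : F[X]} (h : HasXCoord P.1 a b) :
    b.degree < a.degree := by
  obtain ⟨-, a', b', h', hd⟩ := P.2
  exact h'.degree_lt_of_degree_lt h hd

theorem height_add_add_height_sub (P Q : endPoints W) :
    height (P + Q).1 + height (P - Q).1 = 2 * height P.1 + 2 * height Q.1 := by
  obtain ⟨a, b, hP, h⟩ := P.2.2
  obtain ⟨c, d, hQ, h'⟩ := Q.2.2
  obtain ⟨a₁, b₁, h₁, -⟩ := (P + Q).2.2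
  obtain ⟨a₂, b₂, h₂, -⟩ := (P - Q).2.2
  exact (hP.degree_lt_and_height_add_height_sub hQ h₁ h₂ h h').2

variable (W) in
/-- The degree, as a quadratic form on the group of endomorphisms of `W`. -/
noncomputable def heightForm : QuadraticForm ℤ (endPoints W) :=
  quadraticFormOfParallelogram (fun P ↦ height P.1)
    fun P Q ↦ mod_cast height_add_add_height_sub P Q

theorem heightForm_apply (P : endPoints W) : heightForm W P = height P.1 := rfl

variable (W) in
theorem heightForm_genericEndPoint : heightForm W (genericEndPoint W) = 1 := by
  rw [heightForm_apply, genericEndPoint, (hasXCoord_genericPoint W).height_eq, natDegree_X,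
    Nat.cast_one]

variable (W) in
theorem heightForm_anisotropic : (heightForm W).Anisotropic := by
  intro P hP
  obtain ⟨a, b, hab, hd⟩ := P.2.2
  rw [heightForm_apply, hab.height_eq, Nat.cast_eq_zero] at hP
  rw [← ZeroMemClass.coe_eq_zero, hab.eq_zero_iff]
  by_contra hb
  exact (natDegree_lt_natDegree hb hd).not_ge (hP ▸ Nat.zero_le _)

end EndPoints

/-! ### Multiplicativity of the degree -/

section HomComp

variable {F A : Type*} [Field F] [CommRing A] [Algebra F A] {a b : F[X]} {c d : A} {m n : ℕ}

/-- The homogenized composition `dⁿ a(c / d)`, for `a` of degree at most `n`. -/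
noncomputable def homComp (n : ℕ) (a : F[X]) (c d : A) : A :=
  MvPolynomial.aeval ![c, d] (a.homogenize n)

theorem homComp_eq_sum (n : ℕ) (a : F[X]) (c d : A) :
    homComp n a c d =
      ∑ i ∈ Finset.range n, a.coeff i • (c ^ i * d ^ (n - i)) + a.coeff n • c ^ n := by
  rw [homComp, homogenize, Finset.Nat.sum_antidiagonal_eq_sum_range_succ_mk, map_sum,
    Finset.sum_range_succ]
  simp [MvPolynomial.aeval_monomial, Finsupp.prod_fintype, Algebra.smul_def]

theorem homComp_mul_self (ha : a.natDegree ≤ n) (x d : A) :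
    homComp n a (d * x) d = d ^ n * aeval x a := by
  rw [homComp_eq_sum, aeval_eq_sum_range' (Nat.lt_succ_of_le ha), Finset.sum_range_succ, mul_add,
    Finset.mul_sum, mul_smul_comm, mul_pow]
  congr 1
  refine Finset.sum_congr rfl fun i hi ↦ ?_
  rw [mul_smul_comm, mul_pow, mul_right_comm, ← pow_add,
    Nat.add_sub_cancel' (Finset.mem_range.1 hi).le]

theorem map_homComp {B : Type*} [CommRing B] [Algebra F B] (f : A →ₐ[F] B) (n : ℕ) (a : F[X])
    (c d : A) : f (homComp n a c d) = homComp n a (f c) (f d) := by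
  simp only [homComp_eq_sum, map_add, map_sum, map_smul, map_mul, map_pow]

theorem algebraMap_homComp [Algebra F[X] A] [IsScalarTower F F[X] A] (ha : a.natDegree ≤ n)
    {c d : F[X]} {x : A} (h : algebraMap F[X] A c = algebraMap F[X] A d * x) :
    algebraMap F[X] A (homComp n a c d) = algebraMap F[X] A d ^ n * aeval x a := by
  rw [← homComp_mul_self ha, ← h]
  exact map_homComp (IsScalarTower.toAlgHom F F[X] A) n a c d

theorem isCoprime_homComp_right (ha : a.coeff n ≠ 0) (hcd : IsCoprime c d) :
    IsCoprime (homComp n a c d) d := by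
  have hdvd : d ∣ ∑ i ∈ Finset.range n, a.coeff i • (c ^ i * d ^ (n - i)) :=
    Finset.dvd_sum fun i hi ↦ (dvd_smul_of_dvd _)
      ((dvd_pow_self d (Nat.sub_ne_zero_of_lt (Finset.mem_range.1 hi))).mul_left _)
  obtain ⟨e, he⟩ := hdvd
  have hu : IsUnit (algebraMap F A (a.coeff n)) := (IsUnit.mk0 _ ha).map (algebraMap F A)
  rw [homComp_eq_sum, he, add_comm, Algebra.smul_def]
  exact ((isCoprime_mul_unit_left_left hu _ _).2 hcd.pow_left).add_mul_left_left e

theorem isCoprime_homComp (hab : IsCoprime a b) (ha : a ≠ 0) (hba : b.natDegree ≤ a.natDegree)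
    (hcd : IsCoprime c d) :
    IsCoprime (homComp a.natDegree a c d) (homComp a.natDegree b c d) := by
  set n := a.natDegree
  obtain ⟨r, s, hrs⟩ := hab
  set m := max r.natDegree s.natDegree
  have pow_eq : d ^ (m + n) =
      homComp m s c d * homComp n b c d + homComp n a c d * homComp m r c d := by
    calc d ^ (m + n) = homComp (m + n) (r * a + s * b) c d := by simp [hrs, homComp]
      _ = homComp m r c d * homComp n a c d + homComp m s c d * homComp n b c d := by
        simp only [homComp, homogenize_add, map_add]
        rw [homogenize_mul r a (le_max_left _ _) le_rfl, homogenize_mul s b (le_max_right _ _) hba,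
          map_mul, map_mul]
      _ = _ := by ring
  have h := (isCoprime_homComp_right (leadingCoeff_ne_zero.2 ha) hcd).pow_right (n := m + n)
  rw [pow_eq] at h
  exact (IsCoprime.of_add_mul_left_right h).of_mul_right_right

theorem degree_pow_lt_degree_pow {c d : F[X]} (h : d.degree < c.degree) (hn : n ≠ 0) :
    (d ^ n).degree < (c ^ n).degree := by
  have hc : c ≠ 0 := ne_zero_of_degree_gt h
  induction n with
  | zero => exact absurd rfl hn
  | succ n ih =>
    rw [pow_succ, pow_succ]
    rcases eq_or_ne n 0 with rfl | hn
    · simpa using h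
    · exact degree_mul_lt_of_lt_of_le (ih hn) h.le hc

theorem degree_homComp {c d : F[X]} (h : d.degree < c.degree) (ha : a.coeff n ≠ 0) :
    (homComp n a c d).degree = (c ^ n).degree := by
  have hc : c ≠ 0 := ne_zero_of_degree_gt h
  rw [homComp_eq_sum, degree_add_eq_right_of_degree_lt, smul_eq_C_mul, degree_C_mul ha]
  rw [smul_eq_C_mul, degree_C_mul ha]
  refine Finset.sum_induction _ (fun p : F[X] ↦ p.degree < (c ^ n).degree)
    (fun _ _ ↦ degree_add_lt) ?_ fun i hi ↦ ?_
  · rw [degree_zero, bot_lt_iff_ne_bot, degree_ne_bot]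
    exact pow_ne_zero _ hc
  · have hi : i < n := Finset.mem_range.1 hi
    rw [smul_eq_C_mul, ← Nat.add_sub_cancel' hi.le, pow_add, Nat.add_sub_cancel_left]
    exact degree_C_mul_lt _ <| degree_mul_lt_of_le_of_lt le_rfl
      (degree_pow_lt_degree_pow h (Nat.sub_ne_zero_of_lt hi)) (pow_ne_zero _ hc)

end HomComp

section Composition

variable {F : Type*} [Field F]

theorem transcendental_of_degree_lt {A : Type*} [CommRing A] [Algebra F A] [Algebra F[X] A]
    [IsScalarTower F F[X] A] [FaithfulSMul F[X] A] {c d : F[X]} {x : A} (h : d.degree < c.degree)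
    (hx : algebraMap F[X] A c = algebraMap F[X] A d * x) : Transcendental F x := by
  rw [transcendental_iff]
  intro p hp
  by_contra hp₀
  have h₀ := algebraMap_homComp (n := p.natDegree) le_rfl hx
  rw [hp, mul_zero, FaithfulSMul.algebraMap_eq_zero_iff] at h₀
  have hdeg := degree_homComp h (a := p) (leadingCoeff_ne_zero.2 hp₀)
  rw [h₀, degree_zero, eq_comm, degree_eq_bot] at hdeg
  exact pow_ne_zero _ (ne_zero_of_degree_gt h) hdeg

theorem xRep_map {K L : Type*} [Field K] [Field L] [DecidableEq K] [DecidableEq L] [Algebra F K]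
    [Algebra F L] {W : WeierstrassCurve.Affine F} (σ : K →ₐ[F] L) (P : (W⁄K).Point) :
    (Point.map (W' := W) σ P).xRep = σ ∘ P.xRep := by
  rcases P with _ | ⟨x, y, h⟩
  · rw [← Point.zero_def, map_zero, Point.xRep_zero, Point.xRep_zero]
    ext i
    fin_cases i <;> simp
  · rw [Point.map_some, Point.xRep_some, Point.xRep_some]
    ext i
    fin_cases i <;> simp

variable {W : WeierstrassCurve.Affine F} [W.IsElliptic] [DecidableEq W.FunctionField]
  {P : (W⁄W.FunctionField).Point} {a b c d : F[X]} {σ : W.FunctionField →ₐ[F] W.FunctionField}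

theorem HasXCoord.map (hP : HasXCoord P a b) (hba : b.degree < a.degree)
    (hσ : HasXCoord (Point.map (W' := W) σ (genericPoint W)) c d) :
    HasXCoord (Point.map (W' := W) σ P) (homComp a.natDegree a c d)
      (homComp a.natDegree b c d) := by
  have hle : b.natDegree ≤ a.natDegree := natDegree_le_natDegree hba.le
  refine ⟨isCoprime_homComp hP.isCoprime (ne_zero_of_degree_gt hba) hle hσ.isCoprime, ?_⟩
  rw [genericPoint, Point.map_some, hasXCoord_some_iff] at hσ
  have h := congr_arg σ hP.mul_xRep_eq
  rw [map_mul, map_mul, algHom_algebraMap_polynomial σ a, algHom_algebraMap_polynomial σ b] at h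
  rw [xRep_map, algebraMap_homComp le_rfl hσ.2, algebraMap_homComp hle hσ.2, mul_assoc, mul_assoc]
  exact congr_arg _ h

theorem exists_map_genericEndPoint_eq {Q : endPoints W} (hQ : Q ≠ 0) :
    ∃ σ : W.FunctionField →ₐ[F] W.FunctionField,
      Point.map (W' := W) σ (genericEndPoint W) = Q.1 := by
  rcases Q with ⟨_ | ⟨x, y, hxy⟩, hneg, c, d, hcd, hdc⟩
  · exact absurd rfl hQ
  · exact exists_map_genericPoint_eq hxy
      (transcendental_of_degree_lt hdc (hasXCoord_some_iff.1 hcd).2)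

theorem height_map (P Q : endPoints W)
    (hσ : Point.map (W' := W) σ (genericEndPoint W) = Q.1) :
    height (Point.map (W' := W) σ P.1) = height P.1 * height Q.1 := by
  obtain ⟨-, c, d, hcd, hdc⟩ := Q.2
  obtain ⟨-, a, b, hab, hba⟩ := P.2
  have ha : a.coeff a.natDegree ≠ 0 := leadingCoeff_ne_zero.2 (ne_zero_of_degree_gt hba)
  rw [hab.height_eq, hcd.height_eq, (hab.map hba (hσ ▸ hcd)).height_eq,
    natDegree_eq_of_degree_eq (degree_homComp hdc ha), natDegree_pow]

end Composition

/-! ### The characteristic polynomial of Frobenius -/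

section Frobenius

variable {F : Type*} [Field F] [Fintype F] {W : WeierstrassCurve.Affine F}

theorem map_map_frobenius {K L : Type*} [Field K] [Field L] [Algebra F K] [Algebra F L]
    [DecidableEq K] [DecidableEq L] (σ : K →ₐ[F] L) (P : (W⁄K).Point) :
    Point.map (W' := W) σ (Point.map (W' := W) (FiniteField.frobeniusAlgHom F K) P) =
      Point.map (W' := W) (FiniteField.frobeniusAlgHom F L) (Point.map (W' := W) σ P) := by
  rw [Point.map_map, Point.map_map]
  congr 2
  ext z
  simp [FiniteField.coe_frobeniusAlgHom]

theorem HasXCoord.map_frobenius {L : Type*} [Field L] [Algebra F L] [Algebra F[X] L]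
    [DecidableEq L] {P : (W⁄L).Point} {a b : F[X]} (h : HasXCoord P a b) :
    HasXCoord (Point.map (W' := W) (FiniteField.frobeniusAlgHom F L) P)
      (a ^ Fintype.card F) (b ^ Fintype.card F) := by
  refine ⟨h.isCoprime.pow, ?_⟩
  rw [xRep_map]
  simpa only [map_mul, map_pow, FiniteField.coe_frobeniusAlgHom, mul_pow, Function.comp] using
    congr_arg (FiniteField.frobeniusAlgHom F L) h.mul_xRep_eq

variable (W) [W.IsElliptic] [DecidableEq W.FunctionField]

/-- The Frobenius endomorphism, acting on the endomorphisms of `W` by composition. -/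
noncomputable def frobEnd : Module.End ℤ (endPoints W) :=
  AddMonoidHom.toIntLinearMap <|
    ((Point.map (W' := W) (FiniteField.frobeniusAlgHom F W.FunctionField)).comp
      (endPoints W).subtype).codRestrict (endPoints W) <| by
    rintro ⟨P, hP, a, b, hab, hba⟩
    refine ⟨?_, _, _, hab.map_frobenius, degree_pow_lt_degree_pow hba Fintype.card_ne_zero⟩
    simp only [AddMonoidHom.comp_apply, AddSubgroup.subtype_apply]
    rw [map_map_frobenius, hP, map_neg]

variable {W}

theorem HasXCoord.frobEnd {P : endPoints W} {a b : F[X]} (h : HasXCoord P.1 a b) :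
    HasXCoord (frobEnd W P).1 (a ^ Fintype.card F) (b ^ Fintype.card F) :=
  h.map_frobenius

theorem map_frobEnd {σ : W.FunctionField →ₐ[F] W.FunctionField} {P Q : endPoints W}
    (h : Point.map (W' := W) σ P.1 = Q.1) :
    Point.map (W' := W) σ (frobEnd W P).1 = (frobEnd W Q).1 :=
  (map_map_frobenius σ P.1).trans (congrArg _ h)

theorem heightForm_frobEnd (P : endPoints W) :
    heightForm W (frobEnd W P) = Fintype.card F * heightForm W P := by
  obtain ⟨-, a, b, hab, -⟩ := P.2
  rw [heightForm_apply, heightForm_apply, hab.frobEnd.height_eq, hab.height_eq, natDegree_pow,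
    Nat.cast_mul]

theorem polar_frobEnd_frobEnd (P Q : endPoints W) :
    QuadraticMap.polar (heightForm W) (frobEnd W P) (frobEnd W Q) =
      Fintype.card F * QuadraticMap.polar (heightForm W) P Q := by
  simp only [QuadraticMap.polar, ← map_add, heightForm_frobEnd]
  ring

end Frobenius

section CharacteristicPolynomial

variable {F : Type*} [Field F] [Fintype F] (W : WeierstrassCurve.Affine F) [W.IsElliptic]
  [DecidableEq W.FunctionField]

/-- The trace of the Frobenius endomorphism, as its pairing with the identity under the degree. -/
noncomputable def frobTrace : ℤ :=
  QuadraticMap.polar (heightForm W) (frobEnd W (genericEndPoint W)) (genericEndPoint W)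

theorem heightForm_frobEnd_sub :
    heightForm W (frobEnd W (genericEndPoint W) - genericEndPoint W) =
      Fintype.card F + 1 - frobTrace W := by
  rw [sub_eq_add_neg, QuadraticMap.map_add (heightForm W), QuadraticMap.map_neg,
    QuadraticMap.polar_neg_right, heightForm_frobEnd, heightForm_genericEndPoint, frobTrace]
  ring

theorem heightForm_frobEnd_add :
    heightForm W (frobEnd W (genericEndPoint W) + genericEndPoint W) =
      Fintype.card F + 1 + frobTrace W := by
  rw [QuadraticMap.map_add (heightForm W), heightForm_frobEnd, heightForm_genericEndPoint, mul_one,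
    frobTrace]

-- `F² - 1 = (F - 1)(F + 1)`
theorem heightForm_frobEnd_frobEnd_sub :
    heightForm W (frobEnd W (frobEnd W (genericEndPoint W)) - genericEndPoint W) =
      heightForm W (frobEnd W (genericEndPoint W) - genericEndPoint W) *
        heightForm W (frobEnd W (genericEndPoint W) + genericEndPoint W) := by
  set g := genericEndPoint W
  set f := frobEnd W g
  have factor : frobEnd W f - g = frobEnd W (f + g) - (f + g) := by
    rw [map_add]
    abel
  by_cases h : f + g = 0
  · rw [factor, h, map_zero, sub_zero, QuadraticMap.map_zero, mul_zero]
  obtain ⟨σ, hσ⟩ := exists_map_genericEndPoint_eq h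
  have hm := height_map (f - g) (f + g) hσ
  rw [AddSubgroup.coe_sub, map_sub, map_frobEnd hσ, hσ, ← AddSubgroup.coe_sub, ← factor] at hm
  rw [heightForm_apply, heightForm_apply, heightForm_apply, ← Nat.cast_mul]
  exact congrArg Nat.cast hm

theorem polar_frobEnd_frobEnd_genericEndPoint :
    QuadraticMap.polar (heightForm W) (frobEnd W (frobEnd W (genericEndPoint W)))
      (genericEndPoint W) = frobTrace W ^ 2 - 2 * Fintype.card F := by
  have h := heightForm_frobEnd_frobEnd_sub W
  rw [heightForm_frobEnd_sub, heightForm_frobEnd_add, sub_eq_add_neg,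
    QuadraticMap.map_add (heightForm W), QuadraticMap.polar_neg_right, QuadraticMap.map_neg,
    heightForm_frobEnd, heightForm_frobEnd, heightForm_genericEndPoint] at h
  linear_combination -h

theorem frobEnd_frobEnd_genericEndPoint :
    frobEnd W (frobEnd W (genericEndPoint W)) =
      frobTrace W • frobEnd W (genericEndPoint W) - Fintype.card F • genericEndPoint W := by
  have polar₁ : QuadraticMap.polar (heightForm W) _ _ = frobTrace W := rfl
  have polar₂ := polar_frobEnd_frobEnd_genericEndPoint W
  have polar₃ := polar_frobEnd_frobEnd (frobEnd W (genericEndPoint W)) (genericEndPoint W)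
  have height₁ := heightForm_frobEnd (genericEndPoint W)
  have height₂ := heightForm_frobEnd (frobEnd W (genericEndPoint W))
  rw [heightForm_genericEndPoint, mul_one] at height₁
  set g := genericEndPoint W
  set f := frobEnd W g
  suffices heightForm W (frobEnd W f + (-frobTrace W • f + (Fintype.card F : ℤ) • g)) = 0 by
    have h := heightForm_anisotropic W _ this
    rw [neg_smul, natCast_zsmul] at h
    rw [← sub_eq_zero, ← h]
    abel
  rw [QuadraticMap.map_add (heightForm W), QuadraticMap.map_add (heightForm W) (-frobTrace W • f)]
  simp only [QuadraticMap.map_smul, QuadraticMap.polar_add_right, QuadraticMap.polar_smul_left,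
    QuadraticMap.polar_smul_right, smul_eq_mul, polar₁, polar₂, polar₃, height₁, height₂,
    heightForm_genericEndPoint, g]
  ring

/-- The characteristic polynomial of Frobenius. -/
noncomputable def frobCharpoly : ℤ[X] := X ^ 2 - C (frobTrace W) * X + C (Fintype.card F : ℤ)

theorem monic_frobCharpoly : (frobCharpoly W).Monic := by
  rw [frobCharpoly]
  monicity!

theorem natDegree_frobCharpoly : (frobCharpoly W).natDegree = 2 := by
  rw [frobCharpoly]
  compute_degree!

theorem aeval_frobCharpoly {A : Type*} [Ring A] (x : A) :
    aeval x (frobCharpoly W) = x ^ 2 - frobTrace W * x + Fintype.card F := by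
  simp [frobCharpoly]

theorem aeval_frobEnd_frobCharpoly_genericEndPoint :
    aeval (frobEnd W) (frobCharpoly W) (genericEndPoint W) = 0 := by
  have h := frobEnd_frobEnd_genericEndPoint W
  simp only [aeval_frobCharpoly, sq, LinearMap.add_apply, LinearMap.sub_apply, Module.End.mul_apply,
    Module.End.intCast_apply, Module.End.natCast_apply, h]
  abel

theorem exists_aeval_eq_and_aeval_frobEnd_eq (f : ℤ[X]) :
    ∃ a b : ℤ, (∀ β : ℂ, aeval β (frobCharpoly W) = 0 → aeval β f = a * β + b) ∧
      aeval (frobEnd W) f (genericEndPoint W) =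
        a • frobEnd W (genericEndPoint W) + b • genericEndPoint W := by
  have monic := monic_frobCharpoly W
  have hdeg : (f %ₘ frobCharpoly W).natDegree < 2 := by
    rw [← natDegree_frobCharpoly W]
    exact natDegree_modByMonic_lt f monic (by rintro h; simpa [h] using natDegree_frobCharpoly W)
  obtain ⟨a, b, hab⟩ := exists_eq_X_add_C_of_natDegree_le_one (Nat.le_of_lt_succ hdeg)
  refine ⟨a, b, fun β hβ ↦ ?_, ?_⟩
  · rw [← aeval_modByMonic_eq_self_of_root hβ, hab]
    simp
  · rw [← modByMonic_add_div f (frobCharpoly W), mul_comm, hab]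
    simp [aeval_frobEnd_frobCharpoly_genericEndPoint, Module.End.mul_apply]

theorem heightForm_aeval_frobEnd {α : ℂ} (hα : aeval α (frobCharpoly W) = 0) (f : ℤ[X]) :
    (heightForm W (aeval (frobEnd W) f (genericEndPoint W)) : ℂ) =
      aeval α f * aeval (frobTrace W - α) f := by
  obtain ⟨a, b, hC, hE⟩ := exists_aeval_eq_and_aeval_frobEnd_eq W f
  have hβ : aeval (frobTrace W - α) (frobCharpoly W) = 0 := by
    rw [aeval_frobCharpoly] at hα ⊢
    linear_combination hα
  rw [hC α hα, hC _ hβ, hE, QuadraticMap.map_add (heightForm W)]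
  rw [aeval_frobCharpoly] at hα
  have polar_eq : QuadraticMap.polar (heightForm W) _ _ = frobTrace W := rfl
  simp only [QuadraticMap.map_smul, QuadraticMap.polar_smul_left, QuadraticMap.polar_smul_right,
    smul_eq_mul, heightForm_frobEnd, heightForm_genericEndPoint, polar_eq]
  push_cast
  linear_combination a ^ 2 * hα

end CharacteristicPolynomial

/-! ### Supersingular curves -/

section PowerComposition

variable {F : Type*} [Field F] {a b c d : F[X]} {e : F} {m n : ℕ}

theorem homComp_one_right (ha : a.natDegree ≤ n) (c : F[X]) : homComp n a c 1 = a.comp c := by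
  simpa [comp_eq_aeval] using homComp_mul_self ha c 1

theorem isUnit_of_isUnit_homComp (hb : b.natDegree < n) (h : IsUnit (homComp n b c d)) :
    IsUnit d := by
  refine isUnit_of_dvd_unit ?_ h
  rw [homComp_eq_sum, coeff_eq_zero_of_natDegree_lt hb, zero_smul, add_zero]
  exact Finset.dvd_sum fun i hi ↦ (dvd_smul_of_dvd _)
    ((dvd_pow_self d (Nat.sub_ne_zero_of_lt (Finset.mem_range.1 hi))).mul_left _)

theorem exists_eq_C_mul_X_sub_C_pow_of_comp_eq (he : e ≠ 0) (hc : c.natDegree ≠ 0)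
    (h : a.comp c = C e * X ^ m) : ∃ k δ : F, a = C k * (X - C δ) ^ a.natDegree := by
  have ha : a ≠ 0 := by
    rintro rfl
    rw [zero_comp] at h
    exact mul_ne_zero (C_ne_zero.2 he) (pow_ne_zero _ X_ne_zero) h.symm
  set δ := c.eval 0 with hδ
  obtain ⟨a', ha', hdvd⟩ := exists_eq_pow_rootMultiplicity_mul_and_not_dvd a ha δ
  set l := rootMultiplicity δ a
  have coprime : IsCoprime (a'.comp c) (X ^ m) := by
    refine .pow_right (IsCoprime.symm (irreducible_X.coprime_iff_not_dvd.2 ?_))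
    rwa [X_dvd_iff, coeff_zero_eq_eval_zero, eval_comp, ← hδ, ← IsRoot.def, ← dvd_iff_isRoot]
  have dvd : a'.comp c ∣ C e * X ^ m :=
    ⟨(X - C δ).comp c ^ l, by rw [← h, ha', mul_comp, pow_comp, mul_comm]⟩
  have isUnit : IsUnit (a'.comp c) :=
    isUnit_of_dvd_unit (coprime.dvd_of_dvd_mul_right dvd) (isUnit_C.2 (.mk0 _ he))
  have natDegree_eq : a'.natDegree = 0 := by
    simpa [natDegree_comp, hc] using natDegree_eq_zero_of_isUnit isUnit
  obtain ⟨k, rfl⟩ := natDegree_eq_zero.1 natDegree_eq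
  have hl : a.natDegree = l := by
    have hk : k ≠ 0 := by
      rintro rfl
      simp at hdvd
    rw [ha', natDegree_mul_C hk, natDegree_pow, natDegree_X_sub_C, mul_one]
  exact ⟨k, δ, by rw [hl, mul_comm, ← ha']⟩

theorem exists_eq_of_homComp_eq (hba : b.natDegree < a.natDegree) (hdc : d.degree < c.degree)
    (he : e ≠ 0) (ha : homComp a.natDegree a c d = C e * X ^ m)
    (hb : homComp a.natDegree b c d = C e) :
    ∃ k δ r : F, a = C k * (X - C δ) ^ a.natDegree ∧ b = C r := by
  obtain ⟨r, hr, rfl⟩ := Polynomial.isUnit_iff.1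
    (isUnit_of_isUnit_homComp hba (hb ▸ isUnit_C.2 (.mk0 _ he)))
  have hr₀ := hr.ne_zero
  obtain ⟨x, rfl⟩ : ∃ x, c = C r * x := ⟨C r⁻¹ * c, by
    rw [← mul_assoc, ← C_mul, mul_inv_cancel₀ hr₀, C_1, one_mul]⟩
  have hx : x.natDegree ≠ 0 := by
    rw [degree_C_mul hr₀, degree_C hr₀] at hdc
    exact (natDegree_pos_iff_degree_pos.2 hdc).ne'
  rw [homComp_mul_self le_rfl, ← comp_eq_aeval, ← C_pow] at ha
  rw [homComp_mul_self hba.le, ← comp_eq_aeval, ← C_pow] at hb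
  set s := r ^ a.natDegree
  have hs : s ≠ 0 := pow_ne_zero _ hr₀
  have ha' : a.comp x = C (s⁻¹ * e) * X ^ m := by
    rw [C_mul, mul_assoc, ← ha, ← mul_assoc, ← C_mul, inv_mul_cancel₀ hs, C_1, one_mul]
  obtain ⟨k, δ, hk⟩ :=
    exists_eq_C_mul_X_sub_C_pow_of_comp_eq (mul_ne_zero (inv_ne_zero hs) he) hx ha'
  have natDegree_b : b.natDegree = 0 := by
    simpa [natDegree_C_mul hs, natDegree_comp, hx] using congr_arg natDegree hb
  obtain ⟨r', rfl⟩ := natDegree_eq_zero.1 natDegree_b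
  exact ⟨k, δ, r', hk, rfl⟩

end PowerComposition

section Supersingular

variable {F : Type*} [Field F] {W : WeierstrassCurve.Affine F} [W.IsElliptic]
  [DecidableEq W.FunctionField]

theorem HasXCoord.nsmul {n : ℕ} {Q : endPoints W} {a b c d : F[X]}
    (h : HasXCoord (n • genericEndPoint W).1 a b) (hQ : HasXCoord Q.1 c d) (hQ₀ : Q ≠ 0) :
    HasXCoord (n • Q).1 (homComp a.natDegree a c d) (homComp a.natDegree b c d) := by
  obtain ⟨σ, hσ⟩ := exists_map_genericEndPoint_eq hQ₀
  have h' := h.map h.degree_lt (hσ ▸ hQ)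
  rwa [AddSubgroup.coe_nsmul, map_nsmul, hσ] at h'

theorem heightForm_nsmul (n : ℕ) (P : endPoints W) :
    heightForm W (n • P) = (n : ℤ) ^ 2 * heightForm W P := by
  rw [← natCast_zsmul, QuadraticMap.map_smul, smul_eq_mul, sq]

theorem HasXCoord.ne_zero {P : endPoints W} {a b : F[X]} (h : HasXCoord P.1 a b) (hb : b ≠ 0) :
    P ≠ 0 :=
  fun hP ↦ hb (h.eq_zero_iff.1 (congrArg Subtype.val hP))

theorem HasXCoord.div_C {P : endPoints W} {a : F[X]} {r : F} (hr : r ≠ 0)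
    (h : HasXCoord P.1 a (C r)) : HasXCoord P.1 (C r⁻¹ * a) 1 := by
  refine ⟨isCoprime_one_right, ?_⟩
  rw [map_mul, mul_assoc, h.mul_xRep_eq, ← mul_assoc, ← map_mul, ← C_mul, inv_mul_cancel₀ hr, C_1]

theorem exists_hasXCoord_char_nsmul {p : ℕ} [Fact p.Prime] [CharP F p] {n : ℕ} {Q : endPoints W}
    (h : HasXCoord (p • Q).1 (X ^ n) 1) :
    ∃ c d : F, c ≠ 0 ∧ HasXCoord (p • genericEndPoint W).1 (C c * X ^ p ^ 2 + C d) 1 := by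
  obtain ⟨-, a, b, hab, hba⟩ := (p • genericEndPoint W).2
  have natDegree_a : a.natDegree = p ^ 2 := by
    have hh := heightForm_nsmul p (genericEndPoint W)
    rw [heightForm_apply, hab.height_eq, heightForm_genericEndPoint, mul_one] at hh
    exact_mod_cast hh
  have hQ₀ : Q ≠ 0 := by
    rintro rfl
    rw [nsmul_zero] at h
    exact h.ne_zero one_ne_zero rfl
  obtain ⟨-, c, d, hcd, hdc⟩ := Q.2
  obtain ⟨e, he, ha, hb⟩ := (hab.nsmul hcd hQ₀).exists_eq_C_mul h
  have hb₀ : b ≠ 0 := by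
    rintro rfl
    exact C_ne_zero.2 he (by simpa [homComp] using hb.symm)
  obtain ⟨k, δ, r, hk, rfl⟩ := exists_eq_of_homComp_eq (natDegree_lt_natDegree hb₀ hba) hdc he ha
    (hb.trans (mul_one _))
  have hr : r ≠ 0 := C_ne_zero.1 hb₀
  have hk₀ : k ≠ 0 := by
    rintro rfl
    rw [C_0, zero_mul] at hk
    exact ne_zero_of_degree_gt hba hk
  refine ⟨r⁻¹ * k, -(r⁻¹ * k * δ ^ p ^ 2), mul_ne_zero (inv_ne_zero hr) hk₀, ?_⟩
  have := hab.div_C hr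
  rw [hk, natDegree_a, sub_pow_char_pow] at this
  convert this using 1
  simp only [C_neg, C_mul, C_pow]
  ring

theorem HasXCoord.nsmul_nsmul {p : ℕ} [Fact p.Prime] [CharP F p] {m n M N i : ℕ} {c d c' d' : F}
    (h : HasXCoord (m • genericEndPoint W).1 (C c * X ^ M + C d) 1)
    (h' : HasXCoord (n • genericEndPoint W).1 (C c' * X ^ N + C d') 1) (hM : M = p ^ i) :
    HasXCoord ((m * n) • genericEndPoint W).1
      (C (c * c' ^ M) * X ^ (M * N) + C (c * d' ^ M + d)) 1 := by
  have hcomp := h.nsmul h' (h'.ne_zero one_ne_zero)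
  rw [homComp_one_right le_rfl, homComp_one_right (by simp), one_comp, ← mul_nsmul'] at hcomp
  subst hM
  convert hcomp using 1
  rw [mul_comm (p ^ i), pow_mul]
  simp only [add_comp, mul_comp, C_comp, X_pow_comp, add_pow_char_pow, mul_pow, C_add, C_mul,
    C_pow]
  ring

theorem exists_hasXCoord_char_pow_nsmul {p : ℕ} [Fact p.Prime] [CharP F p] {c d : F} (hc : c ≠ 0)
    (h : HasXCoord (p • genericEndPoint W).1 (C c * X ^ p ^ 2 + C d) 1) (k : ℕ) :
    ∃ c d : F, c ≠ 0 ∧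
      HasXCoord (p ^ k • genericEndPoint W).1 (C c * X ^ (p ^ k) ^ 2 + C d) 1 := by
  induction k with
  | zero =>
    exact ⟨1, 0, one_ne_zero, by simpa [genericEndPoint] using hasXCoord_genericPoint W⟩
  | succ k ih =>
    obtain ⟨c', d', hc', ih⟩ := ih
    have h' := ih.nsmul_nsmul h (pow_mul p k 2).symm
    rw [← pow_succ, ← mul_pow, ← pow_succ] at h'
    exact ⟨_, _, mul_ne_zero hc' (pow_ne_zero _ hc), h'⟩

variable [Fintype F]

theorem HasXCoord.card_pow_nsmul {c d : F}
    (h : HasXCoord (Fintype.card F • genericEndPoint W).1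
      (C c * X ^ Fintype.card F ^ 2 + C d) 1) (m : ℕ) :
    HasXCoord (Fintype.card F ^ m • genericEndPoint W).1
      (C (c ^ m) * X ^ Fintype.card F ^ (2 * m) + C (d * ∑ i ∈ Finset.range m, c ^ i)) 1 := by
  obtain ⟨p, hp⟩ := CharP.exists F
  have : Fact p.Prime := ⟨CharP.char_is_prime F p⟩
  obtain ⟨k, -, hk⟩ := FiniteField.card F p
  induction m with
  | zero => simpa [genericEndPoint] using hasXCoord_genericPoint W
  | succ m ih =>
    have h' := ih.nsmul_nsmul h (i := k * (2 * m)) (by rw [hk, ← pow_mul])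
    rw [FiniteField.pow_card_pow, FiniteField.pow_card_pow, ← pow_succ, ← pow_succ, ← pow_add] at h'
    rwa [Finset.sum_range_succ, mul_add d, add_comm (d * _), mul_comm d (c ^ m)]

theorem geom_sum_card_mul_card_sub_one_eq_zero {c : F} (hc : c ≠ 0) :
    ∑ i ∈ Finset.range (Fintype.card F * (Fintype.card F - 1)), c ^ i = 0 := by
  rcases eq_or_ne c 1 with rfl | hc₁
  · simp
  · refine (mul_eq_zero_iff_right (sub_ne_zero.2 hc₁)).1 ?_
    rw [geom_sum_mul, pow_mul', FiniteField.pow_card_sub_one_eq_one c hc, one_pow, sub_self]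

theorem hasXCoord_frobEnd_pow (n : ℕ) :
    HasXCoord ((frobEnd W ^ n) (genericEndPoint W)).1 (X ^ Fintype.card F ^ n) 1 := by
  induction n with
  | zero => simpa [genericEndPoint] using hasXCoord_genericPoint W
  | succ n ih =>
    simpa only [pow_succ', pow_mul', Module.End.mul_apply, one_pow] using ih.frobEnd

theorem exists_frobEnd_pow_eq {Q : endPoints W}
    (hQ : ringChar F • Q = frobEnd W (frobEnd W (genericEndPoint W))) :
    ∃ n : ℕ, n ≠ 0 ∧ (frobEnd W ^ (2 * n)) (genericEndPoint W) =
      Fintype.card F ^ n • genericEndPoint W := by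
  set p := ringChar F
  set q := Fintype.card F
  have : Fact p.Prime := ⟨CharP.char_is_prime F p⟩
  obtain ⟨k, -, hk⟩ := FiniteField.card F p
  obtain ⟨c₀, d₀, hc₀, h₀⟩ := exists_hasXCoord_char_nsmul (p := p) (hQ ▸ hasXCoord_frobEnd_pow 2)
  obtain ⟨c, d, hc, h⟩ := exists_hasXCoord_char_pow_nsmul hc₀ h₀ k
  rw [← hk] at h
  refine ⟨2 * (q * (q - 1)), mul_ne_zero two_ne_zero (mul_ne_zero Fintype.card_ne_zero
    (Nat.sub_ne_zero_of_lt Fintype.one_lt_card)), ?_⟩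
  have h_pow := h.card_pow_nsmul (q * (q - 1))
  rw [geom_sum_card_mul_card_sub_one_eq_zero hc, pow_mul' c,
    FiniteField.pow_card_sub_one_eq_one c hc, one_pow, mul_zero, C_0, C_1, add_zero,
    one_mul] at h_pow
  set m := q * (q - 1)
  set g := genericEndPoint W
  rw [two_mul (2 * m), pow_add, Module.End.mul_apply, two_mul m, pow_add q, mul_nsmul', ← two_mul]
  rcases (hasXCoord_frobEnd_pow (2 * m)).eq_or_eq_neg h_pow with hm | hm
  · rw [Subtype.ext hm, map_nsmul, Subtype.ext hm]
  · rw [← AddSubgroup.coe_neg] at hm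
    rw [Subtype.ext hm, map_neg, map_nsmul, Subtype.ext hm, smul_neg, neg_neg]

theorem pow_eq_pow_of_frobEnd_pow_eq {α : ℂ} (hα : aeval α (frobCharpoly W) = 0) {n : ℕ}
    (h : (frobEnd W ^ (2 * n)) (genericEndPoint W) = Fintype.card F ^ n • genericEndPoint W) :
    α ^ (2 * n) = (Fintype.card F : ℂ) ^ n := by
  set f : ℤ[X] := X ^ (2 * n) - C ((Fintype.card F : ℤ) ^ n) with hf
  have aeval_eq_zero : aeval (frobEnd W) f (genericEndPoint W) = 0 := by
    rw [hf, map_sub, map_pow, aeval_X, aeval_C, LinearMap.sub_apply, h,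
      Module.algebraMap_end_apply, ← Nat.cast_pow, natCast_zsmul, sub_self]
  have heightForm_eq := heightForm_aeval_frobEnd W hα f
  rw [aeval_eq_zero, QuadraticMap.map_zero, Int.cast_zero] at heightForm_eq
  simp only [hf, map_sub, map_pow, aeval_X, map_natCast] at heightForm_eq
  rcases mul_eq_zero.1 heightForm_eq.symm with hα_pow | hβ_pow
  · exact sub_eq_zero.1 hα_pow
  · have mul_conj : α * (frobTrace W - α) = Fintype.card F := by
      rw [aeval_frobCharpoly] at hα
      linear_combination -hα
    refine mul_right_cancel₀ (b := (Fintype.card F : ℂ) ^ n)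
      (pow_ne_zero _ (Nat.cast_ne_zero.2 Fintype.card_ne_zero)) ?_
    calc α ^ (2 * n) * (Fintype.card F : ℂ) ^ n
        = (α * (frobTrace W - α)) ^ (2 * n) := by rw [mul_pow, sub_eq_zero.1 hβ_pow]
      _ = (Fintype.card F : ℂ) ^ n * (Fintype.card F : ℂ) ^ n := by
        rw [mul_conj, two_mul, pow_add]

theorem exists_pow_eq_of_dvd_frobTrace (h : (ringChar F : ℤ) ∣ frobTrace W) {α : ℂ}
    (hα : aeval α (frobCharpoly W) = 0) :
    ∃ n : ℕ, n ≠ 0 ∧ α ^ (2 * n) = (Fintype.card F : ℂ) ^ n := by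
  obtain ⟨t, ht⟩ := h
  obtain ⟨k, -, hk⟩ := FiniteField.card F (ringChar F)
  obtain ⟨r, hr⟩ : ringChar F ∣ Fintype.card F := hk ▸ dvd_pow_self _ k.ne_zero
  set g := genericEndPoint W
  obtain ⟨n, hn, hfrob⟩ := exists_frobEnd_pow_eq (W := W) (Q := t • frobEnd W g - r • g) (by
    rw [frobEnd_frobEnd_genericEndPoint, ht, hr, smul_sub, mul_smul, mul_nsmul', natCast_zsmul])
  exact ⟨n, hn, pow_eq_pow_of_frobEnd_pow_eq hα hfrob⟩

end Supersingular

/-! ### The degree of `F - 1` counts the rational points -/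

section IntegralPoints

theorem slope_mul_sub_negY {K : Type*} [Field K] [DecidableEq K] {W : WeierstrassCurve.Affine K}
    {x₁ y₁ x₂ y₂ : K} (h₁ : W.Equation x₁ y₁) (h₂ : W.Equation x₂ y₂) (hx : x₁ ≠ x₂) :
    W.slope x₁ x₂ y₁ y₂ * (y₂ - W.negY x₁ y₁) =
      x₁ ^ 2 + x₁ * x₂ + x₂ ^ 2 + W.a₂ * (x₁ + x₂) + W.a₄ - W.a₁ * y₂ := by
  rw [equation_iff] at h₁ h₂
  have sub_ne_zero := sub_ne_zero.2 hx
  have slope_mul : W.slope x₁ x₂ y₁ y₂ * (x₁ - x₂) = y₁ - y₂ := by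
    rw [slope_of_X_ne hx, div_mul_cancel₀ _ sub_ne_zero]
  refine mul_right_cancel₀ sub_ne_zero ?_
  rw [negY]
  linear_combination (y₁ + y₂ + W.a₁ * x₁ + W.a₃) * slope_mul + h₁ - h₂

variable {F R K L : Type*} [Field F] [CommRing R] [Field K] [DecidableEq K] [Algebra F R]
  [Algebra F[X] R] [Algebra F K] [Algebra F[X] K] [Algebra R K] [IsScalarTower F R K]
  [IsScalarTower F[X] R K] [FaithfulSMul R K] {W : WeierstrassCurve.Affine F}

theorem HasXCoord.exists_mul_sq_eq_mul {ξ₁ η₁ ξ₂ η₂ : R} {x₁ y₁ x₂ y₂ : K} {a b : F[X]}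
    (hx₁ : algebraMap R K ξ₁ = x₁) (hy₁ : algebraMap R K η₁ = y₁)
    (hx₂ : algebraMap R K ξ₂ = x₂) (hy₂ : algebraMap R K η₂ = y₂)
    {h₁ : (W⁄K).Nonsingular x₁ y₁} {h₂ : (W⁄K).Nonsingular x₂ y₂} (hx : x₁ ≠ x₂)
    (h : HasXCoord (Point.some x₁ y₁ h₁ + .some x₂ y₂ h₂) a b) :
    ∃ ν : R, algebraMap F[X] R a *
        (η₁ + η₂ + algebraMap F R W.a₁ * ξ₁ + algebraMap F R W.a₃) ^ 2 =
      algebraMap F[X] R b * ν := by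
  rw [Point.add_of_X_ne hx, hasXCoord_some_iff] at h
  have slope_mul := slope_mul_sub_negY h₁.1 h₂.1 hx
  have map_a₁ : algebraMap R K (algebraMap F R W.a₁) = (W⁄K).a₁ :=
    (IsScalarTower.algebraMap_apply F R K _).symm
  have map_a₂ : algebraMap R K (algebraMap F R W.a₂) = (W⁄K).a₂ :=
    (IsScalarTower.algebraMap_apply F R K _).symm
  have map_a₃ : algebraMap R K (algebraMap F R W.a₃) = (W⁄K).a₃ :=
    (IsScalarTower.algebraMap_apply F R K _).symm
  have map_a₄ : algebraMap R K (algebraMap F R W.a₄) = (W⁄K).a₄ :=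
    (IsScalarTower.algebraMap_apply F R K _).symm
  subst hx₁ hy₁ hx₂ hy₂
  set δ := η₁ + η₂ + algebraMap F R W.a₁ * ξ₁ + algebraMap F R W.a₃ with hδ
  set ν := ξ₁ ^ 2 + ξ₁ * ξ₂ + ξ₂ ^ 2 + algebraMap F R W.a₂ * (ξ₁ + ξ₂) + algebraMap F R W.a₄ -
    algebraMap F R W.a₁ * η₂ with hν
  set l := (W⁄K).slope (algebraMap R K ξ₁) (algebraMap R K ξ₂) (algebraMap R K η₁)
    (algebraMap R K η₂)
  have slope_mul_eq : l * algebraMap R K δ = algebraMap R K ν := by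
    simp only [hδ, hν, map_add, map_sub, map_mul, map_pow, map_a₁, map_a₂, map_a₃, map_a₄]
    rw [negY] at slope_mul
    linear_combination slope_mul
  refine ⟨ν ^ 2 + algebraMap F R W.a₁ * ν * δ - (algebraMap F R W.a₂ + ξ₁ + ξ₂) * δ ^ 2,
    FaithfulSMul.algebraMap_injective R K ?_⟩
  simp only [map_add, map_sub, map_mul, map_pow, map_a₁, map_a₂,
    ← IsScalarTower.algebraMap_apply F[X] R K, h.2, addX, ← slope_mul_eq]
  ring

theorem HasXCoord.map_algebraMap_ne_zero [CommRing L] [IsDomain L]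
    {ξ₁ η₁ ξ₂ η₂ : R} {x₁ y₁ x₂ y₂ : K} {a b : F[X]}
    (hx₁ : algebraMap R K ξ₁ = x₁) (hy₁ : algebraMap R K η₁ = y₁)
    (hx₂ : algebraMap R K ξ₂ = x₂) (hy₂ : algebraMap R K η₂ = y₂)
    {h₁ : (W⁄K).Nonsingular x₁ y₁} {h₂ : (W⁄K).Nonsingular x₂ y₂} (hx : x₁ ≠ x₂)
    (h : HasXCoord (Point.some x₁ y₁ h₁ + .some x₂ y₂ h₂) a b) (f : R →+* L)
    (hf : f (η₁ + η₂ + algebraMap F R W.a₁ * ξ₁ + algebraMap F R W.a₃) ≠ 0) :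
    f (algebraMap F[X] R b) ≠ 0 := by
  intro hb
  obtain ⟨ν, hν⟩ := h.exists_mul_sq_eq_mul hx₁ hy₁ hx₂ hy₂ hx
  have ha := congr_arg f hν
  rw [map_mul, map_mul, hb, zero_mul, map_pow] at ha
  have coprime := (h.isCoprime.map (algebraMap F[X] R)).map f
  rw [hb, (mul_eq_zero.1 ha).resolve_right (pow_ne_zero 2 hf)] at coprime
  exact not_isCoprime_zero_zero coprime

end IntegralPoints

section RationalPoints

variable {F L : Type*} [Field F] [Fintype F] [Field L] [Algebra F L]
  (W : WeierstrassCurve.Affine F)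

theorem algebraMap_X_pow_card_ne :
    algebraMap F[X] W.FunctionField X ^ Fintype.card F ≠ algebraMap F[X] W.FunctionField X := by
  rw [← map_pow, (FaithfulSMul.algebraMap_injective F[X] W.FunctionField).ne_iff, ← sub_ne_zero]
  exact FiniteField.X_pow_card_sub_X_ne_zero F Fintype.one_lt_card

variable {W} [W.IsElliptic] [DecidableEq W.FunctionField] {a b : F[X]} {x₀ y₀ : L}

theorem aeval_ne_zero_of_frobEnd_add (h₀ : (W⁄L).Equation x₀ y₀)
    (h : HasXCoord (frobEnd W (genericEndPoint W) + genericEndPoint W).1 a b)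
    (hy : y₀ ^ Fintype.card F + y₀ + algebraMap F L W.a₁ * x₀ ^ Fintype.card F +
      algebraMap F L W.a₃ ≠ 0) : aeval x₀ b ≠ 0 := by
  obtain ⟨f, rfl, rfl⟩ := exists_coordinateRing_algHom h₀
  rw [← algHom_algebraMap_polynomial]
  refine h.map_algebraMap_ne_zero (ξ₁ := algebraMap F[X] W.CoordinateRing X ^ Fintype.card F)
    (η₁ := CoordinateRing.mk W X ^ Fintype.card F) (map_pow ..) (map_pow ..)
    (IsScalarTower.algebraMap_apply F[X] W.CoordinateRing W.FunctionField X).symm rfl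
    (algebraMap_X_pow_card_ne W) (f : W.CoordinateRing →+* L) ?_
  simpa using hy

theorem aeval_ne_zero_of_frobEnd_sub (h₀ : (W⁄L).Equation x₀ y₀)
    (h : HasXCoord (frobEnd W (genericEndPoint W) - genericEndPoint W).1 a b)
    (hx : x₀ ^ Fintype.card F = x₀) (hy : y₀ ^ Fintype.card F ≠ y₀) : aeval x₀ b ≠ 0 := by
  obtain ⟨f, rfl, rfl⟩ := exists_coordinateRing_algHom h₀
  rw [← algHom_algebraMap_polynomial]
  rw [sub_eq_add_neg] at h
  refine h.map_algebraMap_ne_zero (ξ₁ := algebraMap F[X] W.CoordinateRing X ^ Fintype.card F)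
    (η₁ := CoordinateRing.mk W X ^ Fintype.card F) (map_pow ..) (map_pow ..)
    (IsScalarTower.algebraMap_apply F[X] W.CoordinateRing W.FunctionField X).symm
    (η₂ := -CoordinateRing.mk W X - algebraMap F _ W.a₁ * algebraMap F[X] _ X - algebraMap F _ W.a₃)
    ?_ (algebraMap_X_pow_card_ne W) (f : W.CoordinateRing →+* L) ?_
  · simp only [map_sub, map_neg, map_mul, ← IsScalarTower.algebraMap_apply]
    rfl
  · rw [← sub_ne_zero] at hy
    convert hy using 1
    simp only [RingHom.coe_coe, map_add, map_sub, map_neg, map_mul, map_pow, AlgHom.commutes, hx]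
    ring

end RationalPoints

section Fibers

theorem equation_iff_eq_or_eq {F : Type*} [Field F] {W : WeierstrassCurve.Affine F} {x y₀ y : F}
    (h : W.Equation x y₀) : W.Equation x y ↔ y = y₀ ∨ y = W.negY x y₀ := by
  refine ⟨fun h' ↦ Y_eq_of_X_eq h' h rfl, ?_⟩
  rintro (rfl | rfl)
  exacts [h, (equation_neg ..).2 h]

theorem exists_equation {L : Type*} [Field L] [IsAlgClosed L] (W : WeierstrassCurve.Affine L)
    (x : L) : ∃ y, W.Equation x y := by
  obtain ⟨y, hy⟩ := IsAlgClosed.exists_root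
    (C 1 * X ^ 2 + C (W.a₁ * x + W.a₃) * X + C (-(x ^ 3 + W.a₂ * x ^ 2 + W.a₄ * x + W.a₆)))
    (by rw [degree_quadratic one_ne_zero]; decide)
  refine ⟨y, (W.equation_iff _ _).2 ?_⟩
  simp only [IsRoot, eval_add, eval_mul, eval_pow, eval_C, eval_X] at hy
  linear_combination hy

variable {F : Type*} [Field F] {W : WeierstrassCurve.Affine F} {x y : F}

theorem card_equation_of_eq (h : W.Equation x y) (hy : 2 * y + W.a₁ * x + W.a₃ = 0) :
    Nat.card {y : F // W.Equation x y} = 1 := by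
  rw [Nat.card_eq_one_iff_exists]
  refine ⟨⟨y, h⟩, fun ⟨y', h'⟩ ↦ Subtype.ext ?_⟩
  rcases (equation_iff_eq_or_eq h).1 h' with rfl | rfl
  · rfl
  · change -y - W.a₁ * x - W.a₃ = y
    linear_combination -hy

theorem card_equation_of_ne (h : W.Equation x y) (hy : 2 * y + W.a₁ * x + W.a₃ ≠ 0) :
    Nat.card {y : F // W.Equation x y} = 2 := by
  have ne_negY : y ≠ W.negY x y := fun h0 ↦ hy (by rw [negY] at h0; linear_combination h0)
  have eq_pair : {y' | W.Equation x y'} = {y, W.negY x y} :=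
    Set.ext fun y' ↦ equation_iff_eq_or_eq h
  change Nat.card {y' | W.Equation x y'} = 2
  rw [eq_pair, Nat.card_coe_set_eq, Set.ncard_pair ne_negY]

theorem card_point_eq [Fintype F] [W.IsElliptic] :
    Nat.card W.Point = ∑ x : F, Nat.card {y : F // W.Equation x y} + 1 := by
  have card_pairs : Nat.card {xy : F × F // W.Equation xy.1 xy.2} =
      ∑ x : F, Nat.card {y : F // W.Equation x y} := by
    rw [← Nat.card_sigma]
    exact Nat.card_congr (Equiv.subtypeProdEquivSigmaSubtype fun x y ↦ W.Equation x y)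
  rw [Nat.card_congr W.pointEquiv, ← card_pairs]
  exact Finite.card_option

end Fibers

section FixedPolynomial

variable {F : Type*} [Field F] [Fintype F]

theorem splits_X_pow_card_sub_X : (X ^ Fintype.card F - X : F[X]).Splits := by
  simpa only [Nat.card_eq_fintype_card] using splits_X_pow_nat_card_sub_X (K := F)

theorem exists_algebraMap_eq_of_pow_card_eq {L : Type*} [Field L] [Algebra F L] {y : L}
    (h : y ^ Fintype.card F = y) : ∃ a : F, algebraMap F L a = y :=
  splits_X_pow_card_sub_X.mem_range_of_isRoot
    (FiniteField.X_pow_card_sub_X_ne_zero F Fintype.one_lt_card) (i := algebraMap F L) (x := y)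
    (by simp [IsRoot, h])

theorem rootMultiplicity_X_pow_card_sub_X (x : F) :
    rootMultiplicity x (X ^ Fintype.card F - X : F[X]) = 1 := by
  classical
  rw [← count_roots, FiniteField.roots_X_pow_card_sub_X]
  exact Multiset.count_eq_one_of_mem Finset.univ.nodup (Finset.mem_univ x)

theorem natDegree_eq_sum_rootMultiplicity {f : F[X]} (hf : f.Splits) :
    f.natDegree = ∑ x, rootMultiplicity x f := by
  classical
  simp_rw [hf.natDegree_eq_card_roots, ← count_roots]
  exact (Multiset.sum_count_eq_card fun a _ ↦ Finset.mem_univ a).symm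

end FixedPolynomial

section Counting

variable {F : Type*} [Field F] [Fintype F] {W : WeierstrassCurve.Affine F} [W.IsElliptic]
  [DecidableEq W.FunctionField] {a b a' b' : F[X]}

theorem rootMultiplicity_eq_zero_of_forall_not_equation
    (h : HasXCoord (frobEnd W (genericEndPoint W) - genericEndPoint W).1 a b) {x : F}
    (hx : ∀ y, ¬W.Equation x y) : rootMultiplicity x b = 0 := by
  obtain ⟨y, hy⟩ := exists_equation (W⁄(AlgebraicClosure F)) (algebraMap F _ x)
  have aeval_ne_zero : aeval (algebraMap F (AlgebraicClosure F) x) b ≠ 0 := by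
    refine aeval_ne_zero_of_frobEnd_sub hy h (by rw [← map_pow, FiniteField.pow_card]) fun hy' ↦ ?_
    obtain ⟨y, rfl⟩ := exists_algebraMap_eq_of_pow_card_eq hy'
    exact hx y ((W.map_equation (algebraMap F (AlgebraicClosure F)).injective ..).1 hy)
  rw [aeval_algebraMap_apply, Ne, FaithfulSMul.algebraMap_eq_zero_iff] at aeval_ne_zero
  exact rootMultiplicity_eq_zero aeval_ne_zero

section TraceFormula

variable (h : HasXCoord (frobEnd W (genericEndPoint W) - genericEndPoint W).1 a b)
  (h' : HasXCoord (frobEnd W (genericEndPoint W) + genericEndPoint W).1 a' b')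

include h h'

theorem exists_sq_X_pow_card_sub_X_eq : ∃ e : F, e ≠ 0 ∧
    (X ^ Fintype.card F - X : F[X]) ^ 2 = C e * (b' * b) ∧
    ∀ x y : F, W.Equation x y → (2 * y + W.a₁ * x + W.a₃) ^ 2 =
      e * (a'.eval x * b.eval x + b'.eval x * a.eval x) := by
  obtain ⟨e, he, eq_smul⟩ := (hasXCoord_genericPoint W).map_frobenius.exists_addSub_eq_smul
    (hasXCoord_genericPoint W) h' h
  simp only [addSub_eq, symProd, Matrix.smul_vec3] at eq_smul
  refine ⟨e, he, ?_, fun x y hxy ↦ ?_⟩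
  · have := congr_fun eq_smul 2
    simp only [Matrix.cons_val, one_pow, mul_one, one_mul, smul_eq_mul] at this
    linear_combination this
  · have := congr_arg (eval x) (congr_fun eq_smul 1)
    have hx : x ^ Fintype.card F = x := FiniteField.pow_card x
    simp only [Matrix.cons_val, map_b₂, map_b₄, map_b₆, one_pow, mul_one, one_mul, smul_eq_mul,
      eval_add, eval_mul, eval_ofNat, eval_pow, eval_X, eval_C, hx] at this
    rw [← this, b₂, b₄, b₆]
    rw [equation_iff] at hxy
    linear_combination 4 * hxy

theorem denominators_ne_zero : b ≠ 0 ∧ b' ≠ 0 := by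
  obtain ⟨e, -, sq_eq, -⟩ := exists_sq_X_pow_card_sub_X_eq h h'
  have mul_ne_zero : C e * (b' * b) ≠ 0 := sq_eq ▸
    pow_ne_zero 2 (FiniteField.X_pow_card_sub_X_ne_zero F Fintype.one_lt_card)
  have := right_ne_zero_of_mul mul_ne_zero
  exact ⟨right_ne_zero_of_mul this, left_ne_zero_of_mul this⟩

theorem rootMultiplicity_add_rootMultiplicity (x : F) :
    rootMultiplicity x b' + rootMultiplicity x b = 2 := by
  obtain ⟨e, he, sq_eq, -⟩ := exists_sq_X_pow_card_sub_X_eq h h'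
  obtain ⟨hb, hb'⟩ := denominators_ne_zero h h'
  have hX := FiniteField.X_pow_card_sub_X_ne_zero F (Fintype.one_lt_card (α := F))
  have := congr_arg (rootMultiplicity x) sq_eq
  rwa [rootMultiplicity_mul (mul_ne_zero (C_ne_zero.2 he) (mul_ne_zero hb' hb)),
    rootMultiplicity_C, zero_add, rootMultiplicity_mul (mul_ne_zero hb' hb), sq,
    rootMultiplicity_mul (mul_ne_zero hX hX), rootMultiplicity_X_pow_card_sub_X, eq_comm] at this

theorem eval_eq_zero_iff_of_two_torsion {x y : F} (hxy : W.Equation x y)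
    (hy : 2 * y + W.a₁ * x + W.a₃ = 0) : b.eval x = 0 ↔ b'.eval x = 0 := by
  have eval_ne_zero {c d : F[X]} (hcd : IsCoprime c d) (hd : d.eval x = 0) : c.eval x ≠ 0 :=
    fun hc ↦ not_isCoprime_zero_zero (R := F) (by simpa [hc, hd] using hcd.map (evalRingHom x))
  obtain ⟨e, he, -, eval_eq⟩ := exists_sq_X_pow_card_sub_X_eq h h'
  have sum_eq_zero := eval_eq x y hxy
  rw [hy, zero_pow two_ne_zero, eq_comm, mul_eq_zero, or_iff_right he] at sum_eq_zero
  refine ⟨fun hb ↦ ?_, fun hb' ↦ ?_⟩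
  · rw [hb, mul_zero, zero_add, mul_eq_zero] at sum_eq_zero
    exact sum_eq_zero.resolve_right (eval_ne_zero h.isCoprime hb)
  · rw [hb', zero_mul, add_zero, mul_eq_zero] at sum_eq_zero
    exact sum_eq_zero.resolve_left (eval_ne_zero h'.isCoprime hb')

theorem rootMultiplicity_eq_one {x y : F} (hxy : W.Equation x y)
    (hy : 2 * y + W.a₁ * x + W.a₃ = 0) : rootMultiplicity x b = 1 := by
  obtain ⟨hb, hb'⟩ := denominators_ne_zero h h'
  have pos_iff : 0 < rootMultiplicity x b ↔ 0 < rootMultiplicity x b' := by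
    rw [rootMultiplicity_pos hb, rootMultiplicity_pos hb']
    exact eval_eq_zero_iff_of_two_torsion h h' hxy hy
  have := rootMultiplicity_add_rootMultiplicity h h' x
  lia

theorem rootMultiplicity_eq_two {x y : F} (hxy : W.Equation x y)
    (hy : 2 * y + W.a₁ * x + W.a₃ ≠ 0) : rootMultiplicity x b = 2 := by
  have eval_ne_zero : aeval x b' ≠ 0 := by
    refine aeval_ne_zero_of_frobEnd_add (y₀ := y)
      ((W.map_equation (algebraMap F F).injective ..).2 hxy) h' ?_
    rw [FiniteField.pow_card, FiniteField.pow_card, ← two_mul]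
    exact hy
  have := rootMultiplicity_add_rootMultiplicity h h' x
  rwa [rootMultiplicity_eq_zero eval_ne_zero, zero_add] at this

theorem rootMultiplicity_eq_card (x : F) :
    rootMultiplicity x b = Nat.card {y : F // W.Equation x y} := by
  by_cases hx : ∃ y, W.Equation x y
  · obtain ⟨y, hxy⟩ := hx
    by_cases hy : 2 * y + W.a₁ * x + W.a₃ = 0
    · rw [card_equation_of_eq hxy hy, rootMultiplicity_eq_one h h' hxy hy]
    · rw [card_equation_of_ne hxy hy, rootMultiplicity_eq_two h h' hxy hy]
  · rw [not_exists] at hx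
    have : IsEmpty {y : F // W.Equation x y} := ⟨fun y ↦ hx y.1 y.2⟩
    rw [Nat.card_of_isEmpty, rootMultiplicity_eq_zero_of_forall_not_equation h hx]

theorem natDegree_eq_natDegree_add_one : a.natDegree = b.natDegree + 1 := by
  obtain ⟨e, he, sq_eq, -⟩ := exists_sq_X_pow_card_sub_X_eq h h'
  obtain ⟨hb, hb'⟩ := denominators_ne_zero h h'
  have natDegree_eq := congr_arg natDegree sq_eq
  rw [natDegree_C_mul he, natDegree_mul hb' hb, natDegree_pow,
    FiniteField.X_pow_card_sub_X_natDegree_eq F Fintype.one_lt_card] at natDegree_eq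
  have heightForm_sub := heightForm_frobEnd_sub W
  have heightForm_add := heightForm_frobEnd_add W
  rw [heightForm_apply, h.height_eq] at heightForm_sub
  rw [heightForm_apply, h'.height_eq] at heightForm_add
  have hba := natDegree_lt_natDegree hb h.degree_lt
  have hba' := natDegree_lt_natDegree hb' h'.degree_lt
  lia

end TraceFormula

variable (W) in
theorem heightForm_frobEnd_sub_eq_card :
    heightForm W (frobEnd W (genericEndPoint W) - genericEndPoint W) = Nat.card W.Point := by
  obtain ⟨-, a, b, h, -⟩ := (frobEnd W (genericEndPoint W) - genericEndPoint W).2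
  obtain ⟨-, a', b', h', -⟩ := (frobEnd W (genericEndPoint W) + genericEndPoint W).2
  obtain ⟨e, -, sq_eq, -⟩ := exists_sq_X_pow_card_sub_X_eq h h'
  have splits : b.Splits := (splits_X_pow_card_sub_X.pow 2).of_dvd
    (pow_ne_zero 2 (FiniteField.X_pow_card_sub_X_ne_zero F Fintype.one_lt_card))
    (sq_eq ▸ (dvd_mul_left b b').mul_left _)
  rw [heightForm_apply, h.height_eq, natDegree_eq_natDegree_add_one h h',
    natDegree_eq_sum_rootMultiplicity splits, card_point_eq]
  simp_rw [rootMultiplicity_eq_card h h']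

variable (W) in
theorem frobTrace_eq : frobTrace W = Fintype.card F + 1 - Nat.card W.Point := by
  rw [← heightForm_frobEnd_sub_eq_card, heightForm_frobEnd_sub, sub_sub_cancel]

end Counting

/-! ### Roots of the characteristic polynomial -/

section PowerSums

theorem exists_int_pow_add_pow_eq {A : Type*} [CommRing A] {t q p : ℤ} (hpq : p ∣ q) {α β : A}
    (hadd : α + β = t) (hmul : α * β = q) (m : ℕ) :
    ∃ s s' : ℤ, α ^ m + β ^ m = s ∧ α ^ (m + 1) + β ^ (m + 1) = s' ∧ p ∣ s' - t ^ (m + 1) := by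
  induction m with
  | zero => exact ⟨2, t, by norm_num, by simpa using hadd, by simp⟩
  | succ m ih =>
    obtain ⟨s, s', h, h', hd⟩ := ih
    refine ⟨s', t * s' - q * s, h', ?_, ?_⟩
    · push_cast
      rw [← h, ← h', ← hadd, ← hmul]
      ring
    · rw [show t * s' - q * s - t ^ (m + 1 + 1) = t * (s' - t ^ (m + 1)) - q * s by ring]
      exact dvd_sub (hd.mul_left t) (hpq.mul_right s)

theorem dvd_of_pow_two_mul_eq {A : Type*} [CommRing A] [IsDomain A] [CharZero A] {t q p : ℤ}
    (hp : Prime p) (hpq : p ∣ q) {α : A} (hα : α ^ 2 - t * α + q = 0) (hq : q ≠ 0) {n : ℕ}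
    (hn : n ≠ 0) (h : α ^ (2 * n) = q ^ n) : p ∣ t := by
  have mul_conj : α * (t - α) = q := by linear_combination -hα
  have conj_pow : (t - α) ^ (2 * n) = q ^ n := by
    refine mul_left_cancel₀ (pow_ne_zero n (Int.cast_ne_zero.2 hq)) ?_
    rw [← h, ← mul_pow, mul_conj, h, pow_mul, sq, mul_pow]
  obtain ⟨m, hm⟩ : ∃ m, 2 * n = m + 1 := ⟨2 * n - 1, by lia⟩
  obtain ⟨-, s, -, hs, hd⟩ := exists_int_pow_add_pow_eq hpq (add_sub_cancel α _) mul_conj m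
  rw [← hm, h, conj_pow] at hs
  have s_eq : s = 2 * q ^ n := by exact_mod_cast (hs.symm.trans (two_mul _).symm)
  have dvd_s : p ∣ s := s_eq ▸ (dvd_pow hpq hn).mul_left 2
  exact hp.dvd_of_dvd_pow ((dvd_sub_right dvd_s).1 hd)

theorem div_sqrt_pow_two_mul_eq_one_iff {q : ℕ} (hq : q ≠ 0) (α : ℂ) (n : ℕ) :
    (α / (Real.sqrt q : ℂ)) ^ (2 * n) = 1 ↔ α ^ (2 * n) = q ^ n := by
  have sq_sqrt : (Real.sqrt q : ℂ) ^ 2 = q := by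
    rw [← Complex.ofReal_pow, Real.sq_sqrt q.cast_nonneg, Complex.ofReal_natCast]
  rw [div_pow, pow_mul (Real.sqrt q : ℂ), sq_sqrt,
    div_eq_one_iff_eq (pow_ne_zero _ (Nat.cast_ne_zero.2 hq))]

theorem exists_div_sqrt_pow_eq_one_iff {q : ℕ} (hq : q ≠ 0) (α : ℂ) :
    (∃ n : ℕ, 0 < n ∧ (α / (Real.sqrt q : ℂ)) ^ n = 1) ↔ ∃ n : ℕ, n ≠ 0 ∧ α ^ (2 * n) = q ^ n := by
  simp only [← div_sqrt_pow_two_mul_eq_one_iff hq]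
  constructor
  · rintro ⟨n, hn, h⟩
    exact ⟨n, hn.ne', by rw [pow_mul', h, one_pow]⟩
  · rintro ⟨n, hn, h⟩
    exact ⟨2 * n, by lia, h⟩

end PowerSums

end SupersingularFrobenius

/-- Let `E` be an elliptic curve over a finite field `F_q`, `t = q + 1 - #E(F_q)` the
trace of Frobenius, and `α ∈ ℂ` a root of `T² - tT + q`. Then `α/√q` is a root of
unity if and only if `E` is supersingular, i.e. `p ∣ t` where `p = char F_q`. -/
theorem frobenius_root_div_sqrt_is_root_of_unity_iff_supersingular
    {F : Type*} [Field F] [Fintype F] (W : WeierstrassCurve F) [W.IsElliptic]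
    (q : ℕ) (hq : q = Fintype.card F)
    (t : ℤ) (ht : t = (q : ℤ) + 1 - Nat.card W.toAffine.Point)
    (α : ℂ) (hα : α ^ 2 - (t : ℂ) * α + (q : ℂ) = 0) :
    (∃ n : ℕ, 0 < n ∧ (α / (Real.sqrt q : ℂ)) ^ n = 1) ↔ (ringChar F : ℤ) ∣ t := by
  classical
  subst hq
  rw [SupersingularFrobenius.exists_div_sqrt_pow_eq_one_iff Fintype.card_ne_zero]
  obtain ⟨k, hp, hk⟩ := FiniteField.card F (ringChar F)
  have t_eq : t = SupersingularFrobenius.frobTrace W.toAffine :=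
    ht.trans (SupersingularFrobenius.frobTrace_eq W.toAffine).symm
  constructor
  · rintro ⟨n, hn, h⟩
    have p_dvd : (ringChar F : ℤ) ∣ (Fintype.card F : ℤ) :=
      Int.natCast_dvd_natCast.2 (hk ▸ dvd_pow_self _ k.ne_zero)
    exact SupersingularFrobenius.dvd_of_pow_two_mul_eq (α := α) (Nat.prime_iff_prime_int.1 hp)
      p_dvd (by exact_mod_cast hα) (Nat.cast_ne_zero.2 Fintype.card_ne_zero) hn
      (by exact_mod_cast h)
  · intro hpt
    refine SupersingularFrobenius.exists_pow_eq_of_dvd_frobTrace (t_eq ▸ hpt) ?_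
    rw [SupersingularFrobenius.aeval_frobCharpoly, ← t_eq]
    exact hα
end

section
/- Let E/F_q be an ordinary elliptic curve, let t_{q^r} = q^r + 1 − #E(F_{q^r}), and set x_r = t_{q^r}/q^{r/2}. Then the sequence (x_r)_{r≥1} is equidistributed in [−2, 2] with respect to the measure (1/π) dz/√(4 − z²). -/
open Real Filter

/-!
The Frobenius image `P = (X ^ q, Y ^ q)` of the tautological point `Q = (X, Y)` is a point of `E`
over its own function field. Represent the `x`-coordinate of each point `P + n • Q` by a pair of
coprime polynomials in `X`; the larger of their degrees obeys the parallelogram law, so for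
`P + n • Q` it equals `n ^ 2 + t * n + q`, the value at `n = -1` being the number of rational
points. Nonnegativity of this quadratic form gives `t ^ 2 ≤ 4 * q`, up to an exceptional case with
`q = 2` which the bounds `0 < #E ≤ 2 * q + 1` rule out, and ordinarity makes the inequality strict.
Hence `α` and `β` are complex conjugates `√q * exp (± i θ)` and `x r = 2 * cos (r * θ)`. Modulo the
characteristic, `α ^ r + β ^ r` is `t ^ r ≠ 0`, which prevents `α / β` from being a root of unity,
so the averages of `cos (k * r * θ)` tend to `0` for `k ≠ 0`. This is Weyl's criterion for the
Chebyshev polynomials, which are orthogonal for the arcsine measure.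
-/

section AdditionFormulas

open WeierstrassCurve WeierstrassCurve.Affine

/-- The numerator of the `x`-coordinate of `(x₁, y₁) + (x₂, y₂)` over the denominator
`(x₁ - x₂) ^ 2`. -/
def addXNum {R : Type*} [CommRing R] (W : Affine R) (x₁ x₂ y₁ y₂ : R) : R :=
  (y₁ - y₂) ^ 2 + W.a₁ * (y₁ - y₂) * (x₁ - x₂) - (W.a₂ + x₁ + x₂) * (x₁ - x₂) ^ 2

/-- The coefficients of the product of the linear forms with coefficients `v` and `w`. They are the
coordinates of the unordered pair `{v, w}` on the symmetric square of the projective line. -/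
def symVec {R : Type*} [CommRing R] (v w : Fin 2 → R) : Fin 3 → R :=
  ![v 0 * w 0, v 0 * w 1 + v 1 * w 0, v 1 * w 1]

/-- The quadratic map `addSubMap` as a function on vectors. It sends the symmetric product of the
`x`-coordinates of `P` and `Q` to that of `P + Q` and `P - Q`, up to scaling. -/
noncomputable def addSubVec {R : Type*} [CommRing R] (W : WeierstrassCurve R) (x : Fin 3 → R) :
    Fin 3 → R :=
  fun i ↦ (W.addSubMap i).eval x

section CommRing

variable {R S : Type*} [CommRing R] [CommRing S] (φ : R →+* S)

lemma map_addXNum (W : Affine R) (x₁ x₂ y₁ y₂ : R) :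
    φ (addXNum W x₁ x₂ y₁ y₂) =
      addXNum (WeierstrassCurve.map W φ).toAffine (φ x₁) (φ x₂) (φ y₁) (φ y₂) := by
  simp only [addXNum, map_sub, map_add, map_mul, map_pow, map_a₁, map_a₂]

lemma addXNum_negY_left (W : Affine R) (x₁ x₂ y₁ y₂ : R) :
    addXNum W x₁ x₂ (W.negY x₁ y₁) y₂ = addXNum W x₁ x₂ y₁ (W.negY x₂ y₂) := by
  simp only [addXNum, negY]
  ring

lemma addXNum_self (W : Affine R) (x y₁ y₂ : R) : addXNum W x x y₁ y₂ = (y₁ - y₂) ^ 2 := by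
  rw [addXNum]
  ring

lemma addXNum_add_addXNum_negY {W : Affine R} {x₁ x₂ y₁ y₂ : R} (h₁ : W.Equation x₁ y₁)
    (h₂ : W.Equation x₂ y₂) :
    addXNum W x₁ x₂ y₁ y₂ + addXNum W x₁ x₂ y₁ (W.negY x₂ y₂) =
      2 * (x₁ + x₂) * (x₁ * x₂) + W.b₂ * (x₁ * x₂) + W.b₄ * (x₁ + x₂) + W.b₆ := by
  rw [equation_iff] at h₁ h₂
  rw [addXNum, addXNum, negY, b₂, b₄, b₆]
  linear_combination 2 * h₁ + 2 * h₂

lemma addXNum_mul_addXNum_negY {W : Affine R} {x₁ x₂ y₁ y₂ : R} (h₁ : W.Equation x₁ y₁)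
    (h₂ : W.Equation x₂ y₂) :
    addXNum W x₁ x₂ y₁ y₂ * addXNum W x₁ x₂ y₁ (W.negY x₂ y₂) =
      ((x₁ * x₂) ^ 2 - W.b₄ * (x₁ * x₂) - W.b₆ * (x₁ + x₂) - W.b₈) * (x₁ - x₂) ^ 2 := by
  rw [equation_iff] at h₁ h₂
  set M := x₁ * x₂ * (x₁ + x₂) + 2 * W.a₂ * x₁ * x₂ + W.a₄ * (x₁ + x₂) + 2 * W.a₆
  set Z := 2 * y₁ * y₂ + (W.a₁ * x₂ + W.a₃) * y₁ + (W.a₁ * x₁ + W.a₃) * y₂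
  have hadd : addXNum W x₁ x₂ y₁ y₂ = M - Z := by
    rw [addXNum]
    linear_combination h₁ + h₂
  have hsub : addXNum W x₁ x₂ y₁ (W.negY x₂ y₂) =
      M + (W.a₁ * x₁ + W.a₃) * (W.a₁ * x₂ + W.a₃) + Z := by
    rw [addXNum, negY]
    linear_combination h₁ + h₂
  have hZZ : Z * (Z + (W.a₁ * x₁ + W.a₃) * (W.a₁ * x₂ + W.a₃)) =
      4 * (x₁ ^ 3 + W.a₂ * x₁ ^ 2 + W.a₄ * x₁ + W.a₆) *
        (x₂ ^ 3 + W.a₂ * x₂ ^ 2 + W.a₄ * x₂ + W.a₆) +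
      (W.a₁ * x₂ + W.a₃) ^ 2 * (x₁ ^ 3 + W.a₂ * x₁ ^ 2 + W.a₄ * x₁ + W.a₆) +
      (W.a₁ * x₁ + W.a₃) ^ 2 * (x₂ ^ 3 + W.a₂ * x₂ ^ 2 + W.a₄ * x₂ + W.a₆) := by
    rw [← h₁, ← h₂]
    ring
  rw [hadd, hsub, b₄, b₆, b₈]
  linear_combination -hZZ

lemma symVec_smul_smul (a b : R) (v w : Fin 2 → R) :
    symVec (a • v) (b • w) = (a * b) • symVec v w := by
  simp only [symVec, Pi.smul_apply, smul_eq_mul, Matrix.smul_vec3]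
  refine Matrix.vec3_eq ?_ ?_ ?_ <;> ring

lemma map_symVec (v w : Fin 2 → R) : φ ∘ symVec v w = symVec (φ ∘ v) (φ ∘ w) := by
  ext i
  fin_cases i <;> simp [symVec]

lemma symVec_ne_zero [NoZeroDivisors R] {v w : Fin 2 → R} (hv : v ≠ 0) (hw : w ≠ 0) :
    symVec v w ≠ 0 := by
  intro h
  have h₀ : v 0 * w 0 = 0 := congr_fun h 0
  have h₁ : v 0 * w 1 + v 1 * w 0 = 0 := congr_fun h 1
  have h₂ : v 1 * w 1 = 0 := congr_fun h 2
  simp only [Function.ne_iff, Fin.exists_fin_two, Pi.zero_apply] at hv hw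
  grind [mul_eq_zero]

lemma addSubVec_eq (W : WeierstrassCurve R) (x : Fin 3 → R) : addSubVec W x =
    ![x 0 ^ 2 - W.b₄ * (x 0 * x 2) - W.b₆ * (x 1 * x 2) - W.b₈ * x 2 ^ 2,
      2 * (x 1 * x 0) + W.b₂ * (x 0 * x 2) + W.b₄ * (x 1 * x 2) + W.b₆ * x 2 ^ 2,
      x 1 ^ 2 - 4 * (x 0 * x 2)] := by
  ext i
  fin_cases i <;> simp [addSubVec, addSubMap, mul_assoc]

lemma addSubVec_ne_zero [IsReduced R] (W : WeierstrassCurve R) [W.IsElliptic] {x : Fin 3 → R}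
    (hx : x ≠ 0) : addSubVec W x ≠ 0 :=
  W.addSubMap_ne_zero hx

lemma addSubVec_smul (W : WeierstrassCurve R) (a : R) (x : Fin 3 → R) :
    addSubVec W (a • x) = a ^ 2 • addSubVec W x := by
  simp only [addSubVec_eq, Pi.smul_apply, smul_eq_mul, Matrix.smul_vec3]
  refine Matrix.vec3_eq ?_ ?_ ?_ <;> ring

lemma map_addSubVec (W : WeierstrassCurve R) (x : Fin 3 → R) :
    φ ∘ addSubVec W x = addSubVec (W.map φ) (φ ∘ x) := by
  ext i
  fin_cases i <;> simp [addSubVec_eq, map_ofNat]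

end CommRing

section Field

variable {K : Type*} [Field K] {W : Affine K}

lemma addSubVec_sym2x_zero (P : W.Point) : addSubVec W (P.sym2x 0) = P.sym2x P := by
  rcases P with _ | ⟨x, y, h⟩
  · ext i
    fin_cases i <;> simp [addSubVec_eq, ← Point.zero_def]
  · ext i
    fin_cases i <;> simp [addSubVec_eq, sq, two_mul]

lemma addSubVec_sym2x_some_self {x y : K} (h : W.Nonsingular x y) :
    addSubVec W ((Point.some x y h).sym2x (Point.some x y h)) =
      ![x ^ 4 - W.b₄ * x ^ 2 - 2 * W.b₆ * x - W.b₈, (y - W.negY x y) ^ 2, 0] := by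
  have hxy := (equation_iff x y).1 h.1
  rw [addSubVec_eq, Point.sym2x_some_some]
  refine Matrix.vec3_eq ?_ ?_ ?_ <;>
    simp only [negY, b₂, b₄, b₆, Matrix.cons_val]
  · ring
  · linear_combination -4 * hxy
  · ring

variable [DecidableEq K] {x₁ x₂ : K}

lemma addX_mul_sub_sq (y₁ y₂ : K) (hx : x₁ ≠ x₂) :
    W.addX x₁ x₂ (W.slope x₁ x₂ y₁ y₂) * (x₁ - x₂) ^ 2 = addXNum W x₁ x₂ y₁ y₂ := by
  have := sub_ne_zero.2 hx
  rw [addX, slope_of_X_ne hx, addXNum]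
  field_simp
  ring

lemma addX_self_mul_sub_negY_sq {x y : K} (h : W.Equation x y) (hy : y ≠ W.negY x y) :
    W.addX x x (W.slope x x y y) * (y - W.negY x y) ^ 2 =
      x ^ 4 - W.b₄ * x ^ 2 - 2 * W.b₆ * x - W.b₈ := by
  have hy₀ := sub_ne_zero.2 hy
  rw [equation_iff] at h
  rw [slope_of_Y_ne rfl hy, addX, b₄, b₆, b₈]
  field_simp
  rw [negY]
  linear_combination -(W.a₁ ^ 2 + 4 * W.a₂ + 8 * x) * h

lemma exists_addSubVec_sym2x_self [W.IsElliptic] (P : W.Point) :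
    ∃ c : K, c ≠ 0 ∧ addSubVec W (P.sym2x P) = c • (P + P).sym2x 0 := by
  rcases P with _ | ⟨x, y, h⟩
  · rw [← Point.zero_def, add_zero]
    exact ⟨1, one_ne_zero, by rw [addSubVec_sym2x_zero, one_smul]⟩
  · have hne := addSubVec_ne_zero W (Point.sym2x_ne_zero (.some x y h) (.some x y h))
    rw [addSubVec_sym2x_some_self] at hne ⊢
    by_cases hy : y = W.negY x y
    · rw [sub_eq_zero.2 hy, zero_pow two_ne_zero] at hne ⊢
      refine ⟨x ^ 4 - W.b₄ * x ^ 2 - 2 * W.b₆ * x - W.b₈, fun h₀ ↦ hne (by simp [h₀]), ?_⟩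
      rw [Point.add_self_of_Y_eq hy, Point.sym2x_zero_zero, Matrix.smul_vec3]
      simp only [smul_eq_mul, mul_one, mul_zero]
    · refine ⟨_, pow_ne_zero 2 (sub_ne_zero.2 hy), ?_⟩
      rw [Point.add_self_of_Y_ne hy, Point.sym2x_some_zero, Matrix.smul_vec3,
        ← addX_self_mul_sub_negY_sq h.1 hy]
      refine Matrix.vec3_eq (mul_comm _ _) (mul_one _).symm (mul_zero _).symm

lemma addSubVec_sym2x_some_some {y₁ y₂ : K} (h₁ : W.Nonsingular x₁ y₁) (h₂ : W.Nonsingular x₂ y₂)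
    (hx : x₁ ≠ x₂) : addSubVec W ((Point.some x₁ y₁ h₁).sym2x (Point.some x₂ y₂ h₂)) =
      (x₁ - x₂) ^ 2 • (Point.some x₁ y₁ h₁ + Point.some x₂ y₂ h₂).sym2x
        (Point.some x₁ y₁ h₁ - Point.some x₂ y₂ h₂) := by
  have hmul := addXNum_mul_addXNum_negY h₁.1 h₂.1
  have hadd := addXNum_add_addXNum_negY h₁.1 h₂.1
  rw [← addX_mul_sub_sq y₁ _ hx, ← addX_mul_sub_sq y₁ _ hx] at hmul hadd
  rw [sub_eq_add_neg (Point.some _ _ _), Point.neg_some, Point.add_of_X_ne hx,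
    Point.add_of_X_ne hx, addSubVec_eq, Point.sym2x_some_some, Point.sym2x_some_some,
    Matrix.smul_vec3]
  refine Matrix.vec3_eq ?_ ?_ ?_ <;> simp only [Matrix.cons_val, smul_eq_mul]
  · exact mul_right_cancel₀ (pow_ne_zero 2 (sub_ne_zero.2 hx)) (by linear_combination -hmul)
  · linear_combination -hadd
  · ring

theorem exists_addSubVec_sym2x [W.IsElliptic] (P Q : W.Point) :
    ∃ c : K, c ≠ 0 ∧ addSubVec W (P.sym2x Q) = c • (P + Q).sym2x (P - Q) := by
  rcases P with _ | ⟨x₁, y₁, h₁⟩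
  · rw [← Point.zero_def, zero_add, zero_sub, Point.sym2x_neg_right, Point.sym2x_comm,
      addSubVec_sym2x_zero]
    exact ⟨1, one_ne_zero, (one_smul _ _).symm⟩
  rcases Q with _ | ⟨x₂, y₂, h₂⟩
  · rw [← Point.zero_def, add_zero, sub_zero, addSubVec_sym2x_zero]
    exact ⟨1, one_ne_zero, (one_smul _ _).symm⟩
  by_cases hx : x₁ = x₂
  · rcases Point.X_eq_iff.1 hx with h | h
    · rw [h, sub_self]
      exact exists_addSubVec_sym2x_self _
    · rw [h, Point.sym2x_neg_left, neg_add_cancel, ← neg_add', Point.sym2x_neg_right,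
        Point.sym2x_comm 0]
      exact exists_addSubVec_sym2x_self _
  · exact ⟨_, pow_ne_zero 2 (sub_ne_zero.2 hx), addSubVec_sym2x_some_some h₁ h₂ hx⟩

end Field
end AdditionFormulas

section Unimodular

variable {ι R S : Type*} [CommRing R] [CommRing S]

/-- A vector is unimodular if its entries generate the unit ideal. Over a principal ideal domain,
these are the vectors in lowest terms. -/
def IsUnimodular (v : ι → R) : Prop :=
  Ideal.span (Set.range v) = ⊤

namespace IsUnimodular

lemma of_eq_one {v : ι → R} {i : ι} (h : v i = 1) : IsUnimodular v :=
  (Ideal.eq_top_iff_one _).2 (h ▸ Ideal.subset_span ⟨i, rfl⟩)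

lemma comp_ne_zero [Nontrivial S] {v : ι → R} (hv : IsUnimodular v) (φ : R →+* S) : φ ∘ v ≠ 0 := by
  intro h
  have hle : Ideal.span (Set.range v) ≤ RingHom.ker φ :=
    Ideal.span_le.2 (Set.range_subset_iff.2 fun i ↦ congr_fun h i)
  exact RingHom.ker_ne_top φ (top_le_iff.1 (hv ▸ hle))

lemma ne_zero [Nontrivial R] {v : ι → R} (hv : IsUnimodular v) : v ≠ 0 :=
  hv.comp_ne_zero (RingHom.id R)

lemma of_forall_isMaximal {v : ι → R}
    (h : ∀ M : Ideal R, M.IsMaximal → Ideal.Quotient.mk M ∘ v ≠ 0) : IsUnimodular v := by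
  by_contra hv
  obtain ⟨M, hM, hle⟩ := Ideal.exists_le_maximal _ hv
  exact h M hM (funext fun i ↦ Ideal.Quotient.eq_zero_iff_mem.2 (hle (Ideal.subset_span ⟨i, rfl⟩)))

lemma symVec {v w : Fin 2 → R} (hv : IsUnimodular v) (hw : IsUnimodular w) :
    IsUnimodular (symVec v w) :=
  of_forall_isMaximal fun M _ ↦ by
    rw [map_symVec]
    exact symVec_ne_zero (hv.comp_ne_zero _) (hw.comp_ne_zero _)

lemma addSubVec (W : WeierstrassCurve R) [W.IsElliptic] {x : Fin 3 → R} (hx : IsUnimodular x) :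
    IsUnimodular (addSubVec W x) :=
  of_forall_isMaximal fun M _ ↦ by
    rw [map_addSubVec]
    exact addSubVec_ne_zero _ (hx.comp_ne_zero _)

lemma exists_unit_smul_eq [Finite ι] {v w : ι → R} (hv : IsUnimodular v) (hw : IsUnimodular w)
    (h : ∀ i j, v i * w j = v j * w i) : ∃ u : Rˣ, v = u • w := by
  cases nonempty_fintype ι
  obtain ⟨a, ha⟩ := Ideal.mem_span_range_iff_exists_fun.1 ((Ideal.eq_top_iff_one _).1 hw)
  set s := ∑ j, a j * v j with hs
  have hvw (i) : v i = s * w i := by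
    rw [← mul_one (v i), ← ha, hs, Finset.mul_sum, Finset.sum_mul]
    exact Finset.sum_congr rfl fun j _ ↦ by linear_combination a j * h i j
  have hunit : IsUnit s := by
    rw [← Ideal.span_singleton_eq_top, ← top_le_iff, ← hv, Ideal.span_le, Set.range_subset_iff]
    exact fun i ↦ Ideal.mem_span_singleton.2 ⟨w i, hvw i⟩
  exact ⟨hunit.unit, funext hvw⟩

end IsUnimodular

lemma exists_smul_isUnimodular [Finite ι] [IsDomain R] [IsPrincipalIdealRing R] {w : ι → R}
    (hw : w ≠ 0) : ∃ g : R, ∃ v : ι → R, g ≠ 0 ∧ IsUnimodular v ∧ w = g • v := by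
  cases nonempty_fintype ι
  obtain ⟨g, hg⟩ := IsPrincipalIdealRing.principal (Ideal.span (Set.range w))
  rw [Ideal.submodule_span_eq] at hg
  have hdvd (i) : g ∣ w i :=
    Ideal.mem_span_singleton.1 (hg ▸ Ideal.subset_span ⟨i, rfl⟩)
  choose v hv using hdvd
  have hg₀ : g ≠ 0 := by
    rintro rfl
    exact hw (funext fun i ↦ by rw [hv i, zero_mul, Pi.zero_apply])
  obtain ⟨a, ha⟩ := Ideal.mem_span_range_iff_exists_fun.1 (hg ▸ Ideal.mem_span_singleton_self g)
  refine ⟨g, v, hg₀, (Ideal.eq_top_iff_one _).2 (Ideal.mem_span_range_iff_exists_fun.2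
    ⟨a, mul_left_cancel₀ hg₀ ?_⟩), funext hv⟩
  rw [mul_one, Finset.mul_sum]
  refine Eq.trans ?_ ha
  exact Finset.sum_congr rfl fun i _ ↦ by rw [hv i, mul_left_comm]

end Unimodular

section Degree

open Polynomial WeierstrassCurve

variable {ι R : Type*} [Fintype ι] [Semiring R]

/-- The degree of a vector of polynomials: the largest degree of its entries. -/
def vecDegree (v : ι → R[X]) : ℕ :=
  Finset.univ.sup fun i ↦ (v i).natDegree

lemma natDegree_le_vecDegree (v : ι → R[X]) (i : ι) : (v i).natDegree ≤ vecDegree v :=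
  Finset.le_sup (f := fun i ↦ (v i).natDegree) (Finset.mem_univ i)

lemma vecDegree_eq_of_coeff_ne_zero {v : ι → R[X]} {n : ℕ} (hle : ∀ i, (v i).natDegree ≤ n)
    (hne : (fun i ↦ (v i).coeff n) ≠ 0) : vecDegree v = n := by
  obtain ⟨i, hi⟩ := Function.ne_iff.1 hne
  exact le_antisymm (Finset.sup_le fun i _ ↦ hle i)
    ((le_natDegree_of_ne_zero hi).trans (natDegree_le_vecDegree v i))

lemma coeff_vecDegree_ne_zero {v : ι → R[X]} (hv : v ≠ 0) :
    (fun i ↦ (v i).coeff (vecDegree v)) ≠ 0 := by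
  obtain ⟨i, hi⟩ := Function.ne_iff.1 hv
  obtain ⟨j, -, hj⟩ := Finset.exists_mem_eq_sup Finset.univ ⟨i, Finset.mem_univ i⟩
    fun i ↦ (v i).natDegree
  rcases eq_or_ne (v j) 0 with h₀ | h₀
  · have hdeg : vecDegree v = 0 := by rw [vecDegree, hj, h₀, natDegree_zero]
    have hi₀ := Nat.le_zero.1 (hdeg ▸ natDegree_le_vecDegree v i)
    refine Function.ne_iff.2 ⟨i, ?_⟩
    rw [hdeg, ← hi₀]
    exact leadingCoeff_ne_zero.2 hi
  · refine Function.ne_iff.2 ⟨j, ?_⟩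
    rw [vecDegree, hj]
    exact leadingCoeff_ne_zero.2 h₀

lemma vecDegree_C_smul [NoZeroDivisors R] {c : R} (hc : c ≠ 0) (v : ι → R[X]) :
    vecDegree (C c • v) = vecDegree v := by
  simp only [vecDegree, Pi.smul_apply, smul_eq_mul, natDegree_C_mul hc]

lemma vecDegree_units_smul {R : Type*} [CommRing R] [IsDomain R] (u : R[X]ˣ) (v : ι → R[X]) :
    vecDegree (u • v) = vecDegree v := by
  obtain ⟨r, hr, hu⟩ := Polynomial.isUnit_iff.1 u.isUnit
  rw [Units.smul_def, ← hu, vecDegree_C_smul hr.ne_zero]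

lemma vecDegree_symVec {R : Type*} [CommRing R] [NoZeroDivisors R] {v w : Fin 2 → R[X]}
    (hv : v ≠ 0) (hw : w ≠ 0) : vecDegree (symVec v w) = vecDegree v + vecDegree w := by
  have hdeg (i j) : (v i * w j).natDegree ≤ vecDegree v + vecDegree w :=
    natDegree_mul_le_of_le (natDegree_le_vecDegree v i) (natDegree_le_vecDegree w j)
  have hcoeff (i j) : (v i * w j).coeff (vecDegree v + vecDegree w) =
      (v i).coeff (vecDegree v) * (w j).coeff (vecDegree w) :=
    coeff_mul_add_eq_of_natDegree_le (natDegree_le_vecDegree v i) (natDegree_le_vecDegree w j)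
  refine vecDegree_eq_of_coeff_ne_zero (fun i ↦ ?_) ?_
  · fin_cases i
    exacts [hdeg 0 0, natDegree_add_le_of_degree_le (hdeg 0 1) (hdeg 1 0), hdeg 1 1]
  · convert symVec_ne_zero (coeff_vecDegree_ne_zero hv) (coeff_vecDegree_ne_zero hw) using 1
    ext i
    fin_cases i
    exacts [hcoeff 0 0, (coeff_add _ _ _).trans (congr_arg₂ _ (hcoeff 0 1) (hcoeff 1 0)),
      hcoeff 1 1]

variable {F : Type*} [CommRing F] (W : WeierstrassCurve F)

lemma natDegree_addSubVec_le {x : Fin 3 → F[X]} {n : ℕ} (hx : ∀ i, (x i).natDegree ≤ n)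
    (i : Fin 3) : (addSubVec (W.map (algebraMap F F[X])) x i).natDegree ≤ n + n := by
  have hmul (i j) : (x i * x j).natDegree ≤ n + n := natDegree_mul_le_of_le (hx i) (hx j)
  have hsq (i) : (x i ^ 2).natDegree ≤ n + n := by
    rw [sq]
    exact hmul i i
  have hC (a : F) {p : F[X]} (hp : p.natDegree ≤ n + n) :
      (algebraMap F F[X] a * p).natDegree ≤ n + n := (natDegree_C_mul_le a p).trans hp
  have h₂ {p : F[X]} (hp : p.natDegree ≤ n + n) : (2 * p).natDegree ≤ n + n := hC 2 hp
  have h₄ {p : F[X]} (hp : p.natDegree ≤ n + n) : (4 * p).natDegree ≤ n + n := hC 4 hp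
  have hadd {p r : F[X]} (hp : p.natDegree ≤ n + n) (hr : r.natDegree ≤ n + n) :
      (p + r).natDegree ≤ n + n := natDegree_add_le_of_degree_le hp hr
  have hsub {p r : F[X]} (hp : p.natDegree ≤ n + n) (hr : r.natDegree ≤ n + n) :
      (p - r).natDegree ≤ n + n := (natDegree_sub_le_iff_left hr).2 hp
  rw [addSubVec_eq, map_b₂, map_b₄, map_b₆, map_b₈]
  fin_cases i
  · exact hsub (hsub (hsub (hsq 0) (hC _ (hmul 0 2))) (hC _ (hmul 1 2))) (hC _ (hsq 2))
  · exact hadd (hadd (hadd (h₂ (hmul 1 0)) (hC _ (hmul 0 2))) (hC _ (hmul 1 2))) (hC _ (hsq 2))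
  · exact hsub (hsq 1) (h₄ (hmul 0 2))

lemma coeff_addSubVec {x : Fin 3 → F[X]} {n : ℕ} (hx : ∀ i, (x i).natDegree ≤ n) (i : Fin 3) :
    (addSubVec (W.map (algebraMap F F[X])) x i).coeff (n + n) =
      addSubVec W (fun i ↦ (x i).coeff n) i := by
  have hmul (i j) : (x i * x j).coeff (n + n) = (x i).coeff n * (x j).coeff n :=
    coeff_mul_add_eq_of_natDegree_le (hx i) (hx j)
  have h₂ (p : F[X]) : (2 * p).coeff (n + n) = 2 * p.coeff (n + n) := coeff_C_mul p
  have h₄ (p : F[X]) : (4 * p).coeff (n + n) = 4 * p.coeff (n + n) := coeff_C_mul p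
  fin_cases i <;> simp [addSubVec_eq, hmul, h₂, h₄, sq]

lemma vecDegree_addSubVec [IsReduced F] [W.IsElliptic] {x : Fin 3 → F[X]} (hx : x ≠ 0) :
    vecDegree (addSubVec (W.map (algebraMap F F[X])) x) = 2 * vecDegree x := by
  rw [two_mul]
  refine vecDegree_eq_of_coeff_ne_zero (natDegree_addSubVec_le W (natDegree_le_vecDegree x)) ?_
  rw [funext (coeff_addSubVec W (natDegree_le_vecDegree x))]
  exact addSubVec_ne_zero W (coeff_vecDegree_ne_zero hx)

end Degree

section XRep

open Polynomial WeierstrassCurve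

lemma mul_eq_mul_of_comp_eq_smul {ι R K : Type*} [CommRing R] [CommRing K] [Algebra R K]
    [FaithfulSMul R K] {v w : ι → R} {x : ι → K} {c d : K} (hv : algebraMap R K ∘ v = c • x)
    (hw : algebraMap R K ∘ w = d • x) (i j : ι) : v i * w j = v j * w i := by
  have hv' (i) : algebraMap R K (v i) = c * x i := congr_fun hv i
  have hw' (i) : algebraMap R K (w i) = d * x i := congr_fun hw i
  apply FaithfulSMul.algebraMap_injective R K
  rw [map_mul, map_mul, hv', hv', hw', hw']
  ring

/-- The vector `v` over `R` is the `x`-coordinate, in lowest terms, of the point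
`P` of a curve over an extension `K` of `R`. The point at infinity has `x`-coordinate `1 / 0`. -/
def IsXRep {R K : Type*} [CommRing R] [Field K] [Algebra R K] {E : Affine K} (P : E.Point)
    (v : Fin 2 → R) : Prop :=
  IsUnimodular v ∧ ∃ c : K, c ≠ 0 ∧ algebraMap R K ∘ v = c • P.xRep

namespace IsXRep

variable {R K : Type*} [CommRing R] [Field K] [Algebra R K]

section Affine

variable {E : Affine K} {P Q : E.Point} {v w : Fin 2 → R}

lemma some {x y : K} (h : E.Nonsingular x y) {p : R} (hp : algebraMap R K p = x) :
    IsXRep (Affine.Point.some x y h) ![p, 1] :=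
  ⟨.of_eq_one (i := 1) rfl, 1, one_ne_zero, by ext i; fin_cases i <;> simp [hp]⟩

lemma neg (hv : IsXRep P v) : IsXRep (-P) v := by
  rwa [IsXRep, Affine.Point.xRep_neg]

lemma exists_comp_symVec_eq (hv : IsXRep P v) (hw : IsXRep Q w) :
    ∃ c : K, c ≠ 0 ∧ algebraMap R K ∘ symVec v w = c • symVec P.xRep Q.xRep := by
  obtain ⟨-, c, hc, hv⟩ := hv
  obtain ⟨-, d, hd, hw⟩ := hw
  exact ⟨c * d, mul_ne_zero hc hd, by rw [map_symVec, hv, hw, symVec_smul_smul]⟩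

variable [FaithfulSMul R K]

lemma exists_unit_smul_eq (hv : IsXRep P v) (hw : IsXRep P w) : ∃ u : Rˣ, v = u • w := by
  obtain ⟨hv, c, -, hvP⟩ := hv
  obtain ⟨hw, d, -, hwP⟩ := hw
  exact hv.exists_unit_smul_eq hw (mul_eq_mul_of_comp_eq_smul hvP hwP)

variable [IsDomain R] [IsPrincipalIdealRing R]

lemma exists_of_comp_eq_smul {c : K} (hc : c ≠ 0) (hw : algebraMap R K ∘ w = c • P.xRep) :
    ∃ v : Fin 2 → R, IsXRep P v := by
  have hw₀ : w ≠ 0 := by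
    rintro rfl
    exact smul_ne_zero hc P.xRep_ne_zero (hw.symm.trans (funext fun _ ↦ map_zero _))
  obtain ⟨g, v, hg, hv, rfl⟩ := exists_smul_isUnimodular hw₀
  have hgK : algebraMap R K g ≠ 0 :=
    (map_ne_zero_iff _ (FaithfulSMul.algebraMap_injective R K)).2 hg
  refine ⟨v, hv, (algebraMap R K g)⁻¹ * c, mul_ne_zero (inv_ne_zero hgK) hc, ?_⟩
  rw [mul_smul, ← hw]
  ext i
  simp only [Function.comp_apply, Pi.smul_apply, smul_eq_mul, map_mul, inv_mul_cancel_left₀ hgK]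

lemma exists_of_comp_eq_smul_symVec (hw : IsXRep Q w) {s : Fin 3 → R} {c : K} (hc : c ≠ 0)
    (hs : algebraMap R K ∘ s = c • symVec P.xRep Q.xRep) : ∃ v : Fin 2 → R, IsXRep P v := by
  obtain ⟨hw, d, -, hwQ⟩ := hw
  have hwK (i) : algebraMap R K (w i) = d * Q.xRep i := congr_fun hwQ i
  have hs₀ : algebraMap R K (s 0) = c * (P.xRep 0 * Q.xRep 0) := congr_fun hs 0
  have hs₁ : algebraMap R K (s 1) = c * (P.xRep 0 * Q.xRep 1 + P.xRep 1 * Q.xRep 0) :=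
    congr_fun hs 1
  have hs₂ : algebraMap R K (s 2) = c * (P.xRep 1 * Q.xRep 1) := congr_fun hs 2
  have hne {i} (hi : w i ≠ 0) : d * c * Q.xRep i ^ 2 ≠ 0 := by
    rw [← map_ne_zero_iff _ (FaithfulSMul.algebraMap_injective R K), hwK] at hi
    exact mul_ne_zero (mul_ne_zero (left_ne_zero_of_mul hi) hc)
      (pow_ne_zero 2 (right_ne_zero_of_mul hi))
  rcases Fin.exists_fin_two.1 (Function.ne_iff.1 hw.ne_zero) with h | h
  · refine exists_of_comp_eq_smul (w := ![w 0 * s 0, w 0 * s 1 - w 1 * s 0]) (hne h) ?_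
    ext i
    fin_cases i <;> simp [hwK, hs₀, hs₁] <;> ring
  · refine exists_of_comp_eq_smul (w := ![w 1 * s 1 - w 0 * s 2, w 1 * s 2]) (hne h) ?_
    ext i
    fin_cases i <;> simp [hwK, hs₁, hs₂] <;> ring

end Affine

section BaseChange

variable {F : Type*} [CommRing F] [Algebra F R] [Algebra F K] [IsScalarTower F R K]
  [DecidableEq K] {W : WeierstrassCurve F} [W.IsElliptic]
  {P Q : (W.map (algebraMap F K)).toAffine.Point} {v w v' w' : Fin 2 → R}

lemma exists_comp_addSubVec_eq (hv : IsXRep P v) (hw : IsXRep Q w) : ∃ c : K, c ≠ 0 ∧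
    algebraMap R K ∘ addSubVec (W.map (algebraMap F R)) (symVec v w) =
      c • symVec (P + Q).xRep (P - Q).xRep := by
  obtain ⟨c, hc, hvw⟩ := hv.exists_comp_symVec_eq hw
  obtain ⟨d, hd, hPQ⟩ := exists_addSubVec_sym2x P Q
  refine ⟨c ^ 2 * d, mul_ne_zero (pow_ne_zero 2 hc) hd, ?_⟩
  rw [map_addSubVec, WeierstrassCurve.map_map, ← IsScalarTower.algebraMap_eq, hvw, addSubVec_smul,
    mul_smul]
  exact congr_arg _ hPQ

variable [FaithfulSMul R K]

theorem exists_unit_symVec_eq (hv : IsXRep P v) (hw : IsXRep Q w) (hv' : IsXRep (P + Q) v')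
    (hw' : IsXRep (P - Q) w') :
    ∃ u : Rˣ, symVec v' w' = u • addSubVec (W.map (algebraMap F R)) (symVec v w) := by
  obtain ⟨c, -, hc⟩ := hv'.exists_comp_symVec_eq hw'
  obtain ⟨d, -, hd⟩ := hv.exists_comp_addSubVec_eq hw
  exact (hv'.1.symVec hw'.1).exists_unit_smul_eq ((hv.1.symVec hw.1).addSubVec _)
    (mul_eq_mul_of_comp_eq_smul hc hd)

variable [IsDomain R] [IsPrincipalIdealRing R]

lemma exists_add (hv : IsXRep P v) (hw : IsXRep Q w) (hw' : IsXRep (P - Q) w') :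
    ∃ v' : Fin 2 → R, IsXRep (P + Q) v' := by
  obtain ⟨c, hc, h⟩ := hv.exists_comp_addSubVec_eq hw
  exact hw'.exists_of_comp_eq_smul_symVec hc h

lemma exists_add_zsmul (hv : IsXRep P v) (hw : IsXRep Q w) (hw' : IsXRep (P - Q) w') (n : ℤ) :
    ∃ u : Fin 2 → R, IsXRep (P + n • Q) u := by
  suffices H : (∃ u : Fin 2 → R, IsXRep (P + n • Q) u) ∧
    ∃ u : Fin 2 → R, IsXRep (P + (n - 1) • Q) u from H.1
  induction n with
  | zero => exact ⟨⟨v, by rwa [zero_smul, add_zero]⟩, w', by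
      rwa [zero_sub, neg_smul, one_smul, ← sub_eq_add_neg]⟩
  | succ k ih =>
    obtain ⟨⟨a, ha⟩, b, hb⟩ := ih
    rw [sub_smul, one_smul, ← add_sub_assoc] at hb
    refine ⟨?_, a, by rwa [add_sub_cancel_right]⟩
    rw [add_smul, one_smul, ← add_assoc]
    exact ha.exists_add hw hb
  | pred k ih =>
    obtain ⟨⟨a, ha⟩, b, hb⟩ := ih
    refine ⟨⟨b, hb⟩, ?_⟩
    rw [sub_smul (_ - 1), one_smul, ← add_sub_assoc, sub_eq_add_neg]
    refine hb.exists_add hw.neg (w' := a) ?_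
    rwa [sub_neg_eq_add, sub_smul, one_smul, add_assoc, sub_add_cancel]

end BaseChange

section Polynomial

variable {F K : Type*} [CommRing F] [IsDomain F] [Field K] [Algebra F[X] K]
  [FaithfulSMul F[X] K]

lemma vecDegree_eq {E : Affine K} {P : E.Point} {v w : Fin 2 → F[X]} (hv : IsXRep P v)
    (hw : IsXRep P w) : vecDegree v = vecDegree w := by
  obtain ⟨u, rfl⟩ := hv.exists_unit_smul_eq hw
  exact vecDegree_units_smul u w

variable [Algebra F K] [IsScalarTower F F[X] K] [DecidableEq K] {W : WeierstrassCurve F}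
  [W.IsElliptic] {P Q : (W.map (algebraMap F K)).toAffine.Point} {v w v' w' : Fin 2 → F[X]}

theorem vecDegree_add_vecDegree (hv : IsXRep P v) (hw : IsXRep Q w) (hv' : IsXRep (P + Q) v')
    (hw' : IsXRep (P - Q) w') :
    vecDegree v' + vecDegree w' = 2 * vecDegree v + 2 * vecDegree w := by
  obtain ⟨u, hu⟩ := hv.exists_unit_symVec_eq hw hv' hw'
  rw [← vecDegree_symVec hv'.1.ne_zero hw'.1.ne_zero, hu, vecDegree_units_smul,
    vecDegree_addSubVec W (hv.1.symVec hw.1).ne_zero,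
    vecDegree_symVec hv.1.ne_zero hw.1.ne_zero, mul_add]

end Polynomial
end IsXRep

lemma eq_quadratic_of_second_difference {d : ℤ → ℤ} {c : ℤ}
    (h : ∀ n, d (n + 1) + d (n - 1) = 2 * d n + 2 * c) (n : ℤ) :
    d n = c * n ^ 2 + (d 0 + c - d (-1)) * n + d 0 := by
  suffices H : d n = c * n ^ 2 + (d 0 + c - d (-1)) * n + d 0 ∧
      d (n - 1) = c * (n - 1) ^ 2 + (d 0 + c - d (-1)) * (n - 1) + d 0 from H.1
  induction n with
  | zero => exact ⟨by ring, by ring_nf⟩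
  | succ k ih =>
    refine ⟨?_, by rw [add_sub_cancel_right]; exact ih.1⟩
    linear_combination h k + 2 * ih.1 - ih.2
  | pred k ih =>
    have hk := h (-k - 1)
    rw [sub_add_cancel] at hk
    exact ⟨ih.2, by linear_combination hk + 2 * ih.2 - ih.1⟩

theorem IsXRep.quadratic_nonneg {F K : Type*} [Field F] [Field K] [Algebra F[X] K] [Algebra F K]
    [IsScalarTower F F[X] K] [FaithfulSMul F[X] K] [DecidableEq K] {W : WeierstrassCurve F}
    [W.IsElliptic] {P Q : (W.map (algebraMap F K)).toAffine.Point} {v w m : Fin 2 → F[X]}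
    (hv : IsXRep P v) (hw : IsXRep Q w) (hm : IsXRep (P - Q) m) (n : ℤ) :
    0 ≤ vecDegree w * n ^ 2 + ((vecDegree v : ℤ) + vecDegree w - vecDegree m) * n +
      vecDegree v := by
  choose u hu using hv.exists_add_zsmul hw hm
  have hquad := eq_quadratic_of_second_difference (d := fun n ↦ (vecDegree (u n) : ℤ))
    (c := vecDegree w) (fun n ↦ by
      have hsucc := hu (n + 1)
      have hpred := hu (n - 1)
      rw [add_smul, one_smul, ← add_assoc] at hsucc
      rw [sub_smul, one_smul, ← add_sub_assoc] at hpred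
      exact_mod_cast (hu n).vecDegree_add_vecDegree hw hsucc hpred) n
  have h₀ : vecDegree (u 0) = vecDegree v :=
    (hu 0).vecDegree_eq (by rwa [zero_smul, add_zero])
  have h₁ : vecDegree (u (-1)) = vecDegree m :=
    (hu (-1)).vecDegree_eq (by rwa [neg_smul, one_smul, ← sub_eq_add_neg])
  rw [h₀, h₁] at hquad
  exact hquad ▸ Int.natCast_nonneg _

end XRep

section CoordinateRing

open Polynomial WeierstrassCurve WeierstrassCurve.Affine

section BaseChange

variable {F R S : Type*} [CommRing F] [CommRing R] [CommRing S] [Algebra F R] [Algebra F S]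
  (W : WeierstrassCurve F) (φ : R →ₐ[F] S)

lemma map_map_algHom : (W.map (algebraMap F R)).map (φ : R →+* S) = W.map (algebraMap F S) := by
  rw [WeierstrassCurve.map_map, φ.comp_algebraMap]

lemma algHom_addXNum (x₁ x₂ y₁ y₂ : R) :
    φ (addXNum (W.map (algebraMap F R)).toAffine x₁ x₂ y₁ y₂) =
      addXNum (W.map (algebraMap F S)).toAffine (φ x₁) (φ x₂) (φ y₁) (φ y₂) := by
  rw [← map_map_algHom W φ]
  exact map_addXNum (φ : R →+* S) _ x₁ x₂ y₁ y₂

lemma algHom_negY (x y : R) : φ ((W.map (algebraMap F R)).toAffine.negY x y) =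
    (W.map (algebraMap F S)).toAffine.negY (φ x) (φ y) := by
  rw [← map_map_algHom W φ]
  exact (map_negY (φ : R →+* S) x y).symm

variable {W} in
lemma equation_algHom {x y : R} (h : (W.map (algebraMap F R)).toAffine.Equation x y) :
    (W.map (algebraMap F S)).toAffine.Equation (φ x) (φ y) := by
  rw [← map_map_algHom W φ]
  exact h.map (φ : R →+* S)

end BaseChange

section CommRing

variable {F : Type*} [CommRing F] (W : WeierstrassCurve F)

/-- The coordinate function `x` on an affine Weierstrass curve. -/
noncomputable def coordX : W.toAffine.CoordinateRing :=
  algebraMap F[X] W.toAffine.CoordinateRing X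

/-- The coordinate function `y` on an affine Weierstrass curve. -/
noncomputable def coordY : W.toAffine.CoordinateRing :=
  CoordinateRing.mk W.toAffine X

lemma equation_coordX_coordY :
    (W.map (algebraMap F W.toAffine.CoordinateRing)).toAffine.Equation (coordX W) (coordY W) := by
  have h := CoordinateRing.smul_basis_mul_Y (W' := W.toAffine) 0 1
  rw [equation_iff]
  simp only [Algebra.smul_def, map_zero, map_one, one_mul, mul_one, zero_add, zero_sub,
    map_neg, map_add, map_mul, map_pow] at h
  simp only [coordX, coordY, map_a₁, map_a₂, map_a₃, map_a₄, map_a₆,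
    IsScalarTower.algebraMap_apply F F[X] W.toAffine.CoordinateRing, algebraMap_eq]
  linear_combination h

variable {W} {L : Type*} [CommRing L] [Algebra F L] {a b : L}

/-- Evaluation of regular functions on an affine Weierstrass curve over `F` at a point with
coordinates in an `F`-algebra. -/
noncomputable def evalPoint (h : (W.map (algebraMap F L)).toAffine.Equation a b) :
    W.toAffine.CoordinateRing →ₐ[F] L :=
  AdjoinRoot.liftAlgHom W.toAffine.polynomial (aeval a) b <| by
    rw [equation_iff'] at h
    rw [polynomial]
    simp only [eval₂_sub, eval₂_add, eval₂_mul, eval₂_pow, eval₂_X, eval₂_C, map_add, map_mul,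
      map_pow, aeval_X, aeval_C, RingHom.coe_coe]
    simp only [map_a₁, map_a₂, map_a₃, map_a₄, map_a₆] at h
    linear_combination h

lemma evalPoint_algebraMap (h : (W.map (algebraMap F L)).toAffine.Equation a b) (p : F[X]) :
    evalPoint h (algebraMap F[X] W.toAffine.CoordinateRing p) = aeval a p :=
  AdjoinRoot.liftAlgHom_of _ _ _ _ _

lemma evalPoint_coordX (h : (W.map (algebraMap F L)).toAffine.Equation a b) :
    evalPoint h (coordX W) = a := by
  rw [coordX, evalPoint_algebraMap, aeval_X]

lemma evalPoint_coordY (h : (W.map (algebraMap F L)).toAffine.Equation a b) :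
    evalPoint h (coordY W) = b :=
  AdjoinRoot.liftAlgHom_root _ _ _ _

variable (W) in
/-- The automorphism of the coordinate ring induced by negation on the curve. -/
noncomputable def negAlgHom : W.toAffine.CoordinateRing →ₐ[F] W.toAffine.CoordinateRing :=
  evalPoint ((equation_neg _ _).2 (equation_coordX_coordY W))

lemma negAlgHom_algebraMap (p : F[X]) :
    negAlgHom W (algebraMap F[X] W.toAffine.CoordinateRing p) = algebraMap F[X] _ p := by
  rw [negAlgHom, evalPoint_algebraMap, coordX, aeval_algebraMap_apply, aeval_X_left_apply]

end CommRing

section IsDomain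

variable {F : Type*} [CommRing F] [IsDomain F] (W : WeierstrassCurve F)

lemma exists_algebraMap_eq_of_negAlgHom_eq [W.IsElliptic] {z : W.toAffine.CoordinateRing}
    (hz : negAlgHom W z = z) : ∃ p, algebraMap F[X] W.toAffine.CoordinateRing p = z := by
  obtain ⟨p, r, rfl⟩ := CoordinateRing.exists_smul_basis_eq z
  suffices hr : r = 0 from ⟨p, by rw [hr, zero_smul, add_zero, Algebra.smul_def, mul_one]⟩
  have hrel : (r * (C W.a₁ * X + C W.a₃)) • (1 : W.toAffine.CoordinateRing) +
      (2 * r) • CoordinateRing.mk W.toAffine X = 0 := by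
    have hneg := evalPoint_coordY ((equation_neg _ _).2 (equation_coordX_coordY W))
    rw [← negAlgHom, coordY, negY] at hneg
    simp only [Algebra.smul_def, map_add, map_mul, negAlgHom_algebraMap, map_one, hneg, map_a₁,
      map_a₃, coordX, IsScalarTower.algebraMap_apply F F[X] W.toAffine.CoordinateRing,
      algebraMap_eq, map_ofNat] at hz ⊢
    linear_combination -hz
  obtain ⟨hlin, htwo⟩ := CoordinateRing.smul_basis_eq_zero hrel
  by_contra hr
  have h₂ : (2 : F) = 0 := C_eq_zero.1 ((mul_eq_zero.1 htwo).resolve_right hr)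
  have h₁₃ : C W.a₁ * X + C W.a₃ = 0 := (mul_eq_zero.1 hlin).resolve_left hr
  have h₁ : W.a₁ = 0 := by simpa using congr_arg (coeff · 1) h₁₃
  have h₃ : W.a₃ = 0 := by simpa using congr_arg (coeff · 0) h₁₃
  refine W.isUnit_Δ.ne_zero ?_
  rw [Δ, b₂, b₄, b₆, h₁, h₃]
  linear_combination (144 * W.a₂ * W.a₄ * W.a₆ - 32 * W.a₄ ^ 3 - 216 * W.a₆ ^ 2 -
    8 * W.a₂ ^ 2 * W.b₈) * h₂

end IsDomain
end CoordinateRing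

section SumOfPoints

open WeierstrassCurve WeierstrassCurve.Affine

variable {F A K : Type*} [CommRing F] [CommRing A] [Field K] [Algebra F A] [Algebra F K]
  [Algebra A K] [IsScalarTower F A K] [FaithfulSMul A K] [DecidableEq K] {W : WeierstrassCurve F}
  {x₁ x₂ y₁ y₂ : A}
  {h₁ : (W.map (algebraMap F K)).toAffine.Nonsingular (algebraMap A K x₁) (algebraMap A K y₁)}
  {h₂ : (W.map (algebraMap F K)).toAffine.Nonsingular (algebraMap A K x₂) (algebraMap A K y₂)}

lemma sub_sq_smul_xRep_some_add_some (hx : x₁ ≠ x₂) :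
    algebraMap A K ((x₁ - x₂) ^ 2) • (Point.some _ _ h₁ + Point.some _ _ h₂).xRep =
      algebraMap A K ∘ ![addXNum (W.map (algebraMap F A)).toAffine x₁ x₂ y₁ y₂, (x₁ - x₂) ^ 2] := by
  have hxK := (FaithfulSMul.algebraMap_injective A K).ne hx
  have hN : algebraMap A K (addXNum (W.map (algebraMap F A)).toAffine x₁ x₂ y₁ y₂) = _ :=
    algHom_addXNum W (IsScalarTower.toAlgHom F A K) x₁ x₂ y₁ y₂
  have hX := addX_mul_sub_sq (W := (W.map (algebraMap F K)).toAffine) (algebraMap A K y₁)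
    (algebraMap A K y₂) hxK
  rw [Point.add_of_X_ne hxK, Point.xRep_some]
  ext i
  fin_cases i
  · rw [map_pow, map_sub]
    exact (mul_comm _ _).trans (hX.trans hN.symm)
  · exact mul_one _

variable {R : Type*} [CommRing R] [Algebra R A] [Algebra R K] [IsScalarTower R A K]

lemma IsXRep.algebraMap_mul_eq [IsDomain A] {v : Fin 2 → R}
    (hv : IsXRep (Point.some _ _ h₁ + Point.some _ _ h₂) v) (hx : x₁ ≠ x₂) {r : R} {c : A}
    (hr : algebraMap R A (v 1 * r) = c * (x₁ - x₂) ^ 2) :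
    algebraMap R A (v 0 * r) = c * addXNum (W.map (algebraMap F A)).toAffine x₁ x₂ y₁ y₂ := by
  obtain ⟨-, d, -, hd⟩ := hv
  rw [IsScalarTower.algebraMap_eq R A K] at hd
  have hmul : algebraMap R A (v 0) * (x₁ - x₂) ^ 2 =
      algebraMap R A (v 1) * addXNum (W.map (algebraMap F A)).toAffine x₁ x₂ y₁ y₂ :=
    mul_eq_mul_of_comp_eq_smul (v := algebraMap R A ∘ v) hd
      (sub_sq_smul_xRep_some_add_some hx).symm 0 1
  apply mul_right_cancel₀ (pow_ne_zero 2 (sub_ne_zero.2 hx))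
  rw [map_mul] at hr ⊢
  linear_combination algebraMap R A r * hmul +
    addXNum (W.map (algebraMap F A)).toAffine x₁ x₂ y₁ y₂ * hr

lemma exists_isXRep_some_add_some [IsDomain R] [IsPrincipalIdealRing R] [FaithfulSMul R K]
    [IsReduced A] (hx : x₁ ≠ x₂) {n d : R} (hd : algebraMap R A d = x₁ - x₂)
    (hn : algebraMap R A n = addXNum (W.map (algebraMap F A)).toAffine x₁ x₂ y₁ y₂) :
    ∃ v : Fin 2 → R, IsXRep (Point.some _ _ h₁ + Point.some _ _ h₂) v := by
  refine IsXRep.exists_of_comp_eq_smul (w := ![n, d ^ 2]) (c := algebraMap A K ((x₁ - x₂) ^ 2))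
    ?_ ?_
  · exact (map_ne_zero_iff _ (FaithfulSMul.algebraMap_injective A K)).2
      (pow_ne_zero 2 (sub_ne_zero.2 hx))
  · rw [sub_sq_smul_xRep_some_add_some hx, ← hn, ← hd, ← map_pow, IsScalarTower.algebraMap_eq R A K]
    ext i
    fin_cases i <;> rfl

end SumOfPoints

section FrobeniusPoint

open Polynomial WeierstrassCurve WeierstrassCurve.Affine

variable {F : Type*} [Field F] (W : WeierstrassCurve F)

section TautologicalPoint

variable [W.IsElliptic]

/-- The point `(x, y)` of an elliptic curve over its own function field. -/
noncomputable def tautologicalPoint :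
    (W.map (algebraMap F W.toAffine.FunctionField)).toAffine.Point :=
  .some (algebraMap W.toAffine.CoordinateRing _ (coordX W)) (algebraMap _ _ (coordY W)) <|
    equation_iff_nonsingular.1 <|
      equation_algHom (IsScalarTower.toAlgHom F _ _) (equation_coordX_coordY W)

lemma isXRep_tautologicalPoint : IsXRep (tautologicalPoint W) (![X, 1] : Fin 2 → F[X]) :=
  .some _ (IsScalarTower.algebraMap_apply F[X] W.toAffine.CoordinateRing _ X)

lemma neg_tautologicalPoint : ∃ h, -tautologicalPoint W =
    .some (algebraMap W.toAffine.CoordinateRing _ (coordX W))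
      (algebraMap W.toAffine.CoordinateRing _ ((W.map (algebraMap F _)).toAffine.negY (coordX W)
        (coordY W))) h := by
  have hneg : algebraMap W.toAffine.CoordinateRing W.toAffine.FunctionField _ = _ :=
    algHom_negY W (IsScalarTower.toAlgHom F _ _) (coordX W) (coordY W)
  rw [hneg]
  exact ⟨_, Point.neg_some _⟩

end TautologicalPoint

variable [Fintype F]

local notation "q" => Fintype.card F

variable {W} in
lemma equation_pow_card {S : Type*} [CommRing S] [Algebra F S] {a b : S}
    (h : (W.map (algebraMap F S)).toAffine.Equation a b) :
    (W.map (algebraMap F S)).toAffine.Equation (a ^ q) (b ^ q) :=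
  equation_algHom (FiniteField.frobeniusAlgHom F S) h

lemma algebraMap_X_pow_card_sub_X : algebraMap F[X] W.toAffine.CoordinateRing (X ^ q - X) =
    coordX W ^ q - coordX W := by
  rw [map_sub, map_pow, coordX]

lemma coordX_pow_card_ne : coordX W ^ q ≠ coordX W := by
  rw [← sub_ne_zero, ← algebraMap_X_pow_card_sub_X]
  exact (map_ne_zero_iff _ (FaithfulSMul.algebraMap_injective _ _)).2
    (FiniteField.X_pow_card_sub_X_ne_zero F Fintype.one_lt_card)

variable {W} in
lemma algebraMap_eq_of_eq_C_mul {c : F} {p : F[X]} (hp : p = C c * (X ^ q - X) ^ 2) :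
    algebraMap F[X] W.toAffine.CoordinateRing p =
      algebraMap F _ c * (coordX W ^ q - coordX W) ^ 2 := by
  rw [hp, map_mul, map_pow, algebraMap_X_pow_card_sub_X]
  rfl

variable [W.IsElliptic]

/-- The image `(x ^ q, y ^ q)` of the tautological point under the Frobenius endomorphism. -/
noncomputable def frobeniusPoint :
    (W.map (algebraMap F W.toAffine.FunctionField)).toAffine.Point :=
  .some (algebraMap W.toAffine.CoordinateRing _ (coordX W ^ q)) (algebraMap _ _ (coordY W ^ q)) <|
    equation_iff_nonsingular.1 <| equation_algHom (IsScalarTower.toAlgHom F _ _) <|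
      equation_pow_card (equation_coordX_coordY W)

lemma isXRep_frobeniusPoint : IsXRep (frobeniusPoint W) (![X ^ q, 1] : Fin 2 → F[X]) :=
  .some _ <| by
    rw [coordX, ← map_pow]
    exact IsScalarTower.algebraMap_apply F[X] W.toAffine.CoordinateRing _ (X ^ q)

lemma exists_algebraMap_eq_addXNum : ∃ N : F[X], algebraMap F[X] W.toAffine.CoordinateRing N =
    addXNum (W.map (algebraMap F W.toAffine.CoordinateRing)).toAffine (coordX W ^ q) (coordX W)
      (coordY W ^ q) ((W.map (algebraMap F W.toAffine.CoordinateRing)).toAffine.negY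
        (coordX W) (coordY W)) := by
  apply exists_algebraMap_eq_of_negAlgHom_eq
  have hx : negAlgHom W (coordX W) = coordX W := evalPoint_coordX _
  have hy : negAlgHom W (coordY W) = (W.map (algebraMap F _)).toAffine.negY (coordX W) (coordY W) :=
    evalPoint_coordY _
  have hfrob : (W.map (algebraMap F _)).toAffine.negY (coordX W) (coordY W) ^ q =
      (W.map (algebraMap F _)).toAffine.negY (coordX W ^ q) (coordY W ^ q) :=
    algHom_negY W (FiniteField.frobeniusAlgHom F _) (coordX W) (coordY W)
  rw [algHom_addXNum, algHom_negY, map_pow, map_pow, hx, hy, hfrob, negY_negY, addXNum_negY_left]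

variable [DecidableEq W.toAffine.FunctionField]

lemma exists_isXRep_frobeniusPoint_sub :
    ∃ V : Fin 2 → F[X], IsXRep (frobeniusPoint W - tautologicalPoint W) V := by
  obtain ⟨N, hN⟩ := exists_algebraMap_eq_addXNum W
  obtain ⟨h, hneg⟩ := neg_tautologicalPoint W
  rw [sub_eq_add_neg, hneg]
  exact exists_isXRep_some_add_some (coordX_pow_card_ne W) (algebraMap_X_pow_card_sub_X W) hN

lemma exists_isXRep_frobeniusPoint_add :
    ∃ U : Fin 2 → F[X], IsXRep (frobeniusPoint W + tautologicalPoint W) U := by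
  obtain ⟨V, hV⟩ := exists_isXRep_frobeniusPoint_sub W
  exact (isXRep_frobeniusPoint W).exists_add (isXRep_tautologicalPoint W) hV

variable {W} {U V : Fin 2 → F[X]}

lemma exists_symVec_eq_C_smul (hU : IsXRep (frobeniusPoint W + tautologicalPoint W) U)
    (hV : IsXRep (frobeniusPoint W - tautologicalPoint W) V) :
    ∃ c : F, c ≠ 0 ∧ symVec U V =
      C c • addSubVec (W.map (algebraMap F F[X])) (symVec ![X ^ q, 1] ![X, 1]) := by
  obtain ⟨u, hu⟩ :=
    (isXRep_frobeniusPoint W).exists_unit_symVec_eq (isXRep_tautologicalPoint W) hU hV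
  obtain ⟨c, hc, hcu⟩ := Polynomial.isUnit_iff.1 u.isUnit
  exact ⟨c, hc.ne_zero, by rw [hcu, hu, Units.smul_def]⟩

variable {c : F} {p : F[X]}

lemma algebraMap_mul_of_isXRep_add (hU : IsXRep (frobeniusPoint W + tautologicalPoint W) U)
    (hp : U 1 * p = C c * (X ^ q - X) ^ 2) :
    algebraMap F[X] W.toAffine.CoordinateRing (U 0 * p) =
      algebraMap F _ c * addXNum (W.map (algebraMap F W.toAffine.CoordinateRing)).toAffine
        (coordX W ^ q) (coordX W) (coordY W ^ q) (coordY W) :=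
  hU.algebraMap_mul_eq (coordX_pow_card_ne W) (algebraMap_eq_of_eq_C_mul hp)

lemma algebraMap_mul_of_isXRep_sub (hV : IsXRep (frobeniusPoint W - tautologicalPoint W) V)
    (hp : V 1 * p = C c * (X ^ q - X) ^ 2) :
    algebraMap F[X] W.toAffine.CoordinateRing (V 0 * p) =
      algebraMap F _ c * addXNum (W.map (algebraMap F W.toAffine.CoordinateRing)).toAffine
        (coordX W ^ q) (coordX W) (coordY W ^ q)
        ((W.map (algebraMap F W.toAffine.CoordinateRing)).toAffine.negY (coordX W) (coordY W)) := by
  obtain ⟨h, hneg⟩ := neg_tautologicalPoint W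
  rw [sub_eq_add_neg, hneg] at hV
  exact hV.algebraMap_mul_eq (coordX_pow_card_ne W) (algebraMap_eq_of_eq_C_mul hp)

end FrobeniusPoint

section PointCount

open Polynomial WeierstrassCurve WeierstrassCurve.Affine

lemma exists_equation {L : Type*} [Field L] [IsAlgClosed L] (W : Affine L) (a : L) :
    ∃ b, W.Equation a b := by
  have hdeg : (W.polynomial.map (evalRingHom a)).degree ≠ 0 := by
    rw [W.monic_polynomial.degree_map, degree_polynomial]
    exact two_ne_zero
  obtain ⟨b, hb⟩ := IsAlgClosed.exists_root _ hdeg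
  exact ⟨b, by rwa [IsRoot, map_evalRingHom_eval] at hb⟩

lemma setOf_equation_eq {L : Type*} [Field L] {W : Affine L} {a b : L} (h : W.Equation a b) :
    {b' | W.Equation a b'} = {b, W.negY a b} := by
  ext b'
  refine ⟨fun h' ↦ Y_eq_of_X_eq h' h rfl, ?_⟩
  rintro (rfl | rfl)
  exacts [h, (equation_neg _ _).2 h]

variable {F : Type*} [Field F] [Fintype F]

local notation "q" => Fintype.card F

lemma splits_X_pow_card_sub_X : (X ^ q - X : F[X]).Splits := by
  rw [← Nat.card_eq_fintype_card]
  exact splits_X_pow_nat_card_sub_X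

lemma rootMultiplicity_X_pow_card_sub_X (a : F) : (X ^ q - X : F[X]).rootMultiplicity a = 1 := by
  classical
  rw [← count_roots, FiniteField.roots_X_pow_card_sub_X]
  exact Multiset.count_eq_one_of_mem (Finset.nodup _) (Finset.mem_univ a)

lemma exists_algebraMap_eq_of_pow_card_eq {L : Type*} [CommRing L] [IsDomain L] [Algebra F L]
    {b : L} (hb : b ^ q = b) : ∃ c : F, algebraMap F L c = b :=
  splits_X_pow_card_sub_X.mem_range_of_isRoot
    (FiniteField.X_pow_card_sub_X_ne_zero F Fintype.one_lt_card) (by simp [hb])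

lemma natDegree_eq_sum_rootMultiplicity {p : F[X]} (hp : p.Splits) :
    p.natDegree = ∑ a, p.rootMultiplicity a := by
  classical
  rw [hp.natDegree_eq_card_roots, ← Multiset.sum_count_eq_card fun a _ ↦ Finset.mem_univ a]
  exact Finset.sum_congr rfl fun a _ ↦ count_roots p

lemma card_point_eq (W : WeierstrassCurve F) [W.IsElliptic] :
    Nat.card W.toAffine.Point = 1 + ∑ a, Nat.card {b // W.toAffine.Equation a b} := by
  rw [Nat.card_congr (pointEquiv W.toAffine), WithZero, Finite.card_option, add_comm,
    ← Nat.card_sigma]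
  congr 1
  exact Nat.card_congr ⟨fun p ↦ ⟨p.1.1, p.1.2, p.2⟩, fun p ↦ ⟨⟨p.1, p.2.1⟩, p.2.2⟩,
    fun _ ↦ rfl, fun _ ↦ rfl⟩

lemma card_point_le (W : WeierstrassCurve F) [W.IsElliptic] :
    Nat.card W.toAffine.Point ≤ 2 * q + 1 := by
  have hfiber (a : F) : Nat.card {b // W.toAffine.Equation a b} ≤ 2 := by
    change Set.ncard {b | W.toAffine.Equation a b} ≤ 2
    rcases Set.eq_empty_or_nonempty {b | W.toAffine.Equation a b} with h | ⟨b, hb⟩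
    · rw [h, Set.ncard_empty]
      exact Nat.zero_le _
    · rw [setOf_equation_eq hb]
      exact Set.ncard_insert_le _ _ |>.trans (by rw [Set.ncard_singleton])
  grw [card_point_eq, Finset.sum_le_card_nsmul _ _ 2 fun a _ ↦ hfiber a, Finset.card_univ]
  lia

variable {W : WeierstrassCurve F} {c : F}

lemma algebraMap_eval_eq {p : F[X]} {z : W.toAffine.CoordinateRing}
    (hp : algebraMap F[X] W.toAffine.CoordinateRing p = algebraMap F _ c *
      addXNum (W.map (algebraMap F W.toAffine.CoordinateRing)).toAffine (coordX W ^ q) (coordX W)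
        (coordY W ^ q) z)
    {L : Type*} [CommRing L] [Algebra F L] {a : F} {b : L}
    (h : (W.map (algebraMap F L)).toAffine.Equation (algebraMap F L a) b) :
    algebraMap F L (p.eval a) = algebraMap F L c * (b ^ q - evalPoint h z) ^ 2 := by
  have heval := congr_arg (evalPoint h) hp
  rwa [evalPoint_algebraMap, map_mul, AlgHom.commutes, algHom_addXNum, map_pow, map_pow,
    evalPoint_coordX, evalPoint_coordY, ← map_pow, FiniteField.pow_card, addXNum_self,
    aeval_algebraMap_apply, coe_aeval_eq_eval] at heval

variable [W.IsElliptic] [DecidableEq W.toAffine.FunctionField] {U V : Fin 2 → F[X]}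

section Fiber

variable (hUV : U 1 * V 1 = C c * (X ^ Fintype.card F - X) ^ 2)
include hUV

lemma eval_mul_eval_eq_zero (a : F) : (U 1).eval a * (V 1).eval a = 0 := by
  rw [← eval_mul, hUV, eval_mul, eval_pow, eval_sub, eval_pow, eval_X, FiniteField.pow_card,
    sub_self, zero_pow two_ne_zero, mul_zero]

lemma rootMultiplicity_add_rootMultiplicity (hc : c ≠ 0) (a : F) :
    (U 1).rootMultiplicity a + (V 1).rootMultiplicity a = 2 := by
  have hX : (X ^ q - X : F[X]) ≠ 0 := FiniteField.X_pow_card_sub_X_ne_zero F Fintype.one_lt_card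
  have hne : C c * (X ^ q - X : F[X]) ^ 2 ≠ 0 := mul_ne_zero (C_ne_zero.2 hc) (pow_ne_zero 2 hX)
  rw [← rootMultiplicity_mul (hUV ▸ hne), hUV, rootMultiplicity_mul hne, rootMultiplicity_C,
    sq, rootMultiplicity_mul (mul_ne_zero hX hX), rootMultiplicity_X_pow_card_sub_X]

lemma algebraMap_eval_mul_eval_of_add (hU : IsXRep (frobeniusPoint W + tautologicalPoint W) U)
    {L : Type*} [CommRing L] [Algebra F L] {a : F} {b : L}
    (h : (W.map (algebraMap F L)).toAffine.Equation (algebraMap F L a) b) :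
    algebraMap F L ((U 0).eval a * (V 1).eval a) = algebraMap F L c * (b ^ q - b) ^ 2 := by
  rw [← eval_mul, algebraMap_eval_eq (algebraMap_mul_of_isXRep_add hU hUV) h, evalPoint_coordY]

lemma algebraMap_eval_mul_eval_of_sub (hV : IsXRep (frobeniusPoint W - tautologicalPoint W) V)
    {L : Type*} [CommRing L] [Algebra F L] {a : F} {b : L}
    (h : (W.map (algebraMap F L)).toAffine.Equation (algebraMap F L a) b) :
    algebraMap F L ((V 0).eval a * (U 1).eval a) = algebraMap F L c *
      (b ^ q - (W.map (algebraMap F L)).toAffine.negY (algebraMap F L a) b) ^ 2 := by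
  rw [mul_comm] at hUV
  rw [← eval_mul, algebraMap_eval_eq (algebraMap_mul_of_isXRep_sub hV hUV) h, algHom_negY,
    evalPoint_coordX, evalPoint_coordY]

lemma exists_equation_of_eval_eq_zero (hc : c ≠ 0)
    (hU : IsXRep (frobeniusPoint W + tautologicalPoint W) U) {a : F} (ha : (V 1).eval a = 0) :
    ∃ b, W.toAffine.Equation a b := by
  obtain ⟨b, hb⟩ := exists_equation (W.map (algebraMap F (AlgebraicClosure F))).toAffine
    (algebraMap _ _ a)
  have hsq := algebraMap_eval_mul_eval_of_add hUV hU hb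
  rw [ha, mul_zero, map_zero, zero_eq_mul, map_eq_zero] at hsq
  obtain ⟨b, rfl⟩ := exists_algebraMap_eq_of_pow_card_eq
    (sub_eq_zero.1 (pow_eq_zero_iff two_ne_zero |>.1 (hsq.resolve_left hc)))
  exact ⟨b, (map_equation _ (algebraMap F _).injective a b).1 hb⟩

variable (hU : IsXRep (frobeniusPoint W + tautologicalPoint W) U)
    (hV : IsXRep (frobeniusPoint W - tautologicalPoint W) V)
include hV

lemma eval_mul_eval_of_sub {a b : F} (h : W.toAffine.Equation a b) :
    (V 0).eval a * (U 1).eval a = c * (b - W.toAffine.negY a b) ^ 2 := by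
  have hV₀ := algebraMap_eval_mul_eval_of_sub hUV hV ((map_equation _
    (algebraMap F F).injective _ _).2 h)
  rwa [map_negY, ← map_pow, FiniteField.pow_card] at hV₀

include hU

lemma eval_eq_zero_of_eq_negY {a b : F} (h : W.toAffine.Equation a b)
    (hb : b = W.toAffine.negY a b) : (U 1).eval a = 0 ∧ (V 1).eval a = 0 := by
  have hU₀ := algebraMap_eval_mul_eval_of_add hUV hU ((map_equation _
    (algebraMap F F).injective _ _).2 h)
  have hV₀ := eval_mul_eval_of_sub hUV hV h
  have hUV₀ := eval_mul_eval_eq_zero hUV a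
  have hUa := hU.1.comp_ne_zero (evalRingHom a)
  have hVa := hV.1.comp_ne_zero (evalRingHom a)
  rw [FiniteField.pow_card, sub_self] at hU₀
  rw [← hb, sub_self] at hV₀
  simp only [Function.ne_iff, Fin.exists_fin_two, Function.comp_apply, coe_evalRingHom,
    Pi.zero_apply, Algebra.algebraMap_self, RingHom.id_apply] at hUa hVa hU₀
  grind [mul_eq_zero]

theorem rootMultiplicity_eq_card_equation (hc : c ≠ 0) (a : F) :
    (V 1).rootMultiplicity a = Nat.card {b // W.toAffine.Equation a b} := by
  have hsum := rootMultiplicity_add_rootMultiplicity hUV hc a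
  have hne : U 1 * V 1 ≠ 0 := by
    rw [hUV]
    exact mul_ne_zero (C_ne_zero.2 hc)
      (pow_ne_zero 2 (FiniteField.X_pow_card_sub_X_ne_zero F Fintype.one_lt_card))
  change _ = Set.ncard {b | W.toAffine.Equation a b}
  by_cases hex : ∃ b, W.toAffine.Equation a b
  · obtain ⟨b, hb⟩ := hex
    rw [setOf_equation_eq hb]
    by_cases hneg : b = W.toAffine.negY a b
    · obtain ⟨hUa, hVa⟩ := eval_eq_zero_of_eq_negY hUV hU hV hb hneg
      have hUpos := (rootMultiplicity_pos (left_ne_zero_of_mul hne)).2 hUa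
      have hVpos := (rootMultiplicity_pos (right_ne_zero_of_mul hne)).2 hVa
      rw [← hneg, Set.pair_eq_singleton, Set.ncard_singleton]
      lia
    · have hUa : (U 1).eval a ≠ 0 := right_ne_zero_of_mul <|
        (eval_mul_eval_of_sub hUV hV hb).trans_ne
          (mul_ne_zero hc (pow_ne_zero 2 (sub_ne_zero.2 hneg)))
      rwa [Set.ncard_pair hneg, ← zero_add (rootMultiplicity _ _), ← rootMultiplicity_eq_zero hUa]
  · have hempty : {b | W.toAffine.Equation a b} = ∅ :=
      Set.eq_empty_of_forall_notMem (not_exists.1 hex)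
    rw [hempty, Set.ncard_empty]
    exact rootMultiplicity_eq_zero fun ha ↦ hex (exists_equation_of_eval_eq_zero hUV hc hU ha)

end Fiber
end PointCount

section PointCountDegree

open Polynomial WeierstrassCurve WeierstrassCurve.Affine

lemma natDegree_eq_add_one_of_mul {R : Type*} [CommRing R] [NoZeroDivisors R] {a b c d : R[X]}
    {m : ℕ} (hbd₀ : b * d ≠ 0) (hac : (a * c).natDegree = m + 2) (hbd : (b * d).natDegree = m)
    (hsum : (a * d + b * c).natDegree ≤ m + 1) : c.natDegree = d.natDegree + 1 := by
  have hac₀ : a * c ≠ 0 := ne_zero_of_natDegree_gt (n := 0) (by lia)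
  obtain ⟨ha, hc⟩ := mul_ne_zero_iff.1 hac₀
  obtain ⟨hb, hd⟩ := mul_ne_zero_iff.1 hbd₀
  rw [natDegree_mul ha hc] at hac
  rw [natDegree_mul hb hd] at hbd
  have had := natDegree_mul ha hd
  have hbc := natDegree_mul hb hc
  rcases lt_trichotomy a.natDegree (b.natDegree + 1) with h | h | h
  · rw [natDegree_add_eq_right_of_natDegree_lt (by lia)] at hsum
    lia
  · lia
  · rw [natDegree_add_eq_left_of_natDegree_lt (by lia)] at hsum
    lia

section

variable {R : Type*} [CommRing R] (W : WeierstrassCurve R) (n : ℕ)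

lemma addSubVec_symVec_X_pow_X :
    addSubVec (W.map (algebraMap R R[X])) (symVec ![X ^ n, 1] ![X, 1]) =
      ![X ^ (2 * n + 2) - (C W.b₄ * X ^ (n + 1) + C W.b₆ * (X ^ n + X) + C W.b₈),
        2 * ((X ^ n + X) * X ^ (n + 1)) + C W.b₂ * X ^ (n + 1) + C W.b₄ * (X ^ n + X) + C W.b₆,
        (X ^ n - X) ^ 2] := by
  rw [addSubVec_eq]
  refine Matrix.vec3_eq ?_ ?_ ?_ <;> simp [symVec] <;> ring

lemma natDegree_addSubVec_zero [Nontrivial R] :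
    (addSubVec (W.map (algebraMap R R[X])) (symVec ![X ^ n, 1] ![X, 1]) 0).natDegree =
      2 * n + 2 := by
  have hlow : (C W.b₄ * X ^ (n + 1) + C W.b₆ * (X ^ n + X) + C W.b₈).natDegree ≤ 2 * n + 1 := by
    compute_degree
    lia
  rw [addSubVec_symVec_X_pow_X, Matrix.cons_val_zero,
    natDegree_sub_eq_left_of_natDegree_lt (by rw [natDegree_X_pow]; lia), natDegree_X_pow]

lemma natDegree_addSubVec_one_le (hn : n ≠ 0) :
    (addSubVec (W.map (algebraMap R R[X])) (symVec ![X ^ n, 1] ![X, 1]) 1).natDegree ≤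
      2 * n + 1 := by
  rw [addSubVec_symVec_X_pow_X, Matrix.cons_val_one, Matrix.cons_val_zero]
  compute_degree
  lia

end

variable {F : Type*} [Field F] [Fintype F] {W : WeierstrassCurve F} [W.IsElliptic]
  [DecidableEq W.toAffine.FunctionField] {V : Fin 2 → F[X]}

local notation "q" => Fintype.card F

theorem vecDegree_frobeniusPoint_sub (hV : IsXRep (frobeniusPoint W - tautologicalPoint W) V) :
    vecDegree V = Nat.card W.toAffine.Point := by
  obtain ⟨U, hU⟩ := exists_isXRep_frobeniusPoint_add W
  obtain ⟨c, hc, hs⟩ := exists_symVec_eq_C_smul hU hV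
  have h₀ : U 0 * V 0 = C c * _ := congr_fun hs 0
  have h₁ : U 0 * V 1 + U 1 * V 0 = C c * _ := congr_fun hs 1
  have h₂ : U 1 * V 1 = C c * (X ^ q - X) ^ 2 := by
    have h := congr_fun hs 2
    rwa [addSubVec_symVec_X_pow_X] at h
  have hq : 1 < q := Fintype.one_lt_card
  have hne : U 1 * V 1 ≠ 0 := by
    rw [h₂]
    exact mul_ne_zero (C_ne_zero.2 hc) (pow_ne_zero 2 (FiniteField.X_pow_card_sub_X_ne_zero F hq))
  have hdeg : (V 0).natDegree = (V 1).natDegree + 1 := by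
    refine natDegree_eq_add_one_of_mul (a := U 0) (m := 2 * q) hne ?_ ?_ ?_
    · rw [h₀, natDegree_C_mul hc, natDegree_addSubVec_zero]
    · rw [h₂, natDegree_C_mul hc, natDegree_pow, FiniteField.X_pow_card_sub_X_natDegree_eq F hq]
    · rw [h₁, natDegree_C_mul hc]
      exact natDegree_addSubVec_one_le W q (by lia)
  have hsplits : (V 1).Splits := by
    refine Splits.of_dvd ?_ hne (dvd_mul_left _ _)
    rw [h₂]
    exact (Splits.C c).mul (splits_X_pow_card_sub_X.pow 2)
  calc vecDegree V = (V 0).natDegree := by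
        refine vecDegree_eq_of_coeff_ne_zero (fun i ↦ ?_) (Function.ne_iff.2 ⟨0, ?_⟩)
        · fin_cases i
          exacts [le_rfl, hdeg ▸ Nat.le_succ _]
        · rw [coeff_natDegree, Pi.zero_apply, leadingCoeff_ne_zero]
          exact ne_zero_of_natDegree_gt (n := 0) (by lia)
    _ = 1 + ∑ a, (V 1).rootMultiplicity a := by
        rw [hdeg, natDegree_eq_sum_rootMultiplicity hsplits, add_comm]
    _ = Nat.card W.toAffine.Point := by
        simp only [rootMultiplicity_eq_card_equation h₂ hU hV hc, card_point_eq]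

end PointCountDegree

section HasseBound

open Polynomial WeierstrassCurve

lemma vecDegree_X_pow_one {R : Type*} [CommRing R] [Nontrivial R] (n : ℕ) :
    vecDegree ![(X : R[X]) ^ n, 1] = n := by
  refine vecDegree_eq_of_coeff_ne_zero (fun i ↦ ?_) (Function.ne_iff.2 ⟨0, by simp⟩)
  fin_cases i <;> simp

theorem frobenius_quadratic_nonneg {F : Type*} [Field F] [Fintype F] (W : WeierstrassCurve F)
    [W.IsElliptic] (n : ℤ) :
    0 ≤ n ^ 2 + (Fintype.card F + 1 - Nat.card W.toAffine.Point : ℤ) * n + Fintype.card F := by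
  classical
  obtain ⟨V, hV⟩ := exists_isXRep_frobeniusPoint_sub W
  have h := (isXRep_frobeniusPoint W).quadratic_nonneg (isXRep_tautologicalPoint W) hV n
  rwa [vecDegree_frobeniusPoint_sub hV, vecDegree_X_pow_one, ← pow_one (X : F[X]),
    vecDegree_X_pow_one, Nat.cast_one, one_mul] at h

-- The exceptional form `(n + s) (n + s + 1)` has discriminant `1` but no negative integer value.
lemma sq_le_of_forall_quadratic_nonneg {t q : ℤ} (h : ∀ n : ℤ, 0 ≤ n ^ 2 + t * n + q) :
    t ^ 2 ≤ 4 * q ∨ ∃ s, t = 2 * s + 1 ∧ q = s * (s + 1) := by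
  obtain ⟨s, rfl | rfl⟩ := Int.even_or_odd' t
  · exact .inl (by linear_combination 4 * h (-s))
  · have hs : s * (s + 1) ≤ q := by linear_combination h (-s)
    rcases hs.eq_or_lt with hq | hq
    · exact .inr ⟨s, rfl, hq.symm⟩
    · exact .inl (by linarith)

lemma eq_one_or_eq_neg_two_of_isPrimePow {n : ℕ} (hn : IsPrimePow n) {s : ℤ}
    (h : n = s * (s + 1)) : s = 1 ∨ s = -2 := by
  obtain ⟨hs, hs'⟩ : s ≠ 0 ∧ s + 1 ≠ 0 := by
    rw [← mul_ne_zero_iff, ← h]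
    exact_mod_cast hn.ne_zero
  have hcop : s.natAbs.Coprime (s + 1).natAbs :=
    Int.isCoprime_iff_gcd_eq_one.1 ⟨-1, 1, by ring⟩
  have hdvd : n ∣ s.natAbs * (s + 1).natAbs := by
    rw [← Int.natAbs_mul, ← h, Int.natAbs_natCast]
  rw [hcop.isPrimePow_dvd_mul hn, ← Int.natCast_dvd, ← Int.natCast_dvd, h] at hdvd
  rcases hdvd with hd | hd
  · have hunit : s + 1 ∣ 1 := (mul_dvd_mul_iff_left hs).1 (by rwa [mul_one])
    have := Int.isUnit_iff.1 (isUnit_of_dvd_one hunit)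
    lia
  · have hunit : s ∣ 1 := (mul_dvd_mul_iff_right hs').1 (by rwa [one_mul])
    have := Int.isUnit_iff.1 (isUnit_of_dvd_one hunit)
    lia

theorem sq_trace_lt {F : Type*} [Field F] [Fintype F] (W : WeierstrassCurve F) [W.IsElliptic]
    {t : ℤ} (ht : t = (Fintype.card F : ℤ) + 1 - Nat.card W.toAffine.Point)
    (hord : ¬ (ringChar F : ℤ) ∣ t) : t ^ 2 < 4 * Fintype.card F := by
  have hp := Nat.prime_iff_prime_int.1 (CharP.char_is_prime F (ringChar F))
  obtain ⟨k, -, hk⟩ := FiniteField.card F (ringChar F)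
  have hquad (n : ℤ) : 0 ≤ n ^ 2 + t * n + Fintype.card F :=
    ht ▸ frobenius_quadratic_nonneg W n
  rcases sq_le_of_forall_quadratic_nonneg hquad with hle | ⟨s, hs, hq⟩
  · refine hle.lt_of_ne fun heq ↦ hord (hp.dvd_of_dvd_pow (n := 2) ?_)
    rw [heq, hk, Nat.cast_pow]
    exact dvd_mul_of_dvd_right (dvd_pow_self _ k.ne_zero) _
  · have hpos : 0 < Nat.card W.toAffine.Point := by
      rw [card_point_eq]
      lia
    have hle := card_point_le W
    rcases eq_one_or_eq_neg_two_of_isPrimePow (FiniteField.isPrimePow_card F) hq with rfl | rfl <;>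
      lia

end HasseBound

section Weyl

open MeasureTheory Polynomial Topology

/-- The sequence `u 1, u 2, …` is equidistributed in `s` with respect to `μ`: the averages of every
function continuous on `s` along it converge to the mean value of the function over `s`. Since the
mean value is normalized, `μ` need not be a probability measure. -/
def IsEquidistributedOn {α : Type*} [TopologicalSpace α] [MeasurableSpace α] (u : ℕ → α)
    (s : Set α) (μ : Measure α) : Prop :=
  ∀ ⦃f : α → ℝ⦄, ContinuousOn f s →
    Tendsto (fun n : ℕ ↦ 1 / (n : ℝ) * ∑ r ∈ Finset.Icc 1 n, f (u r)) atTop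
      (𝓝 (⨍ x in s, f x ∂μ))

lemma norm_setAverage_sub_le {E : Type*} [NormedAddCommGroup E] [NormedSpace ℝ E]
    {α : Type*} [MeasurableSpace α] {μ : Measure α} {s : Set α} {f g : α → E} {ε : ℝ}
    (hμ : μ s ≠ ⊤) (hf : IntegrableOn f s μ) (hg : IntegrableOn g s μ)
    (hε : 0 ≤ ε) (h : ∀ x ∈ s, ‖f x - g x‖ ≤ ε) :
    ‖(⨍ x in s, f x ∂μ) - ⨍ x in s, g x ∂μ‖ ≤ ε := by
  rw [setAverage_eq, setAverage_eq, ← smul_sub, ← integral_sub hf hg, norm_smul, norm_inv,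
    Real.norm_of_nonneg measureReal_nonneg]
  refine inv_mul_le_of_le_mul₀ measureReal_nonneg hε ?_
  rw [mul_comm]
  exact norm_setIntegral_le_of_norm_le_const hμ.lt_top h

lemma abs_average_sub_average_le {v w : ℕ → ℝ} {ε : ℝ} (hε : 0 ≤ ε) (h : ∀ r, |v r - w r| ≤ ε)
    (n : ℕ) : |1 / (n : ℝ) * ∑ r ∈ Finset.Icc 1 n, v r - 1 / (n : ℝ) * ∑ r ∈ Finset.Icc 1 n, w r|
      ≤ ε := by
  rw [← mul_sub, ← Finset.sum_sub_distrib, abs_mul, one_div, abs_of_nonneg (by positivity)]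
  refine inv_mul_le_of_le_mul₀ (by positivity) hε ?_
  calc |∑ r ∈ Finset.Icc 1 n, (v r - w r)| ≤ ∑ r ∈ Finset.Icc 1 n, |v r - w r| :=
        Finset.abs_sum_le_sum_abs _ _
    _ ≤ (Finset.Icc 1 n).card • ε := Finset.sum_le_card_nsmul _ _ _ fun r _ ↦ h r
    _ = n * ε := by rw [Nat.card_Icc, add_tsub_cancel_right, nsmul_eq_mul]

theorem isEquidistributedOn_of_forall_polynomial {a b : ℝ} {u : ℕ → ℝ} {μ : Measure ℝ}
    [IsFiniteMeasureOnCompacts μ] (hu : ∀ r, u r ∈ Set.Icc a b)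
    (h : ∀ p : ℝ[X], Tendsto (fun n : ℕ ↦ 1 / (n : ℝ) * ∑ r ∈ Finset.Icc 1 n, p.eval (u r)) atTop
      (𝓝 (⨍ x in Set.Icc a b, p.eval x ∂μ))) :
    IsEquidistributedOn u (Set.Icc a b) μ := by
  intro f hf
  rw [Metric.tendsto_atTop]
  intro ε hε
  obtain ⟨p, hp⟩ := exists_polynomial_near_of_continuousOn a b f hf (ε / 3) (by positivity)
  obtain ⟨N, hN⟩ := Metric.tendsto_atTop.1 (h p) (ε / 3) (by positivity)
  refine ⟨N, fun n hn ↦ ?_⟩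
  have hsum := abs_average_sub_average_le (by positivity) (fun r ↦ (hp (u r) (hu r)).le) n
  have hint : |(⨍ x in Set.Icc a b, p.eval x ∂μ) - ⨍ x in Set.Icc a b, f x ∂μ| ≤ ε / 3 :=
    norm_setAverage_sub_le isCompact_Icc.measure_ne_top
      (p.continuous.continuousOn.integrableOn_compact isCompact_Icc)
      (hf.integrableOn_compact isCompact_Icc) (by positivity) fun x hx ↦ (hp x hx).le
  have hpoly := hN n hn
  rw [Real.dist_eq, abs_lt] at hpoly ⊢
  rw [abs_le] at hsum hint
  constructor <;> linarith

theorem isEquidistributedOn_of_span_eq_top {a b : ℝ} {u : ℕ → ℝ} {μ : Measure ℝ}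
    [IsFiniteMeasureOnCompacts μ] {S : Set ℝ[X]} (hS : Submodule.span ℝ S = ⊤)
    (hu : ∀ r, u r ∈ Set.Icc a b)
    (h : ∀ p ∈ S, Tendsto (fun n : ℕ ↦ 1 / (n : ℝ) * ∑ r ∈ Finset.Icc 1 n, p.eval (u r)) atTop
      (𝓝 (⨍ x in Set.Icc a b, p.eval x ∂μ))) :
    IsEquidistributedOn u (Set.Icc a b) μ := by
  refine isEquidistributedOn_of_forall_polynomial hu fun p ↦ ?_
  have hint (p : ℝ[X]) : IntegrableOn (fun x ↦ p.eval x) (Set.Icc a b) μ :=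
    p.continuous.continuousOn.integrableOn_compact isCompact_Icc
  simp only [setAverage_eq, smul_eq_mul] at h ⊢
  induction hS ▸ Submodule.mem_top (x := p) using Submodule.span_induction with
  | mem p hp => exact h p hp
  | zero => simp
  | add p₁ p₂ _ _ h₁ h₂ =>
    simp only [eval_add, Finset.sum_add_distrib, mul_add, integral_add (hint p₁) (hint p₂)]
    exact h₁.add h₂
  | smul c p _ hp =>
    simp only [eval_smul, smul_eq_mul, ← Finset.mul_sum, integral_const_mul, mul_left_comm _ c]
    exact hp.const_mul c

lemma tendsto_average_pow_of_norm_le_one {𝕜 : Type*} [RCLike 𝕜] {w : 𝕜} (hw : ‖w‖ ≤ 1)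
    (hw' : w ≠ 1) :
    Tendsto (fun n : ℕ ↦ 1 / (n : 𝕜) * ∑ r ∈ Finset.Icc 1 n, w ^ r) atTop (𝓝 0) := by
  refine squeeze_zero_norm (a := fun n : ℕ ↦ (2 / ‖w - 1‖) / n) (fun n ↦ ?_)
    (tendsto_const_div_atTop_nhds_zero_nat _)
  have hnorm : ‖w ^ (n + 1) - w ^ 1‖ ≤ 2 :=
    calc ‖w ^ (n + 1) - w ^ 1‖ ≤ ‖w ^ (n + 1)‖ + ‖w ^ 1‖ := norm_sub_le _ _
      _ ≤ 1 + 1 := by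
        rw [norm_pow, norm_pow]
        gcongr <;> exact pow_le_one₀ (norm_nonneg w) hw
      _ = 2 := one_add_one_eq_two
  rw [← Finset.Ico_add_one_right_eq_Icc, geom_sum_Ico hw' (by lia), one_div_mul_eq_div, norm_div,
    norm_div, RCLike.norm_natCast]
  gcongr

lemma tendsto_average_cos_mul {φ : ℝ} (hφ : Complex.exp (φ * Complex.I) ≠ 1) :
    Tendsto (fun n : ℕ ↦ 1 / (n : ℝ) * ∑ r ∈ Finset.Icc 1 n, cos (r * φ)) atTop (𝓝 0) := by
  refine ((Complex.continuous_re.tendsto _).comp (tendsto_average_pow_of_norm_le_one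
    (Complex.norm_exp_ofReal_mul_I φ).le hφ)).congr fun n ↦ ?_
  have hpow (r : ℕ) :
      Complex.exp (φ * Complex.I) ^ r = Complex.exp (((r * φ : ℝ) : ℂ) * Complex.I) := by
    rw [← Complex.exp_nat_mul, ← mul_assoc, Complex.ofReal_mul, Complex.ofReal_natCast]
  have hcast : 1 / (n : ℂ) = ((1 / (n : ℝ) : ℝ) : ℂ) := by push_cast; rfl
  simp only [Function.comp_apply, hcast, Complex.re_ofReal_mul, Complex.re_sum, hpow,
    Complex.exp_ofReal_mul_I_re]

end Weyl

section Arcsine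

open MeasureTheory Polynomial Polynomial.Chebyshev Topology

lemma span_range_chebyshevT : Submodule.span ℝ (Set.range fun n : ℕ ↦ T ℝ n) = ⊤ :=
  (chebyshevTsequence ℝ).span fun i ↦ by simp

lemma setIntegral_measureT (f : ℝ → ℝ) :
    ∫ x in Set.Icc (-1) 1, f x ∂measureT = ∫ x, f x ∂measureT := by
  rw [measureT, Measure.restrict_restrict measurableSet_Icc,
    Set.inter_eq_self_of_subset_right Set.Ioc_subset_Icc_self]

instance isFiniteMeasure_measureT : IsFiniteMeasure measureT :=
  (integrable_const_iff_isFiniteMeasure one_ne_zero).1 (integrable_measureT continuousOn_const)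

lemma setAverage_measureT (f : ℝ → ℝ) :
    ⨍ x in Set.Icc (-1) 1, f x ∂measureT = π⁻¹ * ∫ x, f x ∂measureT := by
  have hmass : measureT.real (Set.Icc (-1) 1) = π := by
    rw [← integral_eval_T_real_measureT_zero, ← setIntegral_measureT]
    simp
  rw [setAverage_eq, setIntegral_measureT, hmass, smul_eq_mul]

theorem isEquidistributedOn_cos_mul {θ : ℝ}
    (hθ : ∀ k : ℕ, k ≠ 0 → Complex.exp ((k * θ : ℝ) * Complex.I) ≠ 1) :
    IsEquidistributedOn (fun r : ℕ ↦ cos (r * θ)) (Set.Icc (-1) 1) measureT := by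
  refine isEquidistributedOn_of_span_eq_top span_range_chebyshevT (fun r ↦ cos_mem_Icc _) ?_
  rintro - ⟨k, rfl⟩
  simp only [setAverage_measureT]
  rcases eq_or_ne k 0 with rfl | hk
  · rw [Nat.cast_zero, integral_eval_T_real_measureT_zero, inv_mul_cancel₀ pi_ne_zero]
    refine tendsto_const_nhds.congr' ?_
    filter_upwards [eventually_ne_atTop 0] with n hn
    simp [hn]
  · rw [integral_eval_T_real_measureT_of_ne_zero (Nat.cast_ne_zero.2 hk), mul_zero]
    simpa only [T_real_cos, Int.cast_natCast, mul_left_comm] using tendsto_average_cos_mul (hθ k hk)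

lemma setAverage_measureT_comp_two_mul (f : ℝ → ℝ) :
    ⨍ x in Set.Icc (-1) 1, f (2 * x) ∂measureT =
      ∫ z in (-2 : ℝ)..2, f z / (π * √(4 - z ^ 2)) := by
  have hsqrt (x : ℝ) : √(4 - (2 * x) ^ 2) = 2 * √(1 - x ^ 2) := by
    rw [show 4 - (2 * x) ^ 2 = 2 ^ 2 * (1 - x ^ 2) by ring, sqrt_mul (by positivity),
      sqrt_sq zero_le_two]
  have hsubst := intervalIntegral.smul_integral_comp_mul_left (a := -1) (b := 1)
    (fun z ↦ f z / (π * √(4 - z ^ 2))) (2 : ℝ)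
  rw [mul_neg, mul_one] at hsubst
  rw [← hsubst, setAverage_measureT, integral_measureT, ← intervalIntegral.integral_const_mul,
    smul_eq_mul, ← intervalIntegral.integral_const_mul]
  congr! 2 with x
  rw [hsqrt, sqrt_inv]
  field

theorem tendsto_average_two_mul_cos {θ : ℝ}
    (hθ : ∀ k : ℕ, k ≠ 0 → Complex.exp ((k * θ : ℝ) * Complex.I) ≠ 1) {f : ℝ → ℝ}
    (hf : ContinuousOn f (Set.Icc (-2) 2)) :
    Tendsto (fun n : ℕ ↦ 1 / (n : ℝ) * ∑ r ∈ Finset.Icc 1 n, f (2 * cos (r * θ))) atTop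
      (𝓝 (∫ z in (-2 : ℝ)..2, f z / (π * √(4 - z ^ 2)))) := by
  rw [← setAverage_measureT_comp_two_mul]
  refine isEquidistributedOn_cos_mul hθ (hf.comp (by fun_prop) fun x hx ↦ ?_)
  constructor <;> linarith [hx.1, hx.2]

end Arcsine

section FrobeniusEigenvalues

open ComplexConjugate

section

variable {R : Type*} [CommRing R] {α β : R} {p q t : ℤ}

lemma exists_int_eq_pow_add_pow (hpq : p ∣ q) (hsum : α + β = t) (hprod : α * β = q) (n : ℕ) :
    ∃ a : ℤ, α ^ (n + 1) + β ^ (n + 1) = a ∧ p ∣ a - t ^ (n + 1) := by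
  induction n using Nat.twoStepInduction with
  | zero => exact ⟨t, by simpa using hsum, by simp⟩
  | one =>
    refine ⟨t ^ 2 - 2 * q, ?_, ?_⟩
    · push_cast
      rw [← hsum, ← hprod]
      ring
    · rw [show t ^ 2 - 2 * q - t ^ (1 + 1) = q * (-2) by ring]
      exact hpq.mul_right _
  | more n ih₁ ih₂ =>
    obtain ⟨a, ha, -⟩ := ih₁
    obtain ⟨b, hb, hb'⟩ := ih₂
    refine ⟨t * b - q * a, ?_, ?_⟩
    · push_cast
      rw [← hsum, ← hprod, ← ha, ← hb]
      ring
    · rw [show t * b - q * a - t ^ (n + 2 + 1) = t * (b - t ^ (n + 1 + 1)) - q * a by ring]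
      exact dvd_sub (hb'.mul_left _) (hpq.mul_right _)

theorem pow_ne_pow_of_not_dvd [CharZero R] (hp : Prime p) (hpq : p ∣ q) (hpt : ¬ p ∣ t)
    (hsum : α + β = t) (hprod : α * β = q) {n : ℕ} (hn : n ≠ 0) : α ^ n ≠ β ^ n := by
  obtain ⟨m, rfl⟩ := Nat.exists_eq_add_one_of_ne_zero hn
  intro h
  obtain ⟨a, ha, hat⟩ := exists_int_eq_pow_add_pow hpq hsum hprod m
  have hsq : a ^ 2 = 4 * q ^ (m + 1) := by
    have : ((a ^ 2 : ℤ) : R) = ((4 * q ^ (m + 1) : ℤ) : R) := by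
      push_cast
      rw [← ha, ← hprod, mul_pow, ← h]
      ring
    exact_mod_cast this
  have hpa : p ∣ a := hp.dvd_of_dvd_pow (n := 2) <|
    hsq ▸ (hpq.trans (dvd_pow_self _ m.succ_ne_zero)).mul_left _
  exact hpt (hp.dvd_of_dvd_pow ((dvd_sub_right hpa).1 hat))

end

lemma eq_conj_of_sq_lt {t q : ℝ} (h : t ^ 2 < 4 * q) {α β : ℂ} (hsum : α + β = t)
    (hprod : α * β = q) : β = conj α := by
  have hsum' : conj α + conj β = t := by rw [← map_add, hsum, Complex.conj_ofReal]
  have hprod' : conj α * conj β = q := by rw [← map_mul, hprod, Complex.conj_ofReal]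
  have hroot : (conj α - α) * (conj α - β) = 0 := by
    linear_combination conj α * hsum' - conj α * hsum + hprod - hprod'
  rcases mul_eq_zero.1 hroot with hreal | hconj
  · obtain ⟨a, rfl⟩ := Complex.conj_eq_iff_real.1 (sub_eq_zero.1 hreal)
    have hdisc : (2 * a - t) ^ 2 = t ^ 2 - 4 * q := by
      have : (2 * a - t : ℂ) ^ 2 = t ^ 2 - 4 * q := by
        linear_combination 4 * a * hsum - 4 * hprod
      exact_mod_cast this
    linarith [sq_nonneg (2 * a - t)]
  · exact (sub_eq_zero.1 hconj).symm

lemma pow_eq_norm_pow_mul_exp (z : ℂ) (n : ℕ) :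
    z ^ n = (‖z‖ ^ n : ℝ) * Complex.exp ((n * z.arg : ℝ) * Complex.I) := by
  conv_lhs => rw [← Complex.norm_mul_exp_arg_mul_I z, mul_pow, ← Complex.exp_nat_mul]
  push_cast
  rw [mul_assoc]

lemma exp_mul_arg_ne_one {z : ℂ} {k : ℕ} (h : z ^ k ≠ conj z ^ k) :
    Complex.exp ((k * z.arg : ℝ) * Complex.I) ≠ 1 := by
  contrapose! h
  rw [← map_pow, pow_eq_norm_pow_mul_exp, h, mul_one, Complex.conj_ofReal]

lemma re_pow_add_conj_pow_div {z : ℂ} (hz : z ≠ 0) (n : ℕ) :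
    (z ^ n + conj z ^ n).re / ‖z‖ ^ n = 2 * cos (n * z.arg) := by
  have := norm_ne_zero_iff.2 hz
  rw [← map_pow, Complex.add_conj, Complex.ofReal_re, pow_eq_norm_pow_mul_exp,
    Complex.re_ofReal_mul, Complex.exp_ofReal_mul_I_re]
  field

lemma norm_eq_sqrt_of_mul_conj {z : ℂ} {q : ℝ} (h : z * conj z = q) : ‖z‖ = √q := by
  rw [Complex.mul_conj, Complex.ofReal_inj] at h
  rw [Complex.norm_def, h]

end FrobeniusEigenvalues

theorem ordinary_frobenius_traces_equidistributed_general
    {F : Type*} [Field F] [Fintype F] (W : WeierstrassCurve F) [W.IsElliptic]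
    (q : ℕ) (hq : q = Fintype.card F)
    (t : ℤ) (ht : t = (q : ℤ) + 1 - Nat.card W.toAffine.Point)
    (hord : ¬ (ringChar F : ℤ) ∣ t)
    (α β : ℂ) (hsum : α + β = (t : ℂ)) (hprod : α * β = (q : ℂ))
    (x : ℕ → ℝ) (hx : ∀ r, x r = (α ^ r + β ^ r).re / Real.sqrt q ^ r)
    (f : ℝ → ℝ) (hf : ContinuousOn f (Set.Icc (-2) 2)) :
    Tendsto (fun n : ℕ => (1 / (n : ℝ)) * ∑ r ∈ Finset.Icc 1 n, f (x r)) atTop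
      (nhds (∫ z in (-2:ℝ)..2, f z / (π * Real.sqrt (4 - z ^ 2)))) := by
  subst hq
  have hp := Nat.prime_iff_prime_int.1 (CharP.char_is_prime F (ringChar F))
  have hpq : (ringChar F : ℤ) ∣ (Fintype.card F : ℤ) := by
    rw [Int.natCast_dvd_natCast, ← ringChar.spec, FiniteField.cast_card_eq_zero]
  have hne {k : ℕ} (hk : k ≠ 0) : α ^ k ≠ β ^ k :=
    pow_ne_pow_of_not_dvd hp hpq hord hsum (by rw [hprod, Int.cast_natCast]) hk
  obtain rfl : β = (starRingEnd ℂ) α :=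
    eq_conj_of_sq_lt (t := t) (q := Fintype.card F) (by exact_mod_cast sq_trace_lt W ht hord)
      (by simpa using hsum) (by simpa using hprod)
  have hα : α ≠ 0 := fun h ↦ hne one_ne_zero (by simp [h])
  have hcos (r : ℕ) : x r = 2 * cos (r * α.arg) := by
    rw [hx, ← norm_eq_sqrt_of_mul_conj hprod, re_pow_add_conj_pow_div hα]
  simp only [hcos]
  exact tendsto_average_two_mul_cos (fun k hk ↦ exp_mul_arg_ne_one (hne hk)) hf

/-- Let `E/F_q` be an ordinary elliptic curve with trace of Frobenius `t`, let
`α, β ∈ ℂ` be the roots of `T² - tT + q`, so that `t_{q^r} = α^r + β^r`, and set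
`x_r = t_{q^r}/q^{r/2}`. Then `(x_r)_{r ≥ 1}` is equidistributed in `[-2, 2]` with
respect to the measure `(1/π) dz/√(4 - z²)`. -/
theorem ordinary_frobenius_traces_equidistributed
    {F : Type*} [Field F] [Fintype F] (W : WeierstrassCurve F) [W.IsElliptic]
    (q : ℕ) (hq : q = Fintype.card F)
    (t : ℤ) (ht : t = (q : ℤ) + 1 - Nat.card W.toAffine.Point)
    (hord : ¬ (ringChar F : ℤ) ∣ t)
    (α β : ℂ) (hsum : α + β = (t : ℂ)) (hprod : α * β = (q : ℂ))
    (x : ℕ → ℝ) (hx : ∀ r, x r = (α ^ r + β ^ r).re / Real.sqrt q ^ r)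
    (f : ℝ → ℝ) (hf : Continuous f) :
    Tendsto (fun n : ℕ => (1 / (n : ℝ)) * ∑ r ∈ Finset.Icc 1 n, f (x r)) atTop
      (nhds (∫ z in (-2:ℝ)..2, f z / (π * Real.sqrt (4 - z ^ 2)))) :=
  ordinary_frobenius_traces_equidistributed_general W q hq t ht hord α β hsum hprod x hx f
    hf.continuousOn
end
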